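/- Fix an integer n ≥ 2, set m = n+1, and fix a positive definite matrix γ ∈ M_{m,m}(ℤ). There exists a constant C > 0, depending only on n and γ, such that for every positive definite matrix Λ ∈ M_{n,n}(ℤ), the number A(γ,Λ) of integer matrices L ∈ M_{m,n}(ℤ) with Lᵀ γ L = Λ satisfies A(γ,Λ) ≤ C · Π_p ν_p(γ,Λ), where the product (taken in the extended nonnegative reals) runs over all primes p. -/

import Mathlib

open scoped ENNReal

/-- `ν_p(γ, Λ)`: the limit superior, as `r → ∞`, of
`p^{-r(mn - n(n+1)/2)}` (with `m = n+1`, so the exponent is `r·n(n+1)/2`) times the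
number of matrices `L ∈ M_{m,n}(ℤ/p^rℤ)` with `Lᵀ γ L ≡ Λ (mod p^r)`. -/
noncomputable def nuLocal (p n : ℕ) (γ : Matrix (Fin (n + 1)) (Fin (n + 1)) ℤ)
    (Λ : Matrix (Fin n) (Fin n) ℤ) : ℝ≥0∞ :=
  Filter.limsup (fun r : ℕ =>
    (Nat.card {L : Matrix (Fin (n + 1)) (Fin n) (ZMod (p ^ r)) //
        L.transpose * γ.map (Int.cast : ℤ → ZMod (p ^ r)) * L =
          Λ.map (Int.cast : ℤ → ZMod (p ^ r))} : ℝ≥0∞) /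
      (p : ℝ≥0∞) ^ (r * ((n + 1) * n - n * (n + 1) / 2))) Filter.atTop

/-- `A(γ, Λ)`: the number of integer matrices `L ∈ M_{m,n}(ℤ)` with `Lᵀ γ L = Λ`,
where `m = n+1`. -/
noncomputable def countRepr (n : ℕ) (γ : Matrix (Fin (n + 1)) (Fin (n + 1)) ℤ)
    (Λ : Matrix (Fin n) (Fin n) ℤ) : ℕ :=
  Nat.card {L : Matrix (Fin (n + 1)) (Fin n) ℤ // L.transpose * γ * L = Λ}

/-!
Write `k = n - 2`, `s = n (n + 1) / 2` and `δ = det γ`.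

Local lower bound. By the Smith normal form, a solution is `L₀ = P D V` with `P` primitive (left
invertible over `ℤ`), `D = diag a` and `V` unimodular. The map `Q ↦ Q D V` produces solutions
modulo `p ^ r` in the row class of `L₀` from primitive `Q` whose Gram matrix is `T + E`, where
`T = Pᵀ γ P` and `aᵢ aⱼ Eᵢⱼ = 0`. The number of admissible `E` is at least the size of the fibres
of this map, so that only the primitive representations of one Gram matrix have to be counted. This
is done by Hensel lifting from the count of isometric embeddings over `𝔽_p`. It gives at least
`κ_p p ^ (r s)` solutions, with `κ_p = (1 - p⁻²) ^ (k + 1)` unless `p ∣ 2 δ`, and twice as many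
when `p ∣ det T`: over `𝔽_p` a degenerate Gram matrix of corank one is represented about twice as
often as a nondegenerate one.

Global upper bound. Solutions of `Lᵀ γ L = Λ` with the same local row classes at the primes
dividing `det Λ` are row equivalent, so they are `P K` and `P' K` for primitive `P`, `P'` with the
same Gram matrix `T`. Complete `P` and `P'` to unimodular matrices; the new Gram matrices border
`T` by vectors `b` and `b'`, and comparing determinants shows that at every `p` the vector
`2 δ² adj(T) (b' - b)` or `2 δ² adj(T) (b' + b)` is divisible by the `p`-part of `det T`. If this
sign is the same at all `p`, then `P'` is obtained from `P` by one of the finitely many integral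
`H` with `Hᵀ γ H = (2 δ²)² γ`, up to the scalar `2 δ²`. Hence the number of solutions is at most
the number of such `H` times the product over `p` of the number of pairs (local row class, sign). A
sign is needed only when `p ∣ det T`, where its factor `2` is matched by the extra factor `2` in
the local bound.

Since `∏ κ_p` converges to a positive number, the theorem follows.
-/

section DiagonalForms

theorem natCard_add_eq_sum {X Y A : Type*} [Finite X] [Finite Y] [AddCommGroup A] [Fintype A]
    (f : X → A) (g : Y → A) (t : A) :
    Nat.card {z : X × Y // f z.1 + g z.2 = t} =
      ∑ u, Nat.card {x // f x = u} * Nat.card {y // g y = t - u} := by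
  simp only [← Nat.card_prod]
  rw [← Nat.card_sigma]
  refine Nat.card_congr
    ⟨fun z => ⟨f z.1.1, ⟨z.1.1, rfl⟩, ⟨z.1.2, eq_sub_of_add_eq' z.2⟩⟩,
      fun s => ⟨(s.2.1.1, s.2.2.1), ?_⟩, fun _ => rfl, ?_⟩
  · rw [s.2.1.2, s.2.2.2, add_sub_cancel]
  · rintro ⟨u, ⟨x, rfl⟩, y, hy⟩
    rfl

theorem sum_natCard_fiber {X A : Type*} [Finite X] [Fintype A] (f : X → A) :
    ∑ u, Nat.card {x // f x = u} = Nat.card X := by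
  rw [← Nat.card_sigma, Nat.card_congr (Equiv.sigmaFiberEquiv f)]

variable {F : Type*} [Field F] [Fintype F] [DecidableEq F]

theorem abs_quadraticChar_of_ne_zero {a : F} (ha : a ≠ 0) : |quadraticChar F a| = 1 := by
  rcases quadraticChar_dichotomy ha with h | h <;> simp [h]

theorem quadraticChar_mul_self_eq_one {a : F} (ha : a ≠ 0) :
    quadraticChar F a * quadraticChar F a = 1 := by
  rw [← sq, quadraticChar_sq_one ha]

theorem sum_quadraticChar_mul_quadraticChar_sub (hF : ringChar F ≠ 2) (t : F) :
    ∑ u, quadraticChar F u * quadraticChar F (t - u) =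
      quadraticChar F (-1) * if t = 0 then (Fintype.card F : ℤ) - 1 else -1 := by
  split_ifs with ht
  · have hterm (u : F) : quadraticChar F u * quadraticChar F (t - u) =
        quadraticChar F (-1) * (1 - if u = 0 then 1 else 0) := by
      rcases eq_or_ne u 0 with rfl | hu
      · simp
      · rw [ht, zero_sub, neg_eq_neg_one_mul, map_mul, mul_left_comm,
          quadraticChar_mul_self_eq_one hu, if_neg hu, sub_zero]
    rw [Finset.sum_congr rfl fun u _ => hterm u, ← Finset.mul_sum, Finset.sum_sub_distrib]
    simp
  · calc ∑ u, quadraticChar F u * quadraticChar F (t - u)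
        = ∑ v, quadraticChar F (t * v) * quadraticChar F (t - t * v) :=
          (Equiv.sum_comp (Equiv.mulLeft₀ t ht)
            fun u => quadraticChar F u * quadraticChar F (t - u)).symm
      _ = jacobiSum (quadraticChar F) (quadraticChar F) :=
          Finset.sum_congr rfl fun v _ => by
            rw [show t - t * v = t * (1 - v) by ring, map_mul, map_mul, mul_mul_mul_comm,
              quadraticChar_mul_self_eq_one ht, one_mul]
      _ = quadraticChar F (-1) * -1 := by
          have h := jacobiSum_nontrivial_inv (quadraticChar_ne_one hF)
          rwa [(quadraticChar_isQuadratic F).inv, ← mul_neg_one] at h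

theorem natCard_mul_sq_eq (hF : ringChar F ≠ 2) {a : F} (ha : a ≠ 0) (t : F) :
    (Nat.card {x : F // a * x ^ 2 = t} : ℤ) = 1 + quadraticChar F (a * t) := by
  have hdiv (x : F) : a * x ^ 2 = t ↔ x ^ 2 = a⁻¹ * t := by
    rw [eq_inv_mul_iff_mul_eq₀ ha]
  have hat : a * t = a ^ 2 * (a⁻¹ * t) := by field_simp
  rw [hat, map_mul, quadraticChar_sq_one' ha, one_mul, add_comm,
    ← quadraticChar_card_sqrts hF, Nat.card_congr (Equiv.subtypeEquivRight hdiv),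
    Nat.card_eq_fintype_card, Set.toFinset_card]
  rfl

theorem natCard_binary_eq (hF : ringChar F ≠ 2) {a b : F} (ha : a ≠ 0) (hb : b ≠ 0) (t : F) :
    (Nat.card {x : F × F // a * x.1 ^ 2 + b * x.2 ^ 2 = t} : ℤ) =
      Fintype.card F - quadraticChar F (-(a * b)) +
        if t = 0 then Fintype.card F * quadraticChar F (-(a * b)) else 0 := by
  have hsum : ∑ u, quadraticChar F (t - u) = 0 :=
    ((Equiv.subLeft t).sum_comp (quadraticChar F)).trans (quadraticChar_sum_zero hF)
  have hneg : quadraticChar F (-(a * b)) =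
      quadraticChar F (-1) * (quadraticChar F a * quadraticChar F b) := by
    rw [neg_eq_neg_one_mul, map_mul, map_mul]
  rw [natCard_add_eq_sum (fun x : F => a * x ^ 2) (fun x => b * x ^ 2)]
  push_cast
  calc ∑ u, (Nat.card {x : F // a * x ^ 2 = u} : ℤ) * Nat.card {x : F // b * x ^ 2 = t - u}
      = ∑ u, (1 + quadraticChar F a * quadraticChar F u +
          quadraticChar F b * quadraticChar F (t - u) + quadraticChar F a * quadraticChar F b *
            (quadraticChar F u * quadraticChar F (t - u))) :=
        Finset.sum_congr rfl fun u _ => by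
          rw [natCard_mul_sq_eq hF ha, natCard_mul_sq_eq hF hb, map_mul, map_mul]; ring
    _ = _ := by
        simp only [Finset.sum_add_distrib, ← Finset.mul_sum, quadraticChar_sum_zero hF, hsum,
          sum_quadraticChar_mul_quadraticChar_sub hF, Finset.sum_const, Finset.card_univ, hneg]
        split_ifs <;> simp <;> ring

theorem natCard_add_eq_of_forall_natCard_eq {X Y : Type*} [Finite X] [Finite Y] (f : X → F)
    {g : Y → F} {d : ℤ} (hg : ∀ t, (Nat.card {y // g y = t} : ℤ) =
      Fintype.card F - d + if t = 0 then Fintype.card F * d else 0) (t : F) :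
    (Nat.card {x : X × Y // f x.1 + g x.2 = t} : ℤ) =
      Nat.card X * (Fintype.card F - d) + Fintype.card F * d * Nat.card {x // f x = t} := by
  rw [natCard_add_eq_sum, ← sum_natCard_fiber f]
  push_cast
  simp only [hg, sub_eq_zero, mul_add, Finset.sum_add_distrib,
    Finset.sum_mul, mul_ite, mul_zero, Finset.sum_ite_eq, Finset.mem_univ, if_true]
  ring

open QuadraticMap

theorem natCard_weightedSumSquares_succ_succ (hF : ringChar F ≠ 2) {k : ℕ} {w : Fin (k + 2) → F}
    (hw : ∀ i, w i ≠ 0) (t : F) :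
    (Nat.card {x // weightedSumSquares F w x = t} : ℤ) =
      Fintype.card F ^ k * (Fintype.card F - quadraticChar F (-(w 0 * w 1))) +
        Fintype.card F * quadraticChar F (-(w 0 * w 1)) *
          Nat.card {x // weightedSumSquares F (fun i : Fin k => w i.succ.succ) x = t} := by
  let e : (Fin (k + 2) → F) ≃ (Fin k → F) × F × F :=
    { toFun := fun x => (fun i => x i.succ.succ, x 0, x 1)
      invFun := fun y => Fin.cons y.2.1 (Fin.cons y.2.2 y.1)
      left_inv := fun x => by
        ext i
        refine Fin.cases rfl (fun i => ?_) i
        exact Fin.cases rfl (fun _ => rfl) i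
      right_inv := fun _ => rfl }
  have he (x : Fin (k + 2) → F) : weightedSumSquares F w x =
      weightedSumSquares F (fun i : Fin k => w i.succ.succ) (e x).1 +
        (w 0 * (e x).2.1 ^ 2 + w 1 * (e x).2.2 ^ 2) := by
    simp only [weightedSumSquares_apply, smul_eq_mul, Fin.sum_univ_succ]
    change _ = ∑ i : Fin k, w i.succ.succ * (x i.succ.succ * x i.succ.succ) +
      (w 0 * x 0 ^ 2 + w 1 * x 1 ^ 2)
    rw [← Fin.succ_zero_eq_one]
    ring
  have hcard := Nat.card_congr (e.subtypeEquiv (p := fun x => weightedSumSquares F w x = t)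
    (q := fun y => weightedSumSquares F (fun i : Fin k => w i.succ.succ) y.1 +
      (w 0 * y.2.1 ^ 2 + w 1 * y.2.2 ^ 2) = t) fun x => by rw [← he])
  rw [hcard, natCard_add_eq_of_forall_natCard_eq _ (natCard_binary_eq hF (hw 0) (hw 1))]
  simp

omit [DecidableEq F] in
theorem abs_natCard_weightedSumSquares_sub_le (hF : ringChar F ≠ 2) {k : ℕ} {w : Fin (k + 1) → F}
    (hw : ∀ i, w i ≠ 0) {t : F} (ht : t ≠ 0) :
    |(Nat.card {x // weightedSumSquares F w x = t} : ℤ) - Fintype.card F ^ k| ≤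
      Fintype.card F ^ (k / 2) := by
  classical
  induction k using Nat.twoStepInduction with
  | zero =>
    have hcard : Nat.card {x // weightedSumSquares F w x = t} =
        Nat.card {x : F // w 0 * x ^ 2 = t} :=
      Nat.card_congr ((Equiv.funUnique (Fin 1) F).subtypeEquiv fun x => by
        simp [weightedSumSquares_apply, pow_two])
    rw [hcard, natCard_mul_sq_eq hF (hw 0), pow_zero, add_sub_cancel_left,
      abs_quadraticChar_of_ne_zero (mul_ne_zero (hw 0) ht)]
  | one =>
    have hempty : IsEmpty {x // weightedSumSquares F (fun i : Fin 0 => w i.succ.succ) x = t} :=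
      ⟨fun x => ht (by simpa using x.2.symm)⟩
    rw [natCard_weightedSumSquares_succ_succ hF hw, Nat.card_of_isEmpty, pow_zero, one_mul, pow_one,
      Nat.cast_zero, mul_zero, add_zero, sub_sub_cancel_left, abs_neg,
      abs_quadraticChar_of_ne_zero (neg_ne_zero.mpr (mul_ne_zero (hw 0) (hw 1)))]
  | more k ih _ =>
    rw [natCard_weightedSumSquares_succ_succ hF hw]
    set q : ℤ := (Fintype.card F : ℤ)
    set χ := quadraticChar F (-(w 0 * w 1))
    set N : ℤ :=
      (Nat.card {x // weightedSumSquares F (fun i : Fin (k + 1) => w i.succ.succ) x = t} : ℤ)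
    have hχ1 : |χ| = 1 :=
      abs_quadraticChar_of_ne_zero (neg_ne_zero.mpr (mul_ne_zero (hw 0) (hw 1)))
    calc |q ^ (k + 1) * (q - χ) + q * χ * N - q ^ (k + 2)|
        = |q * (χ * (N - q ^ k))| := by ring_nf
      _ = q * |N - q ^ k| := by
          rw [abs_mul, abs_mul, hχ1, one_mul, abs_of_nonneg (Int.natCast_nonneg _)]
      _ ≤ q * q ^ (k / 2) :=
          mul_le_mul_of_nonneg_left (ih fun i => hw i.succ.succ) (Int.natCast_nonneg _)
      _ = q ^ ((k + 2) / 2) := by rw [Nat.add_div_right _ two_pos, pow_succ']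

end DiagonalForms

section Frames

open Module

variable {F : Type*} [Field F] {V : Type*} [AddCommGroup V] [Module F V]
  {B : LinearMap.BilinForm F V}

theorem exists_isOrthogonal_apply_eq_sub (hB : B.IsSymm) {u x : V} (hu : B u u ≠ 0)
    (hux : 2 * B u x = B u u) : ∃ g : V ≃ₗ[F] V, B.IsOrthogonal g ∧ g x = x - u := by
  have hrefl : B.IsReflective u := ⟨.of_ne_zero hu, fun _ => (isUnit_iff_ne_zero.mpr hu).dvd⟩
  have hcoroot : LinearMap.IsReflective.coroot B hrefl x = 1 :=
    mul_left_cancel₀ hu (by rw [LinearMap.IsReflective.apply_self_mul_coroot_apply, hux, mul_one])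
  refine ⟨_, hrefl.isOrthogonal_reflection B (LinearMap.BilinForm.isSymm_iff.mp hB), ?_⟩
  rw [Module.reflection_apply, hcoroot, one_smul]

theorem exists_isOrthogonal_apply_eq (h2 : (2 : F) ≠ 0) (hB : B.IsSymm) {x y : V}
    (hx : B x x ≠ 0) (hxy : B y y = B x x) : ∃ g : V ≃ₗ[F] V, B.IsOrthogonal g ∧ g x = y := by
  have hadd : B (x + y) (x + y) = 2 * B (x + y) x := by
    simp only [map_add, LinearMap.add_apply, hxy, hB.eq x y]
    ring
  have hsub : B (x - y) (x - y) = 2 * B (x - y) x := by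
    simp only [map_sub, LinearMap.sub_apply, hxy, hB.eq x y]
    ring
  -- The parallelogram law prevents `x + y` and `x - y` from being both isotropic.
  by_cases hu : B (x - y) (x - y) = 0
  · have hv : B (x + y) (x + y) ≠ 0 := fun hv => by
      have h4 : 2 * (2 * B x x) = 0 := by
        simp only [map_sub, map_add, LinearMap.sub_apply, LinearMap.add_apply] at hadd hsub hu hv
        linear_combination hu + hv - 2 * hxy
      simp [h2, hx] at h4
    obtain ⟨g, hg, hgx⟩ := exists_isOrthogonal_apply_eq_sub hB hv hadd.symm
    exact ⟨g.trans (LinearEquiv.neg F), fun v w => by simp [hg v w], by simp [hgx]⟩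
  · obtain ⟨g, hg, hgx⟩ := exists_isOrthogonal_apply_eq_sub hB hu hsub.symm
    exact ⟨g, hg, by rw [hgx, sub_sub_cancel]⟩

theorem mem_orthogonal_span_singleton {a y : V} : y ∈ B.orthogonal (F ∙ a) ↔ B a y = 0 := by
  rw [LinearMap.BilinForm.orthogonal_span_singleton_eq_toLin_ker]
  exact LinearMap.mem_ker

theorem exists_equiv_prod_orthogonal {a : V} (ha : B a a ≠ 0) (hB : B.IsSymm) :
    ∃ e : V ≃ F × B.orthogonal (F ∙ a), ∀ x,
      B x x = B a a * (e x).1 ^ 2 + B (e x).2 (e x).2 := by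
  have ha0 : a ≠ 0 := by rintro rfl; simp at ha
  let e : (F × B.orthogonal (F ∙ a)) ≃ₗ[F] V :=
    ((LinearEquiv.toSpanNonzeroSingleton F V a ha0).prodCongr (LinearEquiv.refl F _)).trans
      (Submodule.prodEquivOfIsCompl _ _
        (LinearMap.BilinForm.isCompl_span_singleton_orthogonal ha))
  have he (c : F) (y : B.orthogonal (F ∙ a)) : e (c, y) = c • a + y := rfl
  refine ⟨e.symm.toEquiv, fun x => ?_⟩
  obtain ⟨⟨c, y⟩, rfl⟩ := e.surjective x
  have hy : B a y = 0 := mem_orthogonal_span_singleton.mp y.2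
  have hsymm : e.symm.toEquiv (e (c, y)) = (c, y) := e.symm_apply_apply _
  rw [hsymm, he]
  simp only [map_add, LinearMap.add_apply, map_smul, LinearMap.smul_apply, hy, hB.eq y a,
    smul_eq_mul]
  ring

theorem exists_isometryEquiv_weightedSumSquares (h2 : (2 : F) ≠ 0) [FiniteDimensional F V]
    (hB : B.IsSymm) (hnd : B.Nondegenerate) {k : ℕ} (hk : finrank F V = k) :
    ∃ w : Fin k → F, (∀ i, w i ≠ 0) ∧
      Nonempty ((LinearMap.BilinMap.toQuadraticMap B).IsometryEquiv
        (QuadraticMap.weightedSumSquares F w)) := by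
  subst hk
  have : Invertible (2 : F) := invertibleOfNonzero h2
  obtain ⟨w, he⟩ := QuadraticForm.equivalent_weightedSumSquares_units_of_nondegenerate'
    (LinearMap.BilinMap.toQuadraticMap B)
    (by rw [QuadraticMap.associated_left_inverse F hB.eq]; exact hnd.1)
  exact ⟨fun i => w i, fun i => (w i).ne_zero, he⟩

/-- `x` consists of nonzero vectors and has the same Gram matrix as `a` with respect to `B`. -/
structure IsCongruentFrame (B : LinearMap.BilinForm F V) {n : ℕ} (a x : Fin n → V) : Prop where
  apply_eq : ∀ i j, B (x i) (x j) = B (a i) (a j)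
  ne_zero : ∀ i, x i ≠ 0

/-- The number of families of nonzero vectors having the same Gram matrix as `a`. Since the `x i`
need only be nonzero, `a` itself is counted as soon as its members are nonzero. -/
noncomputable def frameCount (B : LinearMap.BilinForm F V) {n : ℕ} (a : Fin n → V) : ℕ :=
  Nat.card {x : Fin n → V // IsCongruentFrame B a x}

theorem isCongruentFrame_comp_iff {g : V ≃ₗ[F] V} (hg : B.IsOrthogonal g) {n : ℕ}
    {a x : Fin n → V} : IsCongruentFrame B a (g ∘ x) ↔ IsCongruentFrame B a x := by
  refine ⟨fun h => ⟨fun i j => ?_, fun i hi => h.ne_zero i (by simp [hi])⟩,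
    fun h => ⟨fun i j => ?_, fun i hi => h.ne_zero i (by simpa using hi)⟩⟩
  · rw [← h.apply_eq, Function.comp_apply, Function.comp_apply, hg]
  · rw [Function.comp_apply, Function.comp_apply, hg, h.apply_eq]

theorem isCongruentFrame_cons_iff (hB : B.IsSymm) {n : ℕ} {a : Fin (n + 1) → V}
    (h0 : B (a 0) (a 0) ≠ 0) {b : Fin n → B.orthogonal (F ∙ a 0)}
    (hb : ∀ i, (b i : V) = a i.succ) (y : Fin n → B.orthogonal (F ∙ a 0)) :
    IsCongruentFrame B a (Fin.cons (a 0) fun i => (y i : V)) ↔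
      IsCongruentFrame (B.restrict (B.orthogonal (F ∙ a 0))) b y := by
  have hya (i) : B (a 0) (y i) = 0 := mem_orthogonal_span_singleton.mp (y i).2
  have hba (i) : B (a 0) (b i) = 0 := mem_orthogonal_span_singleton.mp (b i).2
  have ha0 : a 0 ≠ 0 := fun h => h0 (by simp [h])
  constructor
  · rintro ⟨hgram, hne⟩
    refine ⟨fun i j => ?_, fun i h => hne i.succ (by simp [h])⟩
    simpa [hb] using hgram i.succ j.succ
  · rintro ⟨hgram, hne⟩
    have hgram' (i j) : B (y i) (y j) = B (b i) (b j) := hgram i j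
    refine ⟨fun i j => ?_, fun i => ?_⟩
    · cases i using Fin.cases <;> cases j using Fin.cases <;>
        simp [← hb, hya, hba, hgram', hB.eq _ (a 0)]
    · cases i using Fin.cases with
      | zero => exact ha0
      | succ i => simpa using hne i

theorem natCard_isCongruentFrame_apply_zero (hB : B.IsSymm) {n : ℕ}
    {a : Fin (n + 1) → V} (h0 : B (a 0) (a 0) ≠ 0) {b : Fin n → B.orthogonal (F ∙ a 0)}
    (hb : ∀ i, (b i : V) = a i.succ) :
    Nat.card {x // IsCongruentFrame B a x ∧ x 0 = a 0} =
      frameCount (B.restrict (B.orthogonal (F ∙ a 0))) b := by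
  have hort {x : Fin (n + 1) → V} (hx : IsCongruentFrame B a x) (hx0 : x 0 = a 0) (i : Fin n) :
      x i.succ ∈ B.orthogonal (F ∙ a 0) := by
    rw [mem_orthogonal_span_singleton, ← hx0, hx.apply_eq, ← hb]
    exact mem_orthogonal_span_singleton.mp (b i).2
  have hcons {x : Fin (n + 1) → V} (hx0 : x 0 = a 0) : Fin.cons (a 0) (fun i => x i.succ) = x := by
    rw [← hx0]; exact Fin.cons_self_tail x
  refine Nat.card_congr
    ⟨fun x => ⟨fun i => ⟨x.1 i.succ, hort x.2.1 x.2.2 i⟩,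
        (isCongruentFrame_cons_iff hB h0 hb _).mp ?_⟩,
      fun y => ⟨Fin.cons (a 0) fun i => (y.1 i : V),
        (isCongruentFrame_cons_iff hB h0 hb _).mpr y.2, rfl⟩,
      fun x => Subtype.ext (hcons x.2.2), fun _ => rfl⟩
  change IsCongruentFrame B a (Fin.cons (a 0) fun i => x.1 i.succ)
  rw [hcons x.2.2]
  exact x.2.1

theorem natCard_isCongruentFrame_apply_zero_eq (h2 : (2 : F) ≠ 0) (hB : B.IsSymm) {n : ℕ}
    {a : Fin (n + 1) → V} (h0 : B (a 0) (a 0) ≠ 0) {v : V} (hv : B v v = B (a 0) (a 0)) :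
    Nat.card {x // IsCongruentFrame B a x ∧ x 0 = v} =
      Nat.card {x // IsCongruentFrame B a x ∧ x 0 = a 0} := by
  obtain ⟨g, hg, hga⟩ := exists_isOrthogonal_apply_eq h2 hB h0 hv
  refine (Nat.card_congr ((Equiv.piCongrRight fun _ => g.toEquiv).subtypeEquiv fun x => ?_)).symm
  change _ ↔ IsCongruentFrame B a (g ∘ x) ∧ g (x 0) = v
  rw [isCongruentFrame_comp_iff hg, ← hga, g.injective.eq_iff]

theorem frameCount_succ [Finite V] (h2 : (2 : F) ≠ 0) (hB : B.IsSymm) {n : ℕ}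
    {a : Fin (n + 1) → V} (h0 : B (a 0) (a 0) ≠ 0) {b : Fin n → B.orthogonal (F ∙ a 0)}
    (hb : ∀ i, (b i : V) = a i.succ) :
    frameCount B a = Nat.card {x : V // B x x = B (a 0) (a 0)} *
      frameCount (B.restrict (B.orthogonal (F ∙ a 0))) b := by
  have := Fintype.ofFinite {x : V // B x x = B (a 0) (a 0)}
  let e : {x // IsCongruentFrame B a x} ≃
      Σ v : {x : V // B x x = B (a 0) (a 0)}, {x // IsCongruentFrame B a x ∧ x 0 = v} :=
    { toFun x := ⟨⟨x.1 0, x.2.apply_eq 0 0⟩, x.1, x.2, rfl⟩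
      invFun s := ⟨s.2.1, s.2.2.1⟩
      left_inv _ := rfl
      right_inv := by rintro ⟨⟨v, hv⟩, x, hx, hxv⟩; obtain rfl : x 0 = v := hxv; rfl }
  rw [frameCount, Nat.card_congr e, Nat.card_sigma, ← natCard_isCongruentFrame_apply_zero hB h0 hb,
    Finset.sum_congr rfl fun v _ => natCard_isCongruentFrame_apply_zero_eq h2 hB h0 v.2]
  simp

end Frames

section FrameCountBounds

open Module

variable {F : Type*} [Field F] [Fintype F] {V : Type*} [AddCommGroup V] [Module F V]
  {B : LinearMap.BilinForm F V}

omit [Fintype F] in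
theorem frameCount_one [DecidableEq F] [Finite V] (a : Fin 1 → V) :
    (frameCount B a : ℤ) = Nat.card {x // B x x = B (a 0) (a 0)} -
      if B (a 0) (a 0) = 0 then 1 else 0 := by
  have hcard : frameCount B a = {x : V | B x x = B (a 0) (a 0) ∧ x ≠ 0}.ncard :=
    Nat.card_congr ((Equiv.funUnique (Fin 1) V).subtypeEquiv fun x =>
      ⟨fun h => ⟨h.apply_eq 0 0, h.ne_zero 0⟩, fun h =>
        ⟨fun i j => by rw [Subsingleton.elim i 0, Subsingleton.elim j 0]; exact h.1,
          fun i => by rw [Subsingleton.elim i 0]; exact h.2⟩⟩)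
  have hdiff : {x : V | B x x = B (a 0) (a 0) ∧ x ≠ 0} =
      {x | B x x = B (a 0) (a 0)} \ {0} := rfl
  change _ = (({x | B x x = B (a 0) (a 0)} : Set V).ncard : ℤ) - _
  rw [hcard, hdiff]
  split_ifs with h
  · rw [← Set.ncard_sdiff_singleton_add_one (s := {x : V | B x x = B (a 0) (a 0)}) (a := 0)
      (by simp [h]), Nat.cast_add, Nat.cast_one, add_sub_cancel_right]
  · rw [Set.sdiff_singleton_eq_self (by simp [Ne.symm h]), sub_zero]

theorem exists_forall_natCard_apply_self_eq [DecidableEq F] (hF : ringChar F ≠ 2)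
    [FiniteDimensional F V] (hB : B.IsSymm) (hnd : B.Nondegenerate) (hk : finrank F V = 2) :
    ∃ d : ℤ, (d = 1 ∨ d = -1) ∧ ∀ t, (Nat.card {x // B x x = t} : ℤ) =
      Fintype.card F - d + if t = 0 then Fintype.card F * d else 0 := by
  obtain ⟨w, hw, ⟨e⟩⟩ :=
    exists_isometryEquiv_weightedSumSquares (Ring.two_ne_zero hF) hB hnd hk
  refine ⟨quadraticChar F (-(w 0 * w 1)),
    quadraticChar_dichotomy (neg_ne_zero.mpr (mul_ne_zero (hw 0) (hw 1))), fun t => ?_⟩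
  rw [← natCard_binary_eq hF (hw 0) (hw 1)]
  congr 1
  refine Nat.card_congr ((e.toEquiv.trans (finTwoArrowEquiv F)).subtypeEquiv fun x => ?_)
  have hx : w 0 * e x 0 ^ 2 + w 1 * e x 1 ^ 2 = B x x := by
    rw [← LinearMap.BilinMap.toQuadraticMap_apply, ← e.map_app,
      QuadraticMap.weightedSumSquares_apply, Fin.sum_univ_two]
    simp only [smul_eq_mul]
    ring
  rw [← hx]
  rfl

theorem natCard_apply_self_eq_of_orthogonal (hF : ringChar F ≠ 2) [DecidableEq F] [Finite V]
    (hB : B.IsSymm) {a : V} (ha : B a a ≠ 0) {d : ℤ}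
    (hd : ∀ t, (Nat.card {y : B.orthogonal (F ∙ a) // B y y = t} : ℤ) =
      Fintype.card F - d + if t = 0 then Fintype.card F * d else 0) :
    (Nat.card {x // B x x = B a a} : ℤ) = Fintype.card F * (Fintype.card F + d) := by
  obtain ⟨e, he⟩ := exists_equiv_prod_orthogonal ha hB
  have hcard := Nat.card_congr (e.subtypeEquiv (p := fun x => B x x = B a a)
    (q := fun z => B a a * z.1 ^ 2 + B z.2 z.2 = B a a) fun x => by rw [← he])
  rw [hcard, natCard_add_eq_of_forall_natCard_eq (fun c => B a a * c ^ 2) hd,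
    natCard_mul_sq_eq hF ha, map_mul, quadraticChar_mul_self_eq_one ha, Nat.card_eq_fintype_card]
  ring

omit [Fintype F] in
theorem frameCount_pos_of_ne_zero [Finite V] {n : ℕ} {a : Fin n → V} (ha : ∀ i, a i ≠ 0) :
    0 < frameCount B a :=
  have : Nonempty {x // IsCongruentFrame B a x} := ⟨a, fun _ _ => rfl, ha⟩
  Nat.card_pos

theorem frameCount_two [DecidableEq F] (hF : ringChar F ≠ 2) [FiniteDimensional F V]
    (hB : B.IsSymm) (hnd : B.Nondegenerate) (hk : finrank F V = 3) {a : Fin 2 → V}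
    (hort : B (a 0) (a 1) = 0) (h0 : B (a 0) (a 0) ≠ 0) (h1 : a 1 ≠ 0) :
    (frameCount B a : ℤ) = (if B (a 1) (a 1) = 0 then 2 else 1) *
      (Fintype.card F * ((Fintype.card F : ℤ) ^ 2 - 1)) := by
  have : Finite V := Module.finite_of_finite F
  have hrank := B.finrank_orthogonal hnd (F ∙ a 0)
  rw [hk, finrank_span_singleton fun h => h0 (by simp [h])] at hrank
  let b : Fin 1 → B.orthogonal (F ∙ a 0) := fun _ => ⟨a 1, mem_orthogonal_span_singleton.mpr hort⟩
  have hpos := frameCount_pos_of_ne_zero (B := B.restrict (B.orthogonal (F ∙ a 0))) (a := b)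
    fun _ h => h1 (congrArg Subtype.val h)
  obtain ⟨d, hd1, hd⟩ := exists_forall_natCard_apply_self_eq hF (hB.restrict _)
    (B.restrict_nondegenerate_orthogonal_spanSingleton hnd hB.isRefl h0) hrank
  have hplane : (frameCount (B.restrict (B.orthogonal (F ∙ a 0))) b : ℤ) = Fintype.card F - d +
      (if B (a 1) (a 1) = 0 then Fintype.card F * d else 0) -
        if B (a 1) (a 1) = 0 then 1 else 0 := by
    rw [frameCount_one, hd]
    rfl
  rw [frameCount_succ (Ring.two_ne_zero hF) hB h0 (b := b) fun i => by
      rw [Subsingleton.elim i 0]; rfl,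
    Nat.cast_mul, natCard_apply_self_eq_of_orthogonal hF hB h0 hd, hplane]
  split_ifs at hplane ⊢ with h
  · -- A nondegenerate plane with a nonzero isotropic vector is hyperbolic.
    obtain rfl : d = 1 := hd1.resolve_right <| by rintro rfl; linarith
    ring
  · rcases hd1 with rfl | rfl <;> ring

theorem abs_natCard_apply_self_sub_le (hF : ringChar F ≠ 2) [FiniteDimensional F V]
    (hB : B.IsSymm) (hnd : B.Nondegenerate) {k : ℕ} (hk : finrank F V = k + 1) {t : F}
    (ht : t ≠ 0) :
    |(Nat.card {x // B x x = t} : ℝ) - Fintype.card F ^ k| ≤ Fintype.card F ^ (k / 2) := by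
  classical
  obtain ⟨w, hw, ⟨e⟩⟩ :=
    exists_isometryEquiv_weightedSumSquares (Ring.two_ne_zero hF) hB hnd hk
  have hcard : Nat.card {x // B x x = t} =
      Nat.card {x // QuadraticMap.weightedSumSquares F w x = t} :=
    Nat.card_congr (e.toEquiv.subtypeEquiv fun x => by
      rw [← LinearMap.BilinMap.toQuadraticMap_apply, ← e.map_app]; rfl)
  rw [hcard]
  exact_mod_cast abs_natCard_weightedSumSquares_sub_le hF hw ht

/-- An orthogonal family of nonzero vectors, of which only the last one may be isotropic: the
shape of a diagonalized Gram matrix of corank at most one. -/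
structure IsAdaptedFrame (B : LinearMap.BilinForm F V) {n : ℕ} (a : Fin (n + 1) → V) : Prop where
  isOrtho : B.IsOrthoᵢ a
  ne_zero : ∀ i, a i ≠ 0
  apply_self_ne_zero : ∀ i, i ≠ Fin.last n → B (a i) (a i) ≠ 0

omit [Fintype F] in
theorem IsAdaptedFrame.exists_restrict {n : ℕ} {a : Fin (n + 2) → V} (ha : IsAdaptedFrame B a) :
    ∃ b : Fin (n + 1) → B.orthogonal (F ∙ a 0),
      (∀ i, (b i : V) = a i.succ) ∧ IsAdaptedFrame (B.restrict (B.orthogonal (F ∙ a 0))) b :=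
  ⟨fun i => ⟨a i.succ, mem_orthogonal_span_singleton.mpr (ha.isOrtho (Fin.succ_ne_zero i).symm)⟩,
    fun _ => rfl,
    { isOrtho := fun _ _ hij => ha.isOrtho (Fin.succ_injective _ |>.ne hij)
      ne_zero := fun i h => ha.ne_zero i.succ (congrArg Subtype.val h)
      apply_self_ne_zero := fun i hi =>
        ha.apply_self_ne_zero i.succ (by rwa [← Fin.succ_last, (Fin.succ_injective _).ne_iff]) }⟩

theorem natCard_apply_self_mem_Icc (hF : ringChar F ≠ 2) [FiniteDimensional F V]
    (hB : B.IsSymm) (hnd : B.Nondegenerate) {k : ℕ} (hk : finrank F V = k + 4) {t : F}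
    (ht : t ≠ 0) :
    (Nat.card {x // B x x = t} : ℝ) ∈
      Set.Icc ((Fintype.card F : ℝ) ^ (k + 3) * (1 - ((Fintype.card F : ℝ) ^ 2)⁻¹))
        ((Fintype.card F : ℝ) ^ (k + 3) * (1 + ((Fintype.card F : ℝ) ^ 2)⁻¹)) := by
  have hq : (1 : ℝ) < Fintype.card F := by exact_mod_cast Fintype.one_lt_card
  have hpow : (Fintype.card F : ℝ) ^ (k + 3) * ((Fintype.card F : ℝ) ^ 2)⁻¹ =
      (Fintype.card F : ℝ) ^ (k + 1) := by
    have : (Fintype.card F : ℝ) ≠ 0 := by positivity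
    field_simp
    ring
  have hle : (Fintype.card F : ℝ) ^ ((k + 3) / 2) ≤ (Fintype.card F : ℝ) ^ (k + 1) :=
    pow_le_pow_right₀ hq.le (by omega)
  have habs := abs_le.mp ((abs_natCard_apply_self_sub_le hF hB hnd hk ht).trans hle)
  constructor <;> linarith

theorem IsAdaptedFrame.frameCount_mem_Icc_of_finrank_eq_three [DecidableEq F]
    (hF : ringChar F ≠ 2) [FiniteDimensional F V] (hB : B.IsSymm) (hnd : B.Nondegenerate)
    (hk : finrank F V = 3) {a : Fin 2 → V} (ha : IsAdaptedFrame B a) :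
    (frameCount B a : ℝ) ∈ Set.Icc
      ((if B (a 1) (a 1) = 0 then 2 else 1 : ℝ) *
        ((Fintype.card F : ℝ) ^ 3 * (1 - ((Fintype.card F : ℝ) ^ 2)⁻¹)))
      ((if B (a 1) (a 1) = 0 then 2 else 1 : ℝ) *
        ((Fintype.card F : ℝ) ^ 3 * (1 + ((Fintype.card F : ℝ) ^ 2)⁻¹))) := by
  have hq : (Fintype.card F : ℝ) ≠ 0 := by exact_mod_cast Fintype.card_ne_zero
  have hmult : (0 : ℝ) ≤ if B (a 1) (a 1) = 0 then 2 else 1 := by split_ifs <;> norm_num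
  have hcount : (frameCount B a : ℝ) = (if B (a 1) (a 1) = 0 then 2 else 1) *
      (Fintype.card F * ((Fintype.card F : ℝ) ^ 2 - 1)) := by
    exact_mod_cast frameCount_two hF hB hnd hk (ha.isOrtho Fin.zero_ne_one)
      (ha.apply_self_ne_zero 0 Fin.zero_ne_one) (ha.ne_zero 1)
  have hmain : (Fintype.card F : ℝ) * ((Fintype.card F : ℝ) ^ 2 - 1) =
      (Fintype.card F : ℝ) ^ 3 * (1 - ((Fintype.card F : ℝ) ^ 2)⁻¹) := by
    field_simp
  rw [hcount, hmain]
  refine ⟨le_rfl, mul_le_mul_of_nonneg_left ?_ hmult⟩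
  gcongr
  exact (sub_le_self 1 (by positivity)).trans (le_add_of_nonneg_right (by positivity))

theorem pow_triangle_mul_pow_succ (q u : ℝ) (k : ℕ) :
    q ^ ((k + 1 + 2) * (k + 1 + 3) / 2) * u ^ (k + 1 + 1) =
      (q ^ (k + 3) * u) * (q ^ ((k + 2) * (k + 3) / 2) * u ^ (k + 1)) := by
  have hexp : (k + 1 + 2) * (k + 1 + 3) / 2 = (k + 3) + (k + 2) * (k + 3) / 2 := by
    rw [show (k + 1 + 2) * (k + 1 + 3) = (k + 2) * (k + 3) + 2 * (k + 3) by ring]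
    omega
  rw [hexp, pow_add, pow_succ u]
  ring

theorem IsAdaptedFrame.frameCount_mem_Icc [DecidableEq F] (hF : ringChar F ≠ 2)
    [FiniteDimensional F V] (hB : B.IsSymm) (hnd : B.Nondegenerate) {k : ℕ}
    (hk : finrank F V = k + 3) {a : Fin (k + 2) → V} (ha : IsAdaptedFrame B a) :
    (frameCount B a : ℝ) ∈ Set.Icc
      ((if B (a (Fin.last _)) (a (Fin.last _)) = 0 then 2 else 1 : ℝ) *
        ((Fintype.card F : ℝ) ^ ((k + 2) * (k + 3) / 2) *
          (1 - ((Fintype.card F : ℝ) ^ 2)⁻¹) ^ (k + 1)))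
      ((if B (a (Fin.last _)) (a (Fin.last _)) = 0 then 2 else 1 : ℝ) *
        ((Fintype.card F : ℝ) ^ ((k + 2) * (k + 3) / 2) *
          (1 + ((Fintype.card F : ℝ) ^ 2)⁻¹) ^ (k + 1))) := by
  have hq : (1 : ℝ) < Fintype.card F := by exact_mod_cast Fintype.one_lt_card
  have hinv : ((Fintype.card F : ℝ) ^ 2)⁻¹ < 1 := inv_lt_one_of_one_lt₀ (one_lt_pow₀ hq two_ne_zero)
  induction k generalizing V with
  | zero => simpa using ha.frameCount_mem_Icc_of_finrank_eq_three hF hB hnd hk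
  | succ k ih =>
    have : Finite V := Module.finite_of_finite F
    have h0 : B (a 0) (a 0) ≠ 0 := ha.apply_self_ne_zero 0 (by simp [Fin.ext_iff])
    have hrank := B.finrank_orthogonal hnd (F ∙ a 0)
    rw [hk, finrank_span_singleton (ha.ne_zero 0)] at hrank
    obtain ⟨b, hba, hb⟩ := ha.exists_restrict
    obtain ⟨hlow, hhigh⟩ := ih (hB.restrict _)
      (B.restrict_nondegenerate_orthogonal_spanSingleton hnd hB.isRefl h0) hrank hb
    obtain ⟨hNlow, hNhigh⟩ := natCard_apply_self_mem_Icc hF hB hnd hk h0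
    have hlast : B.restrict (B.orthogonal (F ∙ a 0)) (b (Fin.last _)) (b (Fin.last _)) =
        B (a (Fin.last _)) (a (Fin.last _)) := by
      rw [LinearMap.BilinForm.restrict_apply, LinearMap.domRestrict_apply, hba, Fin.succ_last]
    have hmult : (0 : ℝ) ≤ if B (a (Fin.last _)) (a (Fin.last _)) = 0 then 2 else 1 := by
      split_ifs <;> norm_num
    rw [hlast] at hlow hhigh
    rw [frameCount_succ (Ring.two_ne_zero hF) hB h0 hba, Nat.cast_mul, pow_triangle_mul_pow_succ,
      pow_triangle_mul_pow_succ]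
    have : 0 ≤ 1 - ((Fintype.card F : ℝ) ^ 2)⁻¹ := by linarith
    exact ⟨(mul_left_comm _ _ _).trans_le
        (mul_le_mul hNlow hlow (by positivity) (by positivity)),
      (mul_le_mul hNhigh hhigh (by positivity) (by positivity)).trans_eq (mul_left_comm _ _ _)⟩

end FrameCountBounds

section GramMatrices

variable {R : Type*} [CommRing R] {m n : Type*} [Fintype m]

open Matrix

/-- The matrix of inner products of the columns of `L` for the bilinear form with matrix `γ`;
`Matrix.gram` is the case of an inner product space. -/
def gramMatrix (γ : Matrix m m R) (L : Matrix m n R) : Matrix n n R :=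
  Lᵀ * γ * L

/-- A matrix with a left inverse; over `ℤ` this says that the columns are a basis of a direct
summand. -/
def IsPrimitiveFrame [Fintype n] [DecidableEq n] (Q : Matrix m n R) : Prop :=
  ∃ S : Matrix n m R, S * Q = 1

/-- The representations of `T` by the quadratic form with matrix `γ`. -/
abbrev GramRepresentation (γ : Matrix m m R) (T : Matrix n n R) : Type _ :=
  {L : Matrix m n R // gramMatrix γ L = T}

/-- The primitive representations of `T` by the quadratic form with matrix `γ`. -/
abbrev PrimitiveGramRepresentation [Fintype n] [DecidableEq n] (γ : Matrix m m R)
    (T : Matrix n n R) : Type _ :=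
  {Q : Matrix m n R // IsPrimitiveFrame Q ∧ gramMatrix γ Q = T}

theorem isSymm_gramMatrix {γ : Matrix m m R} (hγ : γ.IsSymm) (L : Matrix m n R) :
    (gramMatrix γ L).IsSymm := by
  rw [IsSymm, gramMatrix, transpose_mul, transpose_mul, transpose_transpose, hγ.eq,
    Matrix.mul_assoc]

theorem gramMatrix_map {S : Type*} [CommRing S] (f : R →+* S) (γ : Matrix m m R)
    (L : Matrix m n R) : gramMatrix (γ.map f) (L.map f) = (gramMatrix γ L).map f := by
  rw [gramMatrix, gramMatrix, Matrix.map_mul, Matrix.map_mul, transpose_map]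

theorem gramMatrix_mul {l : Type*} [Fintype n] (γ : Matrix m m R) (L : Matrix m n R)
    (X : Matrix n l R) : gramMatrix γ (L * X) = gramMatrix (gramMatrix γ L) X := by
  simp only [gramMatrix, transpose_mul, Matrix.mul_assoc]

theorem gramMatrix_add_smul (γ : Matrix m m R) (P Z : Matrix m n R) (c : R) :
    gramMatrix γ (P + c • Z) =
      gramMatrix γ P + c • (Pᵀ * γ * Z + Zᵀ * γ * P) + c ^ 2 • gramMatrix γ Z := by
  simp only [gramMatrix, transpose_add, transpose_smul, Matrix.add_mul, Matrix.mul_add,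
    Matrix.smul_mul, Matrix.mul_smul, smul_add, smul_smul, sq]
  abel

theorem exists_matrix_map_eq {α β m n : Type*} {f : α → β} (hf : Function.Surjective f)
    (U : Matrix m n β) : ∃ V : Matrix m n α, V.map f = U := by
  obtain ⟨s, hs⟩ := hf.hasRightInverse
  exact ⟨U.map s, by rw [Matrix.map_map, hs.id, Matrix.map_id]⟩

theorem isPrimitiveFrame_of_isUnit_mul [Fintype n] [DecidableEq n] {S : Matrix n m R}
    {Q : Matrix m n R} (h : IsUnit (S * Q)) : IsPrimitiveFrame Q := by
  obtain ⟨U, hU⟩ := h.exists_left_inv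
  exact ⟨U * S, by rw [Matrix.mul_assoc, hU]⟩

theorem IsPrimitiveFrame.map {S : Type*} [CommRing S] [Fintype n] [DecidableEq n] {Q : Matrix m n R}
    (hQ : IsPrimitiveFrame Q) (f : R →+* S) : IsPrimitiveFrame (Q.map f) := by
  obtain ⟨U, hU⟩ := hQ
  exact ⟨U.map f, by rw [← Matrix.map_mul, hU, Matrix.map_one f f.map_zero f.map_one]⟩

theorem isPrimitiveFrame_of_map {S : Type*} [CommRing S] [Fintype n] [DecidableEq n]
    {f : R →+* S} [IsLocalHom f] (hf : Function.Surjective f) {Q : Matrix m n R}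
    (hQ : IsPrimitiveFrame (Q.map f)) : IsPrimitiveFrame Q := by
  obtain ⟨U, hU⟩ := hQ
  obtain ⟨V, rfl⟩ := exists_matrix_map_eq hf U
  refine isPrimitiveFrame_of_isUnit_mul (S := V)
    ((isUnit_iff_isUnit_det _).mpr (isUnit_of_map_unit f _ ?_))
  rw [RingHom.map_det, RingHom.mapMatrix_apply, Matrix.map_mul, hU, det_one]
  exact isUnit_one

theorem IsPrimitiveFrame.add_smul_of_isNilpotent [Fintype n] [DecidableEq n] {Q : Matrix m n R}
    (hQ : IsPrimitiveFrame Q) {c : R} (hc : IsNilpotent c) (X : Matrix m n R) :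
    IsPrimitiveFrame (Q + c • X) := by
  obtain ⟨U, hU⟩ := hQ
  refine isPrimitiveFrame_of_isUnit_mul (S := U) ?_
  rw [Matrix.mul_add, hU, Matrix.mul_smul]
  obtain ⟨N, hN⟩ := hc
  exact IsNilpotent.isUnit_one_add ⟨N, by rw [smul_pow, hN, zero_smul]⟩

theorem isPrimitiveFrame_of_isUnit_det_gramMatrix [Fintype n] [DecidableEq n] {γ : Matrix m m R}
    {Q : Matrix m n R} (hQ : IsUnit (gramMatrix γ Q).det) : IsPrimitiveFrame Q :=
  isPrimitiveFrame_of_isUnit_mul (S := Qᵀ * γ) ((isUnit_iff_isUnit_det _).mpr hQ)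

theorem natCard_gramMatrix_add_smul_eq_le [Finite R] [Fintype n] [DecidableEq n] (γ : Matrix m m R)
    (T : Matrix n n R) {P : Matrix m n R} (hP : IsPrimitiveFrame P) {c : R} (hc : IsNilpotent c) :
    Nat.card {Q // (∃ X, Q = P + c • X) ∧ gramMatrix γ Q = T} ≤
      Nat.card (PrimitiveGramRepresentation γ T) := by
  refine Nat.card_mono (Set.toFinite _) ?_
  rintro _ ⟨⟨X, rfl⟩, hX⟩
  exact ⟨hP.add_smul_of_isNilpotent hc X, hX⟩

theorem natCard_gramRepresentation_eq_of_isUnit_det [Fintype n] [DecidableEq n]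
    (γ : Matrix m m R) {T : Matrix n n R} (hT : IsUnit T.det) :
    Nat.card (GramRepresentation γ T) = Nat.card (PrimitiveGramRepresentation γ T) :=
  Nat.card_congr (Equiv.subtypeEquivRight fun Q => (and_iff_right_of_imp fun hQ =>
    isPrimitiveFrame_of_isUnit_det_gramMatrix (by rwa [hQ])).symm)

theorem toBilin'_gramMatrix [DecidableEq m] [Fintype n] [DecidableEq n] (γ : Matrix m m R)
    (Q : Matrix m n R) :
    toBilin' (gramMatrix γ Q) = (toBilin' γ).comp (toLin' Q) (toLin' Q) :=
  (toBilin'_comp γ Q Q).symm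

theorem isPrimitiveFrame_iff_injective {F : Type*} [Field F] [Fintype n] [DecidableEq n]
    {Q : Matrix m n F} : IsPrimitiveFrame Q ↔ Function.Injective (toLin' Q) := by
  classical
  constructor
  · rintro ⟨S, hS⟩
    refine Function.LeftInverse.injective (g := toLin' S) fun x => ?_
    rw [← LinearMap.comp_apply, ← toLin'_mul, hS, toLin'_one, LinearMap.id_apply]
  · intro h
    obtain ⟨g, hg⟩ := (toLin' Q).exists_leftInverse_of_injective (LinearMap.ker_eq_bot.mpr h)
    refine ⟨LinearMap.toMatrix' g, toLin'.injective ?_⟩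
    rw [toLin'_mul, toLin'_toMatrix', hg, toLin'_one]

end GramMatrices

section PullbackForms

open Module

variable {F : Type*} [Field F] {V W : Type*} [AddCommGroup V] [Module F V] [AddCommGroup W]
  [Module F W] {B : LinearMap.BilinForm F V}

theorem mem_ker_of_isOrtho_basis {ι : Type*} {v : Basis ι F V} (hv : B.IsOrthoᵢ v) {i : ι}
    (hi : B (v i) (v i) = 0) : v i ∈ LinearMap.ker B := by
  refine LinearMap.mem_ker.mpr (v.ext fun j => ?_)
  rcases eq_or_ne i j with rfl | hij
  exacts [hi, hv hij]

theorem exists_isOrtho_basis_of_finrank_ker_le_one (h2 : (2 : F) ≠ 0) [FiniteDimensional F V]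
    (hB : B.IsSymm) {n : ℕ} (hn : finrank F V = n + 1)
    (hker : finrank F (LinearMap.ker B) ≤ 1) :
    ∃ v : Basis (Fin (n + 1)) F V, B.IsOrthoᵢ v ∧ ∀ i, i ≠ Fin.last n → B (v i) (v i) ≠ 0 := by
  have : Invertible (2 : F) := invertibleOfNonzero h2
  obtain ⟨v₀, hv₀⟩ := LinearMap.BilinForm.exists_orthogonal_basis
    (LinearMap.BilinForm.isSymm_iff.mp hB)
  obtain ⟨v, hv⟩ : ∃ v : Basis (Fin (n + 1)) F V, B.IsOrthoᵢ v :=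
    ⟨v₀.reindex (finCongr hn), fun i j hij => by
      simpa [Function.onFun] using hv₀ ((finCongr hn).symm.injective.ne hij)⟩
  have hunique {i j} (hi : B (v i) (v i) = 0) (hj : B (v j) (v j) = 0) : i = j := by
    by_contra hij
    have hli : LinearIndependent F
        ![(⟨v i, mem_ker_of_isOrtho_basis hv hi⟩ : LinearMap.ker B),
          ⟨v j, mem_ker_of_isOrtho_basis hv hj⟩] := by
      refine LinearIndependent.of_comp (Submodule.subtype _) ?_
      convert v.linearIndependent.comp ![i, j] (by
        rw [Function.Injective, Fin.forall_fin_two]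
        simp [Fin.forall_fin_two, hij, Ne.symm hij]) using 1
      ext k
      fin_cases k <;> rfl
    have hcard := hli.fintype_card_le_finrank
    rw [Fintype.card_fin] at hcard
    omega
  by_cases h : ∃ i, B (v i) (v i) = 0
  · obtain ⟨i₀, hi₀⟩ := h
    let σ := Equiv.swap i₀ (Fin.last n)
    refine ⟨v.reindex σ, fun i j hij => ?_, fun i hi hzero => hi ?_⟩
    · simpa [Function.onFun] using hv (σ.symm.injective.ne hij)
    · rw [Basis.reindex_apply] at hzero
      rw [← σ.apply_symm_apply i, hunique hzero hi₀, Equiv.swap_apply_left]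
  · exact ⟨v, hv, fun i _ => not_exists.mp h i⟩

theorem finrank_ker_comp_le_one [FiniteDimensional F V] (hnd : B.Nondegenerate)
    {f : W →ₗ[F] V} (hf : Function.Injective f) (hrank : finrank F V ≤ finrank F W + 1) :
    finrank F (LinearMap.ker (B.comp f f)) ≤ 1 := by
  have hmap : (LinearMap.ker (B.comp f f)).map f ≤ B.flip.orthogonal (LinearMap.range f) := by
    rintro _ ⟨x, hx, rfl⟩ _ ⟨y, rfl⟩
    exact LinearMap.congr_fun (LinearMap.mem_ker.mp hx) y
  have horth := B.flip.finrank_orthogonal hnd.flip (LinearMap.range f)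
  have hle := Submodule.finrank_mono hmap
  rw [LinearMap.finrank_range_of_inj hf] at horth
  rw [← LinearEquiv.finrank_eq (Submodule.equivMapOfInjective f hf _)] at hle
  omega

theorem isCongruentFrame_basis_iff {n : ℕ} {f g : W →ₗ[F] V} {v : Basis (Fin (n + 1)) F W}
    (hv : (B.comp f f).IsOrthoᵢ v)
    (hne : ∀ i, i ≠ Fin.last n → B.comp f f (v i) (v i) ≠ 0) :
    IsCongruentFrame B (f ∘ v) (g ∘ v) ↔ Function.Injective g ∧ B.comp g g = B.comp f f := by
  constructor
  · rintro ⟨hgram, hg0⟩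
    have hcomp : B.comp g g = B.comp f f := LinearMap.BilinForm.ext_basis v hgram
    refine ⟨(injective_iff_map_eq_zero g).mpr fun x hx => ?_, hcomp⟩
    have hcoord (i) (hi : i ≠ Fin.last n) : v.repr x i = 0 := by
      have hort : B.comp f f (v i) x = 0 := by
        rw [← hcomp, LinearMap.BilinForm.comp_apply, hx, map_zero]
      rw [← v.sum_repr x, map_sum, Finset.sum_eq_single i
        (fun j _ hj => by rw [map_smul, hv hj.symm, smul_zero])
        (fun h => absurd (Finset.mem_univ i) h), map_smul] at hort
      exact (smul_eq_zero.mp hort).resolve_right (hne i hi)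
    have hsum : x = v.repr x (Fin.last n) • v (Fin.last n) := by
      conv_lhs => rw [← v.sum_repr x]
      exact Finset.sum_eq_single _ (fun j _ hj => by rw [hcoord j hj, zero_smul]) (by simp)
    rw [hsum, map_smul] at hx
    rw [hsum, (smul_eq_zero.mp hx).resolve_right (hg0 _), zero_smul]
  · rintro ⟨hg, hcomp⟩
    exact ⟨fun i j => LinearMap.congr_fun₂ hcomp (v i) (v j), fun i h =>
      v.ne_zero i ((injective_iff_map_eq_zero g).mp hg _ h)⟩

theorem frameCount_basis {n : ℕ} {f : W →ₗ[F] V} {v : Basis (Fin (n + 1)) F W}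
    (hv : (B.comp f f).IsOrthoᵢ v)
    (hne : ∀ i, i ≠ Fin.last n → B.comp f f (v i) (v i) ≠ 0) :
    frameCount B (f ∘ v) =
      Nat.card {g : W →ₗ[F] V // Function.Injective g ∧ B.comp g g = B.comp f f} :=
  (Nat.card_congr ((v.constr F).symm.toEquiv.subtypeEquiv fun _ =>
    (isCongruentFrame_basis_iff hv hne).symm)).symm

theorem natCard_injective_comp_eq_mem_Icc [Fintype F] (hF : ringChar F ≠ 2)
    [FiniteDimensional F V] (hB : B.IsSymm) (hnd : B.Nondegenerate) {k : ℕ}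
    (hV : finrank F V = k + 3) (hW : finrank F W = k + 2) {f : W →ₗ[F] V}
    (hf : Function.Injective f) [Decidable (B.comp f f).Nondegenerate] :
    (Nat.card {g : W →ₗ[F] V // Function.Injective g ∧ B.comp g g = B.comp f f} : ℝ) ∈ Set.Icc
      ((if (B.comp f f).Nondegenerate then 1 else 2 : ℝ) *
        ((Fintype.card F : ℝ) ^ ((k + 2) * (k + 3) / 2) *
          (1 - ((Fintype.card F : ℝ) ^ 2)⁻¹) ^ (k + 1)))
      ((if (B.comp f f).Nondegenerate then 1 else 2 : ℝ) *
        ((Fintype.card F : ℝ) ^ ((k + 2) * (k + 3) / 2) *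
          (1 + ((Fintype.card F : ℝ) ^ 2)⁻¹) ^ (k + 1))) := by
  classical
  have : FiniteDimensional F W := FiniteDimensional.of_injective f hf
  obtain ⟨v, hv, hne⟩ := exists_isOrtho_basis_of_finrank_ker_le_one (Ring.two_ne_zero hF)
    (B := B.comp f f) ⟨fun x y => hB.eq (f x) (f y)⟩ hW (finrank_ker_comp_le_one hnd hf (by omega))
  have hframe : IsAdaptedFrame B (f ∘ v) :=
    ⟨hv, fun i h => v.ne_zero i ((injective_iff_map_eq_zero f).mp hf _ h), hne⟩
  have hlast : B (f (v (Fin.last _))) (f (v (Fin.last _))) = 0 ↔ ¬ (B.comp f f).Nondegenerate := by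
    rw [LinearMap.BilinForm.iIsOrtho.nondegenerate_iff_not_isOrtho_basis_self _ v hv]
    refine ⟨fun h hall => hall _ h, fun h => by_contra fun hl => h fun i => ?_⟩
    rcases eq_or_ne i (Fin.last _) with rfl | hi
    exacts [hl, hne i hi]
  have hmem := hframe.frameCount_mem_Icc hF hB hnd hV
  simp only [Function.comp_apply, hlast, ite_not, frameCount_basis hv hne] at hmem
  exact hmem

end PullbackForms

section FiniteFieldRepresentations

variable {F : Type*} [Field F] [Fintype F] [DecidableEq F] {k : ℕ}
  {γ : Matrix (Fin (k + 3)) (Fin (k + 3)) F}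

open Matrix

theorem natCard_primitiveGramRepresentation_mem_Icc (hF : ringChar F ≠ 2) (hγ : γ.IsSymm)
    (hdet : γ.det ≠ 0) {P : Matrix (Fin (k + 3)) (Fin (k + 2)) F} (hP : IsPrimitiveFrame P) :
    (Nat.card (PrimitiveGramRepresentation γ (gramMatrix γ P)) : ℝ) ∈ Set.Icc
      ((if (gramMatrix γ P).det = 0 then 2 else 1 : ℝ) *
        ((Fintype.card F : ℝ) ^ ((k + 2) * (k + 3) / 2) *
          (1 - ((Fintype.card F : ℝ) ^ 2)⁻¹) ^ (k + 1)))
      ((if (gramMatrix γ P).det = 0 then 2 else 1 : ℝ) *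
        ((Fintype.card F : ℝ) ^ ((k + 2) * (k + 3) / 2) *
          (1 + ((Fintype.card F : ℝ) ^ 2)⁻¹) ^ (k + 1))) := by
  classical
  have hcard : Nat.card (PrimitiveGramRepresentation γ (gramMatrix γ P)) =
      Nat.card {g : (Fin (k + 2) → F) →ₗ[F] (Fin (k + 3) → F) // Function.Injective g ∧
        (toBilin' γ).comp g g = toBilin' (gramMatrix γ P)} :=
    Nat.card_congr (toLin'.toEquiv.subtypeEquiv fun Q => by
      rw [isPrimitiveFrame_iff_injective, ← toBilin'.injective.eq_iff, toBilin'_gramMatrix γ Q]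
      rfl)
  have hmem := natCard_injective_comp_eq_mem_Icc hF (isSymm_toBilin'_iff_isSymm.mpr hγ)
    (LinearMap.BilinForm.nondegenerate_toBilin'_iff_det_ne_zero.mpr hdet)
    (Module.finrank_fin_fun F) (Module.finrank_fin_fun F) (isPrimitiveFrame_iff_injective.mp hP)
  simpa only [← hcard, ← toBilin'_gramMatrix, ite_not,
    LinearMap.BilinForm.nondegenerate_toBilin'_iff_det_ne_zero] using hmem

omit [DecidableEq F] in
theorem natCard_primitiveGramRepresentation_le (hF : ringChar F ≠ 2) (hγ : γ.IsSymm)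
    (hdet : γ.det ≠ 0) {T : Matrix (Fin (k + 2)) (Fin (k + 2)) F} (hT : T.det ≠ 0) :
    (Nat.card (PrimitiveGramRepresentation γ T) : ℝ) ≤
      (Fintype.card F : ℝ) ^ ((k + 2) * (k + 3) / 2) *
        (1 + ((Fintype.card F : ℝ) ^ 2)⁻¹) ^ (k + 1) := by
  classical
  rcases isEmpty_or_nonempty (PrimitiveGramRepresentation γ T) with hempty | ⟨P, hP, rfl⟩
  · rw [Nat.card_of_isEmpty, Nat.cast_zero]
    positivity
  have hmem := natCard_primitiveGramRepresentation_mem_Icc hF hγ hdet hP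
  rw [if_neg hT, one_mul, one_mul] at hmem
  exact hmem.2

end FiniteFieldRepresentations

section HenselCorrection

open Matrix

theorem exists_isFixedPt_of_isNilpotent {R M : Type*} [CommRing R] [AddCommGroup M] [Module R M]
    {ϖ : R} (hϖ : IsNilpotent ϖ) {Φ : M → M}
    (hΦ : ∀ (j : ℕ) (x y : M), ∃ z, Φ (x + ϖ ^ j • y) = Φ x + ϖ ^ (j + 1) • z) :
    ∃ x, Function.IsFixedPt Φ x := by
  have hiter (j : ℕ) : ∃ z, Φ^[j + 1] 0 = Φ^[j] 0 + ϖ ^ j • z := by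
    induction j with
    | zero => exact ⟨Φ 0, by simp⟩
    | succ j ih =>
      obtain ⟨y, hy⟩ := ih
      obtain ⟨z, hz⟩ := hΦ j (Φ^[j] 0) y
      refine ⟨z, ?_⟩
      rw [← Function.iterate_succ_apply' Φ j, ← hy, ← Function.iterate_succ_apply' Φ] at hz
      exact hz
  obtain ⟨N, hN⟩ := hϖ
  obtain ⟨z, hz⟩ := hiter N
  refine ⟨Φ^[N] 0, ?_⟩
  rw [Function.IsFixedPt, ← Function.iterate_succ_apply' Φ, hz, hN, zero_smul, add_zero]

theorem exists_symm_smul_eq {A n : Type*} [CommRing A] {M : Matrix n n A} (hM : M.IsSymm) {c : A}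
    (h : ∀ i j, c ∣ M i j) : ∃ E : Matrix n n A, E.IsSymm ∧ M = c • E := by
  have hquot (x : A) : ∃ y, c ∣ x → x = c * y := by
    by_cases hx : c ∣ x
    · exact hx.imp fun y hy _ => hy
    · exact ⟨0, fun h => absurd h hx⟩
  choose f hf using hquot
  refine ⟨M.map f, hM.map f, ?_⟩
  ext i j
  simpa using hf _ (h i j)

variable {A : Type*} [CommRing A] {m n : Type*} [Fintype m] [Fintype n] [DecidableEq n]

theorem gramMatrix_add_smul_of_mul_eq_smul_one {ϖ δ : A} {γ : Matrix m m A} (hγ : γ.IsSymm)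
    {P B : Matrix m n A} (hB : Pᵀ * γ * B = δ • 1) (K : Matrix m n A) {Y : Matrix n n A}
    (hY : Y.IsSymm) :
    gramMatrix γ (P + (2 * δ * ϖ) • ((2 * δ) • K + B * Y)) =
      gramMatrix γ P + (4 * δ ^ 2 * ϖ) •
        (Pᵀ * γ * K + Kᵀ * γ * P + Y + ϖ • gramMatrix γ ((2 * δ) • K + B * Y)) := by
  have htranspose (Z : Matrix m n A) : Zᵀ * γ * P = (Pᵀ * γ * Z)ᵀ := by
    rw [transpose_mul, transpose_mul, transpose_transpose, hγ.eq, Matrix.mul_assoc]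
  have hpair : Pᵀ * γ * ((2 * δ) • K + B * Y) = (2 * δ) • (Pᵀ * γ * K) + δ • Y := by
    rw [Matrix.mul_add, Matrix.mul_smul, ← Matrix.mul_assoc _ B, hB, Matrix.smul_mul,
      Matrix.one_mul]
  rw [gramMatrix_add_smul, htranspose, htranspose K, hpair, transpose_add, transpose_smul,
    transpose_smul, hY.eq]
  module

theorem exists_gramMatrix_eq_add_smul {ϖ δ : A} (hϖ : IsNilpotent ϖ) {γ : Matrix m m A}
    (hγ : γ.IsSymm) {P B : Matrix m n A} (hB : Pᵀ * γ * B = δ • 1) (K : Matrix m n A)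
    {E : Matrix n n A} (hE : E.IsSymm) :
    ∃ Y : Matrix n n A, Y.IsSymm ∧
      gramMatrix γ (P + (2 * δ * ϖ) • ((2 * δ) • K + B * Y)) =
        gramMatrix γ P + (4 * δ ^ 2 * ϖ) • E := by
  let Φ (Y : Matrix n n A) : Matrix n n A :=
    E - (Pᵀ * γ * K + Kᵀ * γ * P) - ϖ • gramMatrix γ ((2 * δ) • K + B * Y)
  have hΦ (j : ℕ) (Y D : Matrix n n A) : ∃ D', Φ (Y + ϖ ^ j • D) = Φ Y + ϖ ^ (j + 1) • D' := by
    simp only [Φ]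
    rw [Matrix.mul_add, Matrix.mul_smul, ← add_assoc, gramMatrix_add_smul]
    generalize (2 * δ) • K + B * Y = Z
    refine ⟨-(Zᵀ * γ * (B * D) + (B * D)ᵀ * γ * Z) - ϖ ^ j • gramMatrix γ (B * D), ?_⟩
    module
  obtain ⟨Y, hYfix⟩ := exists_isFixedPt_of_isNilpotent hϖ hΦ
  have hY : Y.IsSymm := by
    have hsymm : (Pᵀ * γ * K + Kᵀ * γ * P).IsSymm := by
      rw [IsSymm, transpose_add]
      simp only [transpose_mul, transpose_transpose, hγ.eq, ← Matrix.mul_assoc]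
      exact add_comm _ _
    rw [← hYfix]
    exact (hE.sub hsymm).sub ((isSymm_gramMatrix hγ _).smul ϖ)
  refine ⟨Y, hY, ?_⟩
  have hE' : Pᵀ * γ * K + Kᵀ * γ * P + Y + ϖ • gramMatrix γ ((2 * δ) • K + B * Y) = E := by
    have : E - (Pᵀ * γ * K + Kᵀ * γ * P) - ϖ • gramMatrix γ ((2 * δ) • K + B * Y) = Y := hYfix
    nth_rw 1 [← this]
    abel
  rw [gramMatrix_add_smul_of_mul_eq_smul_one hγ hB K hY, hE']

end HenselCorrection

section MatrixCounts

open Matrix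

/-- The positions on and above the diagonal, i.e. the free entries of a symmetric matrix. -/
abbrev UpperIndex (n : ℕ) : Type := {q : Fin n × Fin n // q.1 ≤ q.2}

theorem prod_upperIndex {M : Type*} [CommMonoid M] {n : ℕ} (g : Fin n → M) :
    ∏ q : UpperIndex n, (g q.1.1 * g q.1.2) = ∏ i, g i ^ (n + 1) := by
  have hprod (f : Fin n × Fin n → M) : ∏ q : UpperIndex n, f q.1 =
      ∏ i, ∏ j, if i ≤ j then f (i, j) else 1 := by
    rw [← Fintype.prod_prod_type' (fun i j => if i ≤ j then f (i, j) else 1), ← Finset.prod_filter]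
    exact (Finset.prod_subtype _ (by simp) f).symm
  rw [Finset.prod_mul_distrib, hprod (fun q => g q.1), hprod (fun q => g q.2), mul_comm,
    Finset.prod_comm, ← Finset.prod_mul_distrib]
  refine Finset.prod_congr rfl fun i _ => ?_
  simp only [← Finset.prod_filter, Finset.prod_const, ← pow_add, Finset.filter_ge_eq_Iic,
    Finset.filter_le_eq_Ici, Fin.card_Iic, Fin.card_Ici]
  congr 1
  omega

theorem card_upperIndex (n : ℕ) : Fintype.card (UpperIndex n) = n * (n + 1) / 2 := by
  have h := congrArg Multiplicative.toAdd (prod_upperIndex fun _ : Fin n => Multiplicative.ofAdd 1)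
  simp only [← ofAdd_add, Finset.prod_const, toAdd_pow, toAdd_ofAdd, smul_eq_mul, Finset.card_univ,
    Fintype.card_fin, mul_one] at h
  omega

theorem natCard_symm_mem {A : Type*} {n : ℕ} (S : Fin n → Fin n → A → Prop)
    (hS : ∀ i j, S i j = S j i) :
    Nat.card {E : Matrix (Fin n) (Fin n) A // E.IsSymm ∧ ∀ i j, S i j (E i j)} =
      ∏ q : UpperIndex n, Nat.card {x // S q.1.1 q.1.2 x} := by
  rw [← Nat.card_pi]
  refine Nat.card_congr
    { toFun := fun E q => ⟨E.1 q.1.1 q.1.2, E.2.2 _ _⟩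
      invFun := fun f => ⟨Matrix.of fun i j => if h : i ≤ j then (f ⟨(i, j), h⟩ : A) else
        f ⟨(j, i), (le_total i j).resolve_left h⟩, ?_, ?_⟩
      left_inv := ?_
      right_inv := ?_ }
  · ext i j
    rcases lt_trichotomy i j with h | h | h
    · simp [h.le, h.not_ge]
    · simp [h]
    · simp [h.le, h.not_ge]
  · intro i j
    by_cases h : i ≤ j
    · simpa [h] using (f ⟨(i, j), h⟩).2
    · simpa [h, hS i j] using (f ⟨(j, i), (le_total i j).resolve_left h⟩).2
  · rintro ⟨E, hE, -⟩
    ext i j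
    by_cases h : i ≤ j
    · simp [h]
    · simpa [h] using hE.apply i j
  · intro f
    ext q
    simp [q.2]

theorem natCard_symm_forall_mem {A : Type*} (n : ℕ) (S : A → Prop) :
    Nat.card {E : Matrix (Fin n) (Fin n) A // E.IsSymm ∧ ∀ i j, S (E i j)} =
      Nat.card {x // S x} ^ (n * (n + 1) / 2) := by
  rw [natCard_symm_mem (fun _ _ => S) fun _ _ => rfl, Finset.prod_const, Finset.card_univ,
    card_upperIndex]

theorem natCard_matrix_mem {A m n : Type*} [Fintype m] [Fintype n] (S : m → n → A → Prop) :
    Nat.card {E : Matrix m n A // ∀ i j, S i j (E i j)} =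
      ∏ i, ∏ j, Nat.card {x // S i j x} := by
  let e : {E : Matrix m n A // ∀ i j, S i j (E i j)} ≃ (∀ i j, {x // S i j x}) :=
    Equiv.subtypePiEquivPi.trans (Equiv.piCongrRight fun _ => Equiv.subtypePiEquivPi)
  simp only [Nat.card_congr e, Nat.card_pi]

theorem natCard_matrix_forall_mem {A : Type*} (m n : Type*) [Fintype m] [Fintype n]
    (S : A → Prop) :
    Nat.card {E : Matrix m n A // ∀ i j, S (E i j)} =
      Nat.card {x // S x} ^ (Fintype.card m * Fintype.card n) := by
  simp only [natCard_matrix_mem fun _ _ => S, Finset.prod_const, Finset.card_univ, ← pow_mul,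
    mul_comm (Fintype.card m)]

variable {A : Type*} [CommRing A]

theorem natCard_range_smul (m n : Type*) [Fintype m] [Fintype n] (c : A) :
    Nat.card (Set.range fun K : Matrix m n A => c • K) =
      Nat.card {x : A // c ∣ x} ^ (Fintype.card m * Fintype.card n) := by
  rw [← natCard_matrix_forall_mem m n fun x : A => c ∣ x]
  refine Nat.card_congr (Equiv.subtypeEquivRight fun M => ⟨?_, fun h => ?_⟩)
  · rintro ⟨K, rfl⟩ i j
    exact ⟨K i j, rfl⟩
  · choose K hK using h
    exact ⟨Matrix.of K, by ext i j; exact (hK i j).symm⟩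

theorem natCard_range_smul_symm (n : ℕ) (c : A) :
    Nat.card (Set.range fun Y : {Y : Matrix (Fin n) (Fin n) A // Y.IsSymm} => c • Y.1) =
      Nat.card {x : A // c ∣ x} ^ (n * (n + 1) / 2) := by
  rw [← natCard_symm_forall_mem n fun x : A => c ∣ x]
  refine Nat.card_congr (Equiv.subtypeEquivRight fun M => ⟨?_, fun h => ?_⟩)
  · rintro ⟨Y, rfl⟩
    exact ⟨Y.2.smul c, fun i j => ⟨Y.1 i j, rfl⟩⟩
  · obtain ⟨E, hE, rfl⟩ := exists_symm_smul_eq h.1 h.2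
    exact ⟨⟨E, hE⟩, rfl⟩

end MatrixCounts

section GramLifts

open Matrix

variable {A F : Type*} [CommRing A] [Finite A] [CommRing F] {m : Type*} [Fintype m] {n : ℕ}

theorem pow_natCard_dvd_le [DecidableEq m] {ϖ : A} (hϖ : IsNilpotent ϖ) {γ : Matrix m m A}
    (hγ : γ.IsSymm) {P : Matrix m (Fin n) A} (hP : IsPrimitiveFrame P)
    {T : Matrix (Fin n) (Fin n) A} (hT : T.IsSymm)
    (hTP : ∀ i j, 4 * γ.det ^ 2 * ϖ ∣ (T - gramMatrix γ P) i j) :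
    Nat.card {x : A // 4 * γ.det ^ 2 * ϖ ∣ x} ^ (Fintype.card m * n) ≤
      Nat.card {Q // (∃ X, Q = P + (2 * γ.det * ϖ) • X) ∧ gramMatrix γ Q = T} *
        Nat.card {x : A // 2 * γ.det * ϖ ∣ x} ^ (n * (n + 1) / 2) := by
  obtain ⟨R, hRP⟩ := hP
  obtain ⟨E, hE, hTE⟩ := exists_symm_smul_eq (hT.sub (isSymm_gramMatrix hγ P)) hTP
  rw [sub_eq_iff_eq_add'] at hTE
  have hB : Pᵀ * γ * (γ.adjugate * Rᵀ) = γ.det • 1 := by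
    rw [Matrix.mul_assoc, ← Matrix.mul_assoc γ, mul_adjugate, Matrix.smul_mul,
      Matrix.mul_smul, Matrix.one_mul, ← transpose_mul, hRP, transpose_one]
  choose Y hYs hY using fun K => exists_gramMatrix_eq_add_smul hϖ hγ hB K hE
  have hrange := natCard_range_smul m (Fin n) (4 * γ.det ^ 2 * ϖ)
  rw [Fintype.card_fin] at hrange
  rw [← hrange, ← natCard_range_smul_symm, ← Nat.card_prod]
  choose K hK using fun M : Set.range fun K : Matrix m (Fin n) A => (4 * γ.det ^ 2 * ϖ) • K => M.2
  refine Nat.card_le_card_of_injective (fun M =>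
    (⟨⟨P + (2 * γ.det * ϖ) • ((2 * γ.det) • K M + γ.adjugate * Rᵀ * Y (K M)), ⟨_, rfl⟩,
      (hY _).trans hTE.symm⟩, ⟨_, ⟨⟨Y (K M), hYs _⟩, rfl⟩⟩⟩ : _ × _)) fun M M' hMM' => ?_
  obtain ⟨hQ, hYY⟩ := Prod.ext_iff.mp hMM'
  replace hQ := congrArg Subtype.val hQ
  replace hYY := congrArg Subtype.val hYY
  dsimp only at hQ hYY
  have hsmul : 2 * γ.det * ϖ * (2 * γ.det) = 4 * γ.det ^ 2 * ϖ := by ring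
  rw [add_right_inj, smul_add, smul_add, ← Matrix.mul_smul, ← Matrix.mul_smul, hYY,
    add_left_inj, smul_smul, smul_smul, hsmul] at hQ
  exact Subtype.ext ((hK M).symm.trans (hQ.trans (hK M')))

variable {π : A →+* F} {ϖ : A}

omit [Finite A] in
theorem matrix_map_eq_iff_forall_dvd (hker : ∀ x, π x = 0 ↔ ϖ ∣ x) {m n : Type*}
    {X Y : Matrix m n A} : X.map π = Y.map π ↔ ∀ i j, ϖ ∣ (X - Y) i j := by
  simp only [← Matrix.ext_iff, Matrix.map_apply, Matrix.sub_apply, ← hker, map_sub, sub_eq_zero]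

omit [Finite A] in
theorem natCard_matrix_lifts (hker : ∀ x, π x = 0 ↔ ϖ ∣ x) (Q : Matrix m (Fin n) A) :
    Nat.card {Q' : Matrix m (Fin n) A // Q'.map π = Q.map π} =
      Nat.card {x : A // ϖ ∣ x} ^ (Fintype.card m * n) := by
  conv_rhs => rw [← Fintype.card_fin n, ← natCard_matrix_forall_mem m (Fin n) fun x : A => ϖ ∣ x]
  exact Nat.card_congr ((Equiv.subRight Q).subtypeEquiv fun Q' => matrix_map_eq_iff_forall_dvd hker)

omit [Finite A] in
theorem natCard_symm_matrix_lifts (hker : ∀ x, π x = 0 ↔ ϖ ∣ x) {T : Matrix (Fin n) (Fin n) A}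
    (hT : T.IsSymm) :
    Nat.card {T' : Matrix (Fin n) (Fin n) A // T'.IsSymm ∧ T'.map π = T.map π} =
      Nat.card {x : A // ϖ ∣ x} ^ (n * (n + 1) / 2) := by
  rw [← natCard_symm_forall_mem n fun x : A => ϖ ∣ x]
  refine Nat.card_congr ((Equiv.subRight T).subtypeEquiv fun T' =>
    and_congr ⟨fun hT' => hT'.sub hT, fun h => ?_⟩ (matrix_map_eq_iff_forall_dvd hker))
  simpa only [Equiv.subRight_apply, sub_add_cancel] using h.add hT

variable [DecidableEq m]

theorem pow_le_natCard_gramMatrix_lifts (hϖ : IsNilpotent ϖ) (hker : ∀ x, π x = 0 ↔ ϖ ∣ x)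
    {γ : Matrix m m A} (hγ : γ.IsSymm) (hδ : IsUnit (2 * γ.det))
    {P : Matrix m (Fin n) A} (hP : IsPrimitiveFrame P) {T : Matrix (Fin n) (Fin n) A}
    (hT : T.IsSymm) (hTP : T.map π = (gramMatrix γ P).map π) :
    Nat.card {x : A // ϖ ∣ x} ^ (Fintype.card m * n) ≤
      Nat.card {Q // Q.map π = P.map π ∧ gramMatrix γ Q = T} *
        Nat.card {x : A // ϖ ∣ x} ^ (n * (n + 1) / 2) := by
  have hu4 : IsUnit (4 * γ.det ^ 2) := by convert hδ.pow 2 using 1; ring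
  have h := pow_natCard_dvd_le hϖ hγ hP hT fun i j =>
    hu4.mul_left_dvd.mpr ((matrix_map_eq_iff_forall_dvd hker).mp hTP i j)
  simp only [hu4.mul_left_dvd, hδ.mul_left_dvd] at h
  refine h.trans (Nat.mul_le_mul_right _ (Nat.card_mono (Set.toFinite _) ?_))
  rintro _ ⟨⟨X, rfl⟩, hX⟩
  refine ⟨(matrix_map_eq_iff_forall_dvd hker).mpr fun i j => ?_, hX⟩
  rw [add_sub_cancel_left]
  exact (dvd_mul_left _ _).trans (dvd_mul_right _ _)

theorem natCard_gramMatrix_lifts_mul_pow (hϖ : IsNilpotent ϖ) (hker : ∀ x, π x = 0 ↔ ϖ ∣ x)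
    {γ : Matrix m m A} (hγ : γ.IsSymm) (hδ : IsUnit (2 * γ.det)) {P : Matrix m (Fin n) A}
    (hP : IsPrimitiveFrame P) {T : Matrix (Fin n) (Fin n) A} (hT : T.IsSymm)
    (hTP : T.map π = (gramMatrix γ P).map π) :
    Nat.card {Q // Q.map π = P.map π ∧ gramMatrix γ Q = T} *
        Nat.card {x : A // ϖ ∣ x} ^ (n * (n + 1) / 2) =
      Nat.card {x : A // ϖ ∣ x} ^ (Fintype.card m * n) := by
  classical
  let 𝒬 := {Q : Matrix m (Fin n) A // Q.map π = P.map π}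
  let 𝒯 := {T' : Matrix (Fin n) (Fin n) A // T'.IsSymm ∧ T'.map π = T.map π}
  let g : 𝒬 → 𝒯 := fun Q => ⟨gramMatrix γ Q.1, isSymm_gramMatrix hγ Q.1, by
    rw [hTP, ← gramMatrix_map, ← gramMatrix_map, Q.2]⟩
  have hfiber (T' : 𝒯) : Nat.card {Q // g Q = T'} =
      Nat.card {Q // Q.map π = P.map π ∧ gramMatrix γ Q = T'.1} :=
    Nat.card_congr ((Equiv.subtypeEquivRight fun _ => Subtype.ext_iff).trans
      (Equiv.subtypeSubtypeEquivSubtypeInter _ fun Q => gramMatrix γ Q = T'.1))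
  have hle (T' : 𝒯) : Nat.card {x : A // ϖ ∣ x} ^ (Fintype.card m * n) ≤
      Nat.card {Q // g Q = T'} * Nat.card {x : A // ϖ ∣ x} ^ (n * (n + 1) / 2) := by
    rw [hfiber]
    exact pow_le_natCard_gramMatrix_lifts hϖ hker hγ hδ hP T'.2.1 (T'.2.2.trans hTP)
  have : Fintype 𝒯 := Fintype.ofFinite _
  have hsum : ∑ _T : 𝒯, Nat.card {x : A // ϖ ∣ x} ^ (Fintype.card m * n) =
      ∑ T' : 𝒯, Nat.card {Q // g Q = T'} * Nat.card {x : A // ϖ ∣ x} ^ (n * (n + 1) / 2) := by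
    rw [← Finset.sum_mul, sum_natCard_fiber g, natCard_matrix_lifts hker, Finset.sum_const,
      Finset.card_univ, ← Nat.card_eq_fintype_card, natCard_symm_matrix_lifts hker hT, smul_eq_mul,
      mul_comm]
  have heq := (Finset.sum_eq_sum_iff_of_le fun T' _ => hle T').mp hsum ⟨T, hT, rfl⟩
    (Finset.mem_univ _)
  rw [heq, hfiber]

omit [Finite A] in
theorem isLocalHom_of_isNilpotent (hπ : Function.Surjective π) (hϖ : IsNilpotent ϖ)
    (hker : ∀ x, π x = 0 ↔ ϖ ∣ x) : IsLocalHom π where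
  map_nonunit a ha := by
    obtain ⟨b, hb⟩ := hπ ↑ha.unit⁻¹
    have hab : π (a * b - 1) = 0 := by
      rw [map_sub, map_mul, hb, map_one, IsUnit.mul_val_inv, sub_self]
    obtain ⟨c, hc⟩ := (hker _).mp hab
    have hunit : IsUnit (a * b) := by
      rw [sub_eq_iff_eq_add.mp hc]
      exact (Commute.isNilpotent_mul_right (Commute.all ϖ c) hϖ).isUnit_add_one
    exact isUnit_of_mul_isUnit_left hunit

theorem natCard_primitiveGramRepresentation_mul_pow (hπ : Function.Surjective π)
    (hϖ : IsNilpotent ϖ) (hker : ∀ x, π x = 0 ↔ ϖ ∣ x) {γ : Matrix m m A} (hγ : γ.IsSymm)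
    (hδ : IsUnit (2 * γ.det)) {T : Matrix (Fin n) (Fin n) A} (hT : T.IsSymm) :
    Nat.card (PrimitiveGramRepresentation γ T) * Nat.card {x : A // ϖ ∣ x} ^ (n * (n + 1) / 2) =
      Nat.card (PrimitiveGramRepresentation (γ.map π) (T.map π)) *
        Nat.card {x : A // ϖ ∣ x} ^ (Fintype.card m * n) := by
  have := isLocalHom_of_isNilpotent hπ hϖ hker
  have := Finite.of_surjective π hπ
  let f : PrimitiveGramRepresentation γ T → PrimitiveGramRepresentation (γ.map π) (T.map π) :=
    fun Q => ⟨Q.1.map π, Q.2.1.map π, by rw [gramMatrix_map, Q.2.2]⟩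
  have : Fintype (PrimitiveGramRepresentation (γ.map π) (T.map π)) := Fintype.ofFinite _
  rw [← sum_natCard_fiber f, Finset.sum_mul,
    Nat.card_eq_fintype_card (α := PrimitiveGramRepresentation (γ.map π) (T.map π))]
  refine Finset.sum_eq_card_nsmul fun Q₀ _ => ?_
  obtain ⟨P, hPQ₀⟩ := exists_matrix_map_eq hπ Q₀.1
  have hP : IsPrimitiveFrame P := isPrimitiveFrame_of_map hπ (hPQ₀ ▸ Q₀.2.1)
  rw [← natCard_gramMatrix_lifts_mul_pow hϖ hker hγ hδ hP hT
    (by rw [← gramMatrix_map, hPQ₀, Q₀.2.2])]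
  congr 1
  refine Nat.card_congr ((Equiv.subtypeEquivRight fun Q => Subtype.ext_iff).trans
    ((Equiv.subtypeSubtypeEquivSubtypeInter _
      fun Q : Matrix m (Fin n) A => Q.map π = Q₀.1).trans
      (Equiv.subtypeEquivRight fun Q => ?_)))
  rw [← hPQ₀, and_comm, and_congr_right_iff]
  exact fun hQ => and_iff_right (isPrimitiveFrame_of_map hπ (hQ ▸ hP.map π))

end GramLifts

section ZModCounts

open Matrix

theorem natCard_zmod_mul_eq_zero (M d : ℕ) [NeZero M] :
    Nat.card {x : ZMod M // (d : ZMod M) * x = 0} = M.gcd d := by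
  have h := IsAddCyclic.card_nsmulAddMonoidHom_ker (G := ZMod M) d
  rw [Nat.card_zmod] at h
  rw [← h]
  exact Nat.card_congr (Equiv.subtypeEquivRight fun x => by
    simp [AddMonoidHom.mem_ker, nsmul_eq_mul])

theorem natCard_zmod_dvd (M d : ℕ) [NeZero M] :
    Nat.card {x : ZMod M // (d : ZMod M) ∣ x} = M / M.gcd d := by
  have h := IsAddCyclic.card_nsmulAddMonoidHom_range (G := ZMod M) d
  rw [Nat.card_zmod] at h
  rw [← h]
  exact Nat.card_congr (Equiv.subtypeEquivRight fun x => by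
    simp [AddMonoidHom.mem_range, dvd_def, eq_comm])

theorem zmod_castHom_eq_zero_iff {p r : ℕ} (hr : r ≠ 0) (x : ZMod (p ^ r)) :
    ZMod.castHom (dvd_pow_self p hr) (ZMod p) x = 0 ↔ (p : ZMod (p ^ r)) ∣ x := by
  obtain ⟨x, rfl⟩ := ZMod.intCast_surjective x
  rw [map_intCast, ZMod.intCast_zmod_eq_zero_iff_dvd]
  constructor
  · rintro ⟨y, rfl⟩
    exact ⟨y, by push_cast; rfl⟩
  · rintro ⟨y, hy⟩
    obtain ⟨y, rfl⟩ := ZMod.intCast_surjective y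
    have hxy : ((p ^ r : ℕ) : ℤ) ∣ x - p * y := by
      rw [← ZMod.intCast_zmod_eq_zero_iff_dvd]
      push_cast
      rw [hy, sub_self]
    rw [Nat.cast_pow] at hxy
    exact (dvd_sub_left (dvd_mul_right _ _)).mp ((dvd_pow_self (p : ℤ) hr).trans hxy)

theorem isNilpotent_zmod_prime_pow (p r : ℕ) : IsNilpotent (p : ZMod (p ^ r)) :=
  ⟨r, by exact_mod_cast ZMod.natCast_self (p ^ r)⟩

/-- Entrywise reduction of an integer matrix modulo `M`. -/
abbrev reduceMod {m n : Type*} (M : ℕ) (X : Matrix m n ℤ) : Matrix m n (ZMod M) :=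
  X.map (Int.castRingHom (ZMod M))

theorem det_reduceMod {m : Type*} [Fintype m] [DecidableEq m] (M : ℕ) (X : Matrix m m ℤ) :
    (reduceMod M X).det = X.det :=
  ((Int.castRingHom (ZMod M)).map_det X).symm

theorem reduceMod_map_castHom {m n : Type*} {M N : ℕ} (h : M ∣ N) (X : Matrix m n ℤ) :
    (reduceMod N X).map (ZMod.castHom h (ZMod M)) = reduceMod M X := by
  ext i j
  simp

variable {p : ℕ} [Fact p.Prime] {r : ℕ}

theorem natCard_zmod_prime_pow_dvd (hr : r ≠ 0) :
    Nat.card {x : ZMod (p ^ r) // (p : ZMod (p ^ r)) ∣ x} = p ^ (r - 1) := by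
  rw [natCard_zmod_dvd, Nat.gcd_eq_right (dvd_pow_self p hr)]
  exact Nat.div_eq_of_eq_mul_left (Fact.out : p.Prime).pos (pow_sub_one_mul hr p).symm

theorem isUnit_intCast_zmod_prime_pow {a : ℤ} (ha : ¬ (p : ℤ) ∣ a) :
    IsUnit (a : ZMod (p ^ r)) := by
  rw [ZMod.coe_int_isUnit_iff_isCoprime, Nat.cast_pow]
  exact ((Nat.prime_iff_prime_int.mp Fact.out).coprime_iff_not_dvd.mpr ha).pow_left

theorem ringChar_zmod_ne_two {d : ℤ} (hpd : ¬ (p : ℤ) ∣ 2 * d) : ringChar (ZMod p) ≠ 2 := by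
  rw [ZMod.ringChar_zmod_n]
  rintro rfl
  exact hpd (dvd_mul_right _ _)

theorem det_reduceMod_ne_zero {m : Type*} [Fintype m] [DecidableEq m] {X : Matrix m m ℤ}
    (hX : ¬ (p : ℤ) ∣ X.det) : (reduceMod p X).det ≠ 0 := by
  rwa [det_reduceMod, Ne, ZMod.intCast_zmod_eq_zero_iff_dvd]

variable {k : ℕ} {γ : Matrix (Fin (k + 3)) (Fin (k + 3)) ℤ}

theorem mul_eq_mul_div_two_add (k : ℕ) :
    (k + 3) * (k + 2) = (k + 2) * (k + 3) / 2 + (k + 2) * (k + 3) / 2 := by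
  have heven : Even ((k + 2) * (k + 3)) := Nat.even_mul_succ_self (k + 2)
  rw [mul_comm, ← mul_two, Nat.div_mul_cancel heven.two_dvd]

theorem natCard_primitiveGramRepresentation_zmod_prime_pow (hγ : γ.IsSymm)
    (hpδ : ¬ (p : ℤ) ∣ 2 * γ.det) (hr : r ≠ 0)
    {T : Matrix (Fin (k + 2)) (Fin (k + 2)) (ZMod (p ^ r))} (hT : T.IsSymm) :
    Nat.card (PrimitiveGramRepresentation (reduceMod (p ^ r) γ) T) =
      Nat.card (PrimitiveGramRepresentation (reduceMod p γ)
        (T.map (ZMod.castHom (dvd_pow_self p hr) (ZMod p)))) *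
        p ^ ((r - 1) * ((k + 2) * (k + 3) / 2)) := by
  have hδ : IsUnit (2 * (reduceMod (p ^ r) γ).det) := by
    rw [det_reduceMod]
    exact_mod_cast isUnit_intCast_zmod_prime_pow hpδ
  have h := natCard_primitiveGramRepresentation_mul_pow
    (ZMod.castHom_surjective (dvd_pow_self p hr)) (isNilpotent_zmod_prime_pow p r)
    (zmod_castHom_eq_zero_iff hr) (hγ.map _) hδ hT
  rw [natCard_zmod_prime_pow_dvd hr, Fintype.card_fin, mul_eq_mul_div_two_add, pow_add,
    ← mul_assoc, reduceMod_map_castHom] at h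
  rw [pow_mul]
  exact Nat.eq_of_mul_eq_mul_right (pow_pos (pow_pos (Fact.out : p.Prime).pos _) _) h

theorem le_natCard_primitiveGramRepresentation_of_not_dvd (hγ : γ.IsSymm)
    (hpδ : ¬ (p : ℤ) ∣ 2 * γ.det) (hr : r ≠ 0)
    {P : Matrix (Fin (k + 3)) (Fin (k + 2)) ℤ} (hP : IsPrimitiveFrame P)
    {T : Matrix (Fin (k + 2)) (Fin (k + 2)) (ZMod (p ^ r))} (hT : T.IsSymm)
    (hTP : ∀ i j, (p : ZMod (p ^ r)) ∣ (T - reduceMod (p ^ r) (gramMatrix γ P)) i j) :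
    (if (p : ℤ) ∣ (gramMatrix γ P).det then 2 else 1) * (1 - ((p : ℝ) ^ 2)⁻¹) ^ (k + 1) *
        (p : ℝ) ^ (r * ((k + 2) * (k + 3) / 2)) ≤
      Nat.card (PrimitiveGramRepresentation (reduceMod (p ^ r) γ) T) := by
  have hTπ : T.map (ZMod.castHom (dvd_pow_self p hr) (ZMod p)) =
      gramMatrix (reduceMod p γ) (reduceMod p P) := by
    rw [(matrix_map_eq_iff_forall_dvd (zmod_castHom_eq_zero_iff hr)).mpr hTP,
      reduceMod_map_castHom, gramMatrix_map]
  have h := (natCard_primitiveGramRepresentation_mem_Icc (ringChar_zmod_ne_two hpδ) (hγ.map _)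
    (det_reduceMod_ne_zero fun h => hpδ (h.mul_left 2)) (hP.map (Int.castRingHom _))).1
  rw [natCard_primitiveGramRepresentation_zmod_prime_pow hγ hpδ hr hT, hTπ, Nat.cast_mul,
    Nat.cast_pow]
  simp only [gramMatrix_map, det_reduceMod, ZMod.intCast_zmod_eq_zero_iff_dvd, ZMod.card] at h ⊢
  refine (le_of_eq ?_).trans (mul_le_mul_of_nonneg_right h (by positivity))
  rw [← Nat.sub_one_add_one hr, add_one_mul, pow_add, Nat.add_sub_cancel]
  ring

theorem natCard_gramRepresentation_reduceMod_le (hγ : γ.IsSymm) (hpδ : ¬ (p : ℤ) ∣ 2 * γ.det)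
    (hr : r ≠ 0) {Λ : Matrix (Fin (k + 2)) (Fin (k + 2)) ℤ} (hΛ : Λ.IsSymm)
    (hpΛ : ¬ (p : ℤ) ∣ Λ.det) :
    (Nat.card (GramRepresentation (reduceMod (p ^ r) γ) (reduceMod (p ^ r) Λ)) : ℝ) ≤
      (1 + ((p : ℝ) ^ 2)⁻¹) ^ (k + 1) * (p : ℝ) ^ (r * ((k + 2) * (k + 3) / 2)) := by
  have hdetΛ : IsUnit (reduceMod (p ^ r) Λ).det := by
    rw [det_reduceMod]
    exact isUnit_intCast_zmod_prime_pow hpΛ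
  have h := natCard_primitiveGramRepresentation_le (ringChar_zmod_ne_two hpδ) (hγ.map _)
    (det_reduceMod_ne_zero fun h => hpδ (h.mul_left 2)) (det_reduceMod_ne_zero hpΛ)
  rw [natCard_gramRepresentation_eq_of_isUnit_det _ hdetΛ,
    natCard_primitiveGramRepresentation_zmod_prime_pow hγ hpδ hr (hΛ.map _),
    reduceMod_map_castHom, Nat.cast_mul, Nat.cast_pow]
  rw [ZMod.card] at h
  refine (mul_le_mul_of_nonneg_right h (by positivity)).trans (le_of_eq ?_)
  rw [← Nat.sub_one_add_one hr, add_one_mul, pow_add, Nat.add_sub_cancel]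
  ring

theorem pow_le_natCard_primitiveGramRepresentation_mul (hγ : γ.IsSymm) (hδ : γ.det ≠ 0)
    {P : Matrix (Fin (k + 3)) (Fin (k + 2)) ℤ} (hP : IsPrimitiveFrame P)
    {T : Matrix (Fin (k + 2)) (Fin (k + 2)) (ZMod (p ^ r))} (hT : T.IsSymm)
    (hTP : ∀ i j, ((4 * γ.det ^ 2 * p : ℤ) : ZMod (p ^ r)) ∣
      (T - reduceMod (p ^ r) (gramMatrix γ P)) i j) :
    p ^ (r * ((k + 2) * (k + 3) / 2)) ≤
      Nat.card (PrimitiveGramRepresentation (reduceMod (p ^ r) γ) T) *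
        (4 * γ.det.natAbs ^ 2 * p) ^ ((k + 3) * (k + 2)) := by
  set s := (k + 2) * (k + 3) / 2
  set d := 4 * γ.det.natAbs ^ 2 * p with hd
  have hp := (Fact.out : p.Prime).pos
  have hd0 : 0 < d := by
    have := Int.natAbs_pos.mpr hδ
    positivity
  have hdcast : (4 * (reduceMod (p ^ r) γ).det ^ 2 * p : ZMod (p ^ r)) = d := by
    have hdZ : (d : ℤ) = 4 * γ.det ^ 2 * p := by simp [hd]
    rw [det_reduceMod, ← Int.cast_natCast d, hdZ]
    push_cast
    rfl
  have key := pow_natCard_dvd_le (isNilpotent_zmod_prime_pow p r)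
    (hγ.map (Int.castRingHom (ZMod (p ^ r)))) (hP.map (Int.castRingHom _)) hT (by
      simpa only [gramMatrix_map, det_reduceMod, Int.cast_mul, Int.cast_pow, Int.cast_ofNat,
        Int.cast_natCast] using hTP)
  rw [hdcast, natCard_zmod_dvd, Fintype.card_fin] at key
  have hprim := natCard_gramMatrix_add_smul_eq_le (reduceMod (p ^ r) γ) T
    (hP.map (Int.castRingHom (ZMod (p ^ r))))
    ((Commute.all (2 * (reduceMod (p ^ r) γ).det) _).isNilpotent_mul_left
      (isNilpotent_zmod_prime_pow p r))
  have hsub : Nat.card {x : ZMod (p ^ r) // 2 * (reduceMod (p ^ r) γ).det * p ∣ x} ≤ p ^ r :=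
    (Nat.card_le_card_of_injective _ Subtype.val_injective).trans_eq (Nat.card_zmod _)
  have hquot : p ^ r ≤ p ^ r / (p ^ r).gcd d * d :=
    (Nat.div_mul_cancel (Nat.gcd_dvd_left _ d)).symm.trans_le
      (Nat.mul_le_mul_left _ (Nat.gcd_le_right _ hd0))
  refine Nat.le_of_mul_le_mul_right (c := (p ^ r) ^ s) ?_ (by positivity)
  calc p ^ (r * s) * (p ^ r) ^ s = (p ^ r) ^ ((k + 3) * (k + 2)) := by
        rw [mul_eq_mul_div_two_add, pow_add, pow_mul]
    _ ≤ (p ^ r / (p ^ r).gcd d) ^ ((k + 3) * (k + 2)) * d ^ ((k + 3) * (k + 2)) := by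
        rw [← mul_pow]
        exact Nat.pow_le_pow_left hquot _
    _ ≤ _ := Nat.mul_le_mul_right _
        (key.trans (Nat.mul_le_mul hprim (Nat.pow_le_pow_left hsub _)))
    _ = _ := by ring

/-- A lower bound `κ_p` for the local densities of forms of rank `k + 3` and discriminant `δ`;
the factor `2` in the crude bound for `p ∣ 2δ` makes room for a loss of a factor `2` at
ramified primes. -/
noncomputable def localDensityConst (k : ℕ) (δ : ℤ) (p : ℕ) : ℝ :=
  if (p : ℤ) ∣ 2 * δ then ((4 * δ ^ 2 * p : ℝ) ^ ((k + 3) * (k + 2)) * 2)⁻¹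
  else (1 - ((p : ℝ) ^ 2)⁻¹) ^ (k + 1)

omit [Fact p.Prime] in
theorem localDensityConst_pos (k : ℕ) {δ : ℤ} (hδ : δ ≠ 0) (hp : p.Prime) :
    0 < localDensityConst k δ p := by
  have hp1 : (1 : ℝ) < p := by exact_mod_cast hp.one_lt
  have : (δ : ℝ) ≠ 0 := by exact_mod_cast hδ
  rw [localDensityConst]
  split_ifs
  · positivity
  · exact pow_pos (sub_pos.mpr (inv_lt_one_of_one_lt₀ (one_lt_pow₀ hp1 two_ne_zero))) _

theorem localDensityConst_mul_le_natCard_primitiveGramRepresentation (hγ : γ.IsSymm)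
    (hδ : γ.det ≠ 0) (hr : r ≠ 0)
    {P : Matrix (Fin (k + 3)) (Fin (k + 2)) ℤ} (hP : IsPrimitiveFrame P)
    {T : Matrix (Fin (k + 2)) (Fin (k + 2)) (ZMod (p ^ r))} (hT : T.IsSymm)
    (hTP : ∀ i j, ((4 * γ.det ^ 2 * p : ℤ) : ZMod (p ^ r)) ∣
      (T - reduceMod (p ^ r) (gramMatrix γ P)) i j) :
    (if (p : ℤ) ∣ (gramMatrix γ P).det then 2 else 1) * localDensityConst k γ.det p *
        (p : ℝ) ^ (r * ((k + 2) * (k + 3) / 2)) ≤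
      Nat.card (PrimitiveGramRepresentation (reduceMod (p ^ r) γ) T) := by
  by_cases hpδ : (p : ℤ) ∣ 2 * γ.det
  · have h : (p : ℝ) ^ (r * ((k + 2) * (k + 3) / 2)) ≤
        Nat.card (PrimitiveGramRepresentation (reduceMod (p ^ r) γ) T) *
          (4 * γ.det ^ 2 * p : ℝ) ^ ((k + 3) * (k + 2)) := by
      have hd : (4 * γ.det ^ 2 * p : ℝ) = (4 * γ.det.natAbs ^ 2 * p : ℕ) := by
        have hdZ : ((4 * γ.det.natAbs ^ 2 * p : ℕ) : ℤ) = 4 * γ.det ^ 2 * p := by simp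
        rw [← Int.cast_natCast (4 * γ.det.natAbs ^ 2 * p), hdZ]
        simp only [Int.cast_mul, Int.cast_pow, Int.cast_ofNat, Int.cast_natCast]
      rw [hd]
      exact_mod_cast pow_le_natCard_primitiveGramRepresentation_mul hγ hδ hP hT hTP
    have hp0 : (0 : ℝ) < p := by exact_mod_cast (Fact.out : p.Prime).pos
    have : (γ.det : ℝ) ≠ 0 := by exact_mod_cast hδ
    have hfactor : (if (p : ℤ) ∣ (gramMatrix γ P).det then 2 else 1 : ℝ) ≤ 2 := by
      split_ifs <;> norm_num
    rw [localDensityConst, if_pos hpδ, mul_assoc, _root_.mul_inv_rev, mul_assoc]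
    refine (mul_le_mul_of_nonneg_right hfactor (by positivity)).trans ?_
    rwa [mul_inv_cancel_left₀ two_ne_zero, inv_mul_le_iff₀' (by positivity)]
  · rw [localDensityConst, if_neg hpδ]
    refine le_natCard_primitiveGramRepresentation_of_not_dvd hγ hpδ hr hP hT fun i j =>
      dvd_trans ?_ (hTP i j)
    push_cast
    exact dvd_mul_left _ _

end ZModCounts

section RowClasses

open Matrix

/-- Two matrices over a ring are row equivalent when each is a left multiple of the other, that is,
when their rows span the same module. -/
def RowEquiv {m n A : Type*} [Fintype m] [Semiring A] (L L' : Matrix m n A) : Prop :=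
  (∃ X : Matrix m m A, L = X * L') ∧ ∃ Y : Matrix m m A, L' = Y * L

variable {A : Type*} [CommRing A] {m n : Type*} [Fintype m]

theorem RowEquiv.symm {L L' : Matrix m n A} (h : RowEquiv L L') : RowEquiv L' L :=
  And.symm h

theorem RowEquiv.trans {L L' L'' : Matrix m n A} (h : RowEquiv L L') (h' : RowEquiv L' L'') :
    RowEquiv L L'' := by
  obtain ⟨⟨X, rfl⟩, Y, hY⟩ := h
  obtain ⟨⟨X', rfl⟩, Y', hY'⟩ := h'
  exact ⟨⟨X * X', (Matrix.mul_assoc _ _ _).symm⟩, ⟨Y' * Y, by rw [Matrix.mul_assoc, ← hY, ← hY']⟩⟩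

/-- The matrices row equivalent to `L₀` with the same Gram matrix as `L₀`. -/
abbrev GramRowClass (γ : Matrix m m A) (L₀ : Matrix m n A) : Type _ :=
  {L : Matrix m n A // RowEquiv L L₀ ∧ gramMatrix γ L = gramMatrix γ L₀}

variable [Fintype n] [DecidableEq n]

theorem IsPrimitiveFrame.rowEquiv_mul {l : Type*} {P Q : Matrix m n A} (hP : IsPrimitiveFrame P)
    (hQ : IsPrimitiveFrame Q) (X : Matrix n l A) : RowEquiv (Q * X) (P * X) := by
  obtain ⟨R, hR⟩ := hP
  obtain ⟨S, hS⟩ := hQ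
  refine ⟨⟨Q * R, ?_⟩, ⟨P * S, ?_⟩⟩
  · rw [Matrix.mul_assoc, ← Matrix.mul_assoc R, hR, Matrix.one_mul]
  · rw [Matrix.mul_assoc, ← Matrix.mul_assoc S, hS, Matrix.one_mul]

theorem natCard_le_mul_of_natCard_fiber_le {X Y : Type*} [Finite X] [Finite Y] (f : X → Y)
    {N : ℕ} (hN : ∀ y, Nat.card {x // f x = y} ≤ N) : Nat.card X ≤ Nat.card Y * N := by
  have := Fintype.ofFinite Y
  rw [← sum_natCard_fiber f, Nat.card_eq_fintype_card (α := Y)]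
  exact Finset.sum_le_card_nsmul _ _ _ fun y _ => hN y

theorem gramMatrix_diagonal (E : Matrix n n A) (d : n → A) (i j : n) :
    gramMatrix E (diagonal d) i j = d i * d j * E i j := by
  rw [gramMatrix, diagonal_transpose, mul_diagonal, diagonal_mul, mul_right_comm]

theorem natCard_mul_diagonal_eq_zero (m : Type*) [Fintype m] (d : n → A) :
    Nat.card {Z : Matrix m n A // Z * diagonal d = 0} =
      ∏ j, Nat.card {x // d j * x = 0} ^ Fintype.card m := by
  simp only [← Matrix.ext_iff, mul_diagonal, Matrix.zero_apply, mul_comm _ (d _)]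
  rw [natCard_matrix_mem fun _ j x => d j * x = 0, Finset.prod_comm]
  simp only [Finset.prod_const, Finset.card_univ]

theorem natCard_symm_gramMatrix_diagonal_eq_zero {n : ℕ} (d : Fin n → A) :
    Nat.card {E : Matrix (Fin n) (Fin n) A // E.IsSymm ∧ gramMatrix E (diagonal d) = 0} =
      ∏ q : UpperIndex n, Nat.card {x // d q.1.1 * d q.1.2 * x = 0} := by
  simp only [← Matrix.ext_iff, gramMatrix_diagonal, Matrix.zero_apply]
  exact natCard_symm_mem (fun i j x => d i * d j * x = 0) fun i j => by rw [mul_comm (d i)]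

variable [Finite A] {γ : Matrix m m A} {P : Matrix m n A}

theorem natCard_isPrimitiveFrame_le_mul_natCard_gramRowClass (hP : IsPrimitiveFrame P)
    (D : Matrix n n A) {W : Matrix n n A} (hW : IsUnit W) :
    Nat.card {Q : Matrix m n A //
        IsPrimitiveFrame Q ∧ gramMatrix γ (Q * D) = gramMatrix γ (P * D)} ≤
      Nat.card (GramRowClass γ (P * D * W)) * Nat.card {Z : Matrix m n A // Z * D = 0} := by
  let f (Q : {Q : Matrix m n A //
      IsPrimitiveFrame Q ∧ gramMatrix γ (Q * D) = gramMatrix γ (P * D)}) :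
      GramRowClass γ (P * D * W) :=
    ⟨Q.1 * D * W, by simpa only [Matrix.mul_assoc] using hP.rowEquiv_mul Q.2.1 (D * W), by
      rw [gramMatrix_mul, Q.2.2, ← gramMatrix_mul]⟩
  refine natCard_le_mul_of_natCard_fiber_le f fun L => ?_
  rcases isEmpty_or_nonempty {Q // f Q = L} with hempty | ⟨Q₀, hQ₀⟩
  · rw [Nat.card_of_isEmpty]
    exact Nat.zero_le _
  · refine Nat.card_le_card_of_injective (fun Q => ⟨Q.1.1 - Q₀.1, ?_⟩) fun Q Q' h =>
      Subtype.ext (Subtype.ext (sub_left_injective (congrArg Subtype.val h)))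
    obtain ⟨W', hWW'⟩ := hW.exists_right_inv
    have hQ : Q.1.1 * D * W = Q₀.1 * D * W := congrArg Subtype.val (Q.2.trans hQ₀.symm)
    replace hQ := congrArg (· * W') hQ
    simp only [Matrix.mul_assoc, hWW', Matrix.mul_one] at hQ
    rw [Matrix.sub_mul, hQ, sub_self]

theorem sum_natCard_primitiveGramRepresentation (hγ : γ.IsSymm) (P : Matrix m n A)
    (D : Matrix n n A) [Fintype {E : Matrix n n A // E.IsSymm ∧ gramMatrix E D = 0}] :
    ∑ E : {E : Matrix n n A // E.IsSymm ∧ gramMatrix E D = 0},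
        Nat.card (PrimitiveGramRepresentation γ (gramMatrix γ P + E.1)) =
      Nat.card {Q : Matrix m n A //
        IsPrimitiveFrame Q ∧ gramMatrix γ (Q * D) = gramMatrix γ (P * D)} := by
  have hgram (Q : Matrix m n A) : gramMatrix γ (Q * D) = gramMatrix γ (P * D) ↔
      gramMatrix (gramMatrix γ Q - gramMatrix γ P) D = 0 := by
    rw [gramMatrix_mul, gramMatrix_mul, ← sub_eq_zero]
    simp only [gramMatrix, Matrix.mul_sub, Matrix.sub_mul]
  let f (Q : {Q : Matrix m n A //
      IsPrimitiveFrame Q ∧ gramMatrix γ (Q * D) = gramMatrix γ (P * D)}) :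
      {E : Matrix n n A // E.IsSymm ∧ gramMatrix E D = 0} :=
    ⟨gramMatrix γ Q.1 - gramMatrix γ P,
      (isSymm_gramMatrix hγ _).sub (isSymm_gramMatrix hγ _), (hgram Q.1).mp Q.2.2⟩
  rw [← sum_natCard_fiber f]
  refine Finset.sum_congr rfl fun E _ => Nat.card_congr
    { toFun := fun Q => ⟨⟨Q.1, Q.2.1, ?_⟩, ?_⟩
      invFun := fun Q => ⟨Q.1.1, Q.1.2.1, sub_eq_iff_eq_add'.mp (congrArg Subtype.val Q.2)⟩ }
  · rw [hgram, Q.2.2, add_sub_cancel_left]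
    exact E.2.2
  · exact Subtype.ext (sub_eq_of_eq_add' Q.2.2)

theorem le_natCard_gramRowClass_of_natCard_eq (hγ : γ.IsSymm) (hP : IsPrimitiveFrame P)
    {D W : Matrix n n A} (hW : IsUnit W) (hD : Nat.card {Z : Matrix m n A // Z * D = 0} =
      Nat.card {E : Matrix n n A // E.IsSymm ∧ gramMatrix E D = 0}) {c : ℝ}
    (hc : ∀ E : Matrix n n A, E.IsSymm → gramMatrix E D = 0 →
      c ≤ Nat.card (PrimitiveGramRepresentation γ (gramMatrix γ P + E))) :
    c ≤ Nat.card (GramRowClass γ (P * D * W)) := by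
  have := Fintype.ofFinite {E : Matrix n n A // E.IsSymm ∧ gramMatrix E D = 0}
  have : Nonempty {Z : Matrix m n A // Z * D = 0} := ⟨0, Matrix.zero_mul D⟩
  have hpos : (0 : ℝ) < Nat.card {Z : Matrix m n A // Z * D = 0} := by exact_mod_cast Nat.card_pos
  refine le_of_mul_le_mul_right ?_ hpos
  calc c * Nat.card {Z : Matrix m n A // Z * D = 0}
      = ∑ _E : {E : Matrix n n A // E.IsSymm ∧ gramMatrix E D = 0}, c := by
        rw [hD, Finset.sum_const, nsmul_eq_mul, Finset.card_univ, Nat.card_eq_fintype_card,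
          mul_comm]
    _ ≤ ∑ E : {E : Matrix n n A // E.IsSymm ∧ gramMatrix E D = 0},
        (Nat.card (PrimitiveGramRepresentation γ (gramMatrix γ P + E.1)) : ℝ) :=
      Finset.sum_le_sum fun E _ => hc E.1 E.2.1 E.2.2
    _ ≤ Nat.card (GramRowClass γ (P * D * W)) * Nat.card {Z : Matrix m n A // Z * D = 0} := by
      rw [← Nat.cast_sum, sum_natCard_primitiveGramRepresentation hγ P D]
      exact_mod_cast natCard_isPrimitiveFrame_le_mul_natCard_gramRowClass hP D hW

end RowClasses

section PrimePowerRowClasses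

open Matrix

variable {p : ℕ} [Fact p.Prime]

theorem exists_eq_prime_pow_padicValInt_mul {a : ℤ} (ha : a ≠ 0) :
    ∃ c : ℤ, ¬ (p : ℤ) ∣ c ∧ a = (p : ℤ) ^ padicValInt p a * c := by
  obtain ⟨c, hc⟩ := padicValInt_dvd (p := p) a
  refine ⟨c, ?_, hc⟩
  rintro ⟨b, rfl⟩
  have hdvd : (p : ℤ) ^ (padicValInt p a + 1) ∣ a := ⟨b, by rw [pow_succ, mul_assoc, ← hc]⟩
  have := ((padicValInt_dvd_iff _ a).mp hdvd).resolve_left ha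
  omega

theorem associated_intCast_zmod_prime_pow {a : ℤ} (ha : a ≠ 0) (r : ℕ) :
    Associated (p ^ padicValInt p a : ZMod (p ^ r)) a := by
  obtain ⟨c, hpc, hc⟩ := exists_eq_prime_pow_padicValInt_mul (p := p) ha
  refine ⟨(isUnit_intCast_zmod_prime_pow hpc).unit, ?_⟩
  rw [IsUnit.unit_spec]
  conv_rhs => rw [hc]
  push_cast
  rfl

theorem intCast_mul_eq_zero_iff {a : ℤ} (ha : a ≠ 0) {r : ℕ} (x : ZMod (p ^ r)) :
    (a : ZMod (p ^ r)) * x = 0 ↔ ((p ^ padicValInt p a : ℕ) : ZMod (p ^ r)) * x = 0 := by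
  obtain ⟨u, hu⟩ := associated_intCast_zmod_prime_pow (p := p) ha r
  rw [← hu, mul_right_comm, Units.mul_left_eq_zero, Nat.cast_pow]

theorem natCard_intCast_mul_eq_zero {a : ℤ} (ha : a ≠ 0) {r : ℕ} (hr : padicValInt p a ≤ r) :
    Nat.card {x : ZMod (p ^ r) // (a : ZMod (p ^ r)) * x = 0} = p ^ padicValInt p a := by
  simp only [intCast_mul_eq_zero_iff ha, natCard_zmod_mul_eq_zero]
  exact Nat.gcd_eq_right (pow_dvd_pow p hr)

theorem intCast_dvd_of_mul_eq_zero {a c : ℤ} (ha : a ≠ 0) (hc : c ≠ 0) {r : ℕ}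
    (hr : padicValInt p a + padicValInt p c ≤ r) {x : ZMod (p ^ r)}
    (hx : (a : ZMod (p ^ r)) * x = 0) : (c : ZMod (p ^ r)) ∣ x := by
  rw [← (associated_intCast_zmod_prime_pow hc r).dvd_iff_dvd_left]
  rw [intCast_mul_eq_zero_iff ha] at hx
  obtain ⟨x, rfl⟩ := ZMod.natCast_zmod_surjective x
  rw [← Nat.cast_mul, ZMod.natCast_eq_zero_iff] at hx
  have h : p ^ padicValInt p a * p ^ padicValInt p c ∣ p ^ padicValInt p a * x :=
    (pow_add p _ _).symm.dvd.trans ((pow_dvd_pow p hr).trans hx)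
  have h' := Nat.dvd_of_mul_dvd_mul_left (pow_pos (Fact.out : p.Prime).pos _) h
  exact_mod_cast Nat.cast_dvd_cast (α := ZMod (p ^ r)) h'

theorem natCard_mul_diagonal_eq_natCard_symm {n : ℕ} {a : Fin n → ℤ} (ha : ∀ i, a i ≠ 0) {r : ℕ}
    (hr : ∀ i j, padicValInt p (a i) + padicValInt p (a j) ≤ r) :
    Nat.card {Z : Matrix (Fin (n + 1)) (Fin n) (ZMod (p ^ r)) //
        Z * diagonal (fun i => (a i : ZMod (p ^ r))) = 0} =
      Nat.card {E : Matrix (Fin n) (Fin n) (ZMod (p ^ r)) //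
        E.IsSymm ∧ gramMatrix E (diagonal fun i => (a i : ZMod (p ^ r))) = 0} := by
  rw [natCard_mul_diagonal_eq_zero, natCard_symm_gramMatrix_diagonal_eq_zero, Fintype.card_fin]
  have hcard (i : Fin n) : Nat.card {x : ZMod (p ^ r) // (a i : ZMod (p ^ r)) * x = 0} =
      p ^ padicValInt p (a i) :=
    natCard_intCast_mul_eq_zero (ha i) ((Nat.le_add_right _ _).trans (hr i i))
  have hcard₂ (i j : Fin n) :
      Nat.card {x : ZMod (p ^ r) // (a i : ZMod (p ^ r)) * a j * x = 0} =
        p ^ padicValInt p (a i) * p ^ padicValInt p (a j) := by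
    have hval := padicValInt.mul (p := p) (ha i) (ha j)
    rw [← Int.cast_mul, natCard_intCast_mul_eq_zero (mul_ne_zero (ha i) (ha j))
      (hval.trans_le (hr i j)), hval, pow_add]
  simp only [hcard, hcard₂]
  exact (prod_upperIndex _).symm

variable {k : ℕ} {γ : Matrix (Fin (k + 3)) (Fin (k + 3)) ℤ}

theorem eventually_localDensityConst_mul_le_natCard_gramRowClass (hγ : γ.IsSymm) (hδ : γ.det ≠ 0)
    {P : Matrix (Fin (k + 3)) (Fin (k + 2)) ℤ} (hP : IsPrimitiveFrame P) {a : Fin (k + 2) → ℤ}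
    (ha : ∀ i, a i ≠ 0) {V : Matrix (Fin (k + 2)) (Fin (k + 2)) ℤ} (hV : IsUnit V) :
    ∀ᶠ r : ℕ in Filter.atTop,
      (if (p : ℤ) ∣ (gramMatrix γ P).det then 2 else 1) * localDensityConst k γ.det p *
          (p : ℝ) ^ (r * ((k + 2) * (k + 3) / 2)) ≤
        Nat.card (GramRowClass (reduceMod (p ^ r) γ)
          (reduceMod (p ^ r) (P * diagonal a * V))) := by
  have hc : 4 * γ.det ^ 2 * p ≠ 0 := by
    have hp : (p : ℤ) ≠ 0 := by exact_mod_cast (Fact.out : p.Prime).ne_zero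
    positivity
  have hva (i : Fin (k + 2)) : padicValInt p (a i) ≤ ∑ i, padicValInt p (a i) :=
    Finset.single_le_sum (f := fun i => padicValInt p (a i)) (fun _ _ => Nat.zero_le _)
      (Finset.mem_univ i)
  filter_upwards [Filter.eventually_ge_atTop
    (1 + padicValInt p (4 * γ.det ^ 2 * p) + 2 * ∑ i, padicValInt p (a i))] with r hr
  have hr' (i j : Fin (k + 2)) :
      padicValInt p (a i) + padicValInt p (a j) + padicValInt p (4 * γ.det ^ 2 * p) ≤ r := by
    have := hva i
    have := hva j
    omega
  have hreduce : reduceMod (p ^ r) (P * diagonal a * V) =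
      reduceMod (p ^ r) P * diagonal (fun i => (a i : ZMod (p ^ r))) * reduceMod (p ^ r) V := by
    rw [reduceMod, Matrix.map_mul, Matrix.map_mul, diagonal_map (map_zero _)]
    rfl
  rw [hreduce]
  refine le_natCard_gramRowClass_of_natCard_eq (hγ.map _) (hP.map _)
    (hV.map (Int.castRingHom (ZMod (p ^ r))).mapMatrix)
    (natCard_mul_diagonal_eq_natCard_symm ha fun i j => (Nat.le_add_right _ _).trans (hr' i j))
    fun E hE hED => ?_
  refine localDensityConst_mul_le_natCard_primitiveGramRepresentation hγ hδ (by omega) hP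
    ((isSymm_gramMatrix (hγ.map _) _).add hE) fun i j => ?_
  rw [reduceMod, ← gramMatrix_map, add_sub_cancel_left]
  refine intCast_dvd_of_mul_eq_zero (mul_ne_zero (ha i) (ha j)) hc ?_ ?_
  · rw [padicValInt.mul (ha i) (ha j)]
    exact hr' i j
  · rw [Int.cast_mul]
    exact (gramMatrix_diagonal E _ i j).symm.trans (congrFun₂ hED i j)

end PrimePowerRowClasses

section IntegralFrames

open Matrix Module

variable {R : Type*} [CommRing R] {m n : Type*} [Fintype m]

theorem range_vecMulLinear_le_range_iff {l : Type*} [Fintype l] {L : Matrix m n R}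
    {M : Matrix l n R} :
    LinearMap.range L.vecMulLinear ≤ LinearMap.range M.vecMulLinear ↔
      ∃ X : Matrix m l R, L = X * M := by
  classical
  constructor
  · intro h
    choose x hx using fun i => h ⟨Pi.single i 1, rfl⟩
    exact ⟨Matrix.of x, funext fun i => ((hx i).trans (single_one_vecMul i L)).symm⟩
  · rintro ⟨X, rfl⟩ _ ⟨y, rfl⟩
    exact ⟨y ᵥ* X, vecMul_vecMul y X M⟩

variable [IsDomain R] [Fintype n] [DecidableEq n]

omit [Fintype n] in
theorem finrank_range_vecMulLinear_of_mul_eq_smul_one [Finite n] {L : Matrix m n R}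
    {Z : Matrix n m R} {d : R} (hd : d ≠ 0) (hZ : Z * L = d • 1) :
    finrank R (LinearMap.range L.vecMulLinear) = finrank R (n → R) := by
  have := Fintype.ofFinite n
  refine le_antisymm (Submodule.finrank_le _) ?_
  have hmem (x : n → R) : d • x ∈ LinearMap.range L.vecMulLinear :=
    ⟨x ᵥ* Z, by rw [vecMulLinear_apply, vecMul_vecMul, hZ, vecMul_smul, vecMul_one]⟩
  refine LinearMap.finrank_le_finrank_of_injective
    (f := LinearMap.codRestrict _ (d • LinearMap.id) hmem) fun x y hxy => ?_
  exact smul_right_injective _ hd (congrArg Subtype.val hxy)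

variable [IsPrincipalIdealRing R]

theorem exists_range_vecMulLinear_diagonal_mul_eq {N : Submodule R (n → R)}
    (hN : finrank R N = finrank R (n → R)) :
    ∃ (a : n → R) (V : Matrix n n R), IsUnit V ∧
      LinearMap.range (diagonal a * V).vecMulLinear = N := by
  obtain ⟨v, a, w, hw⟩ := Submodule.exists_smith_normal_form_of_rank_eq (Pi.basisFun R n) hN
  have hV : IsUnit (Matrix.of v) := by
    have hinv := (Pi.basisFun R n).invertibleToMatrix v
    rw [← isUnit_transpose]
    exact (Basis.coePiBasisFun.toMatrix_eq_transpose (R := R) (ι := n)) ▸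
      isUnit_of_invertible ((Pi.basisFun R n).toMatrix v)
  refine ⟨a, Matrix.of v, hV, ?_⟩
  have hrow : (diagonal a * Matrix.of v).row = N.subtype ∘ w := by
    ext i j
    rw [Function.comp_apply, Submodule.subtype_apply, hw, row_apply, diagonal_mul]
    rfl
  rw [range_vecMulLinear, hrow, Set.range_comp, Submodule.span_image, w.span_eq,
    Submodule.map_subtype_top]

theorem exists_isPrimitiveFrame_mul_diagonal_mul {L : Matrix m n R}
    {Z : Matrix n m R} {d : R} (hd : d ≠ 0) (hZ : Z * L = d • 1) :
    ∃ (P : Matrix m n R) (a : n → R) (V : Matrix n n R), IsPrimitiveFrame P ∧ (∀ i, a i ≠ 0) ∧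
      IsUnit V ∧ P * diagonal a * V = L := by
  obtain ⟨a, V, hV, hN⟩ := exists_range_vecMulLinear_diagonal_mul_eq
    (finrank_range_vecMulLinear_of_mul_eq_smul_one hd hZ)
  obtain ⟨P, hP⟩ := range_vecMulLinear_le_range_iff.mp hN.ge
  obtain ⟨S, hS⟩ := range_vecMulLinear_le_range_iff.mp hN.le
  have hdet : (diagonal a * V).det ≠ 0 := by
    have h : (Z * P).det * (diagonal a * V).det = d ^ Fintype.card n := by
      rw [← det_mul, Matrix.mul_assoc, ← hP, hZ, det_smul, det_one, mul_one]
    exact right_ne_zero_of_mul (h ▸ pow_ne_zero _ hd)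
  have hSP : S * P = 1 := by
    refine (isRegular_of_isLeftRegular_det (IsRegular.of_ne_zero hdet).left).right ?_
    change S * P * _ = 1 * _
    rw [Matrix.mul_assoc, ← hP, ← hS, Matrix.one_mul]
  refine ⟨P, a, V, ⟨S, hSP⟩, fun i hi => hdet ?_, hV, by rw [Matrix.mul_assoc, ← hP]⟩
  rw [det_mul, det_diagonal, Finset.prod_eq_zero (Finset.mem_univ i) hi, zero_mul]

theorem IsPrimitiveFrame.exists_fromCols {P : Matrix m n R}
    (hP : IsPrimitiveFrame P) (hcard : Fintype.card m = Fintype.card n + 1) :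
    ∃ u : Matrix m Unit R, IsPrimitiveFrame (P.fromCols u) := by
  classical
  obtain ⟨S, hS⟩ := hP
  have hfin : finrank R (LinearMap.ker S.mulVecLin) = 1 := by
    have hsurj : Function.Surjective S.mulVecLin := fun x =>
      ⟨P *ᵥ x, by rw [mulVecLin_apply, mulVec_mulVec, hS, one_mulVec]⟩
    have h := Submodule.finrank_quotient_add_finrank (LinearMap.ker S.mulVecLin)
    rw [(S.mulVecLin.quotKerEquivOfSurjective hsurj).finrank_eq, finrank_fintype_fun_eq_card,
      finrank_fintype_fun_eq_card] at h
    omega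
  let β := Module.basisUnique Unit hfin
  have hker (x : m → R) : (1 - P * S) *ᵥ x ∈ LinearMap.ker S.mulVecLin := by
    rw [LinearMap.mem_ker, mulVecLin_apply, mulVec_mulVec, Matrix.mul_sub, ← Matrix.mul_assoc,
      hS, Matrix.one_mul, Matrix.mul_one, sub_self, zero_mulVec]
  have hcoord (x : m → R) : ∃ c : R, ∀ i, (β () : m → R) i * c = ((1 - P * S) *ᵥ x) i :=
    ⟨β.repr ⟨_, hker x⟩ (), fun i => by
      have h := congrArg (fun z : LinearMap.ker S.mulVecLin => (z : m → R) i)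
        (β.sum_repr ⟨_, hker x⟩)
      simpa [mul_comm] using h⟩
  choose r hr using fun j => hcoord (Pi.single j 1)
  refine ⟨Matrix.of fun i _ => (β () : m → R) i, S.fromRows (Matrix.of fun _ j => r j), ?_⟩
  rw [mul_eq_one_comm_of_card_eq _ _ _ (by simp [hcard]), fromCols_mul_fromRows,
    ← eq_sub_iff_add_eq']
  ext i j
  simp [Matrix.mul_apply, hr]

theorem det_gramMatrix_of_isPrimitiveFrame [DecidableEq m] (γ : Matrix m m ℤ) {M : Matrix m n ℤ}
    (hM : IsPrimitiveFrame M) (hcard : Fintype.card m = Fintype.card n) :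
    (gramMatrix γ M).det = γ.det := by
  obtain ⟨N, hN⟩ := hM
  let e : m ≃ n := Fintype.equivOfCardEq hcard
  have hunit : (N.submatrix e id).det * (M.submatrix id e).det = 1 := by
    rw [← det_mul, ← submatrix_mul _ _ e id e Function.bijective_id, hN, submatrix_one_equiv,
      det_one]
  have hsq : (M.submatrix id e).det ^ 2 = 1 := Int.isUnit_sq (.of_mul_eq_one_right _ hunit)
  have hgram : (gramMatrix γ M).submatrix e e = gramMatrix γ (M.submatrix id e) := rfl
  rw [← det_submatrix_equiv_self e, hgram, gramMatrix, det_mul, det_mul, det_transpose]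
  linear_combination γ.det * hsq

end IntegralFrames

section BorderedDeterminants

open Matrix

variable {R : Type*} [CommRing R] {n : Type*} [Fintype n] [DecidableEq n]

theorem eq_det_smul_one_of_unique {ι : Type*} [Unique ι] [Fintype ι] [DecidableEq ι]
    (c : Matrix ι ι R) : c = c.det • 1 := by
  ext i j
  simp [Subsingleton.elim i default, Subsingleton.elim j default, det_unique]

/-- The column operation on `fromBlocks T b c d` which clears `b`. -/
def borderClearing (T : Matrix n n R) (b : Matrix n Unit R) : Matrix (n ⊕ Unit) (n ⊕ Unit) R :=
  fromBlocks 1 (-(T.adjugate * b)) 0 (T.det • 1)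

theorem det_borderClearing (T : Matrix n n R) (b : Matrix n Unit R) :
    (borderClearing T b).det = T.det := by
  rw [borderClearing, det_fromBlocks_zero₂₁, det_one, one_mul, det_smul, Fintype.card_unit,
    pow_one, det_one, mul_one]

theorem fromBlocks_mul_borderClearing (T : Matrix n n R) (b : Matrix n Unit R)
    (c : Matrix Unit n R) (d : Matrix Unit Unit R) :
    fromBlocks T b c d * borderClearing T b =
      fromBlocks T 0 c (T.det • d - c * T.adjugate * b) := by
  rw [borderClearing, fromBlocks_multiply]
  congr 1
  · simp
  · rw [Matrix.mul_neg, ← Matrix.mul_assoc, mul_adjugate]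
    simp
  · simp
  · rw [Matrix.mul_neg, ← Matrix.mul_assoc, Matrix.mul_smul, Matrix.mul_one, neg_add_eq_sub]

theorem fromBlocks_smul_mul_borderClearing {T : Matrix n n R} {b b' y : Matrix n Unit R} {s : R}
    (hy : s • (T.adjugate * b - T.adjugate * b') = T.det • y) :
    fromBlocks (s • 1) y 0 (s • 1) * borderClearing T b = s • borderClearing T b' := by
  rw [borderClearing, borderClearing, fromBlocks_multiply, fromBlocks_smul]
  congr 1
  · simp
  · simp only [Matrix.smul_mul, Matrix.one_mul, Matrix.mul_smul, Matrix.mul_one, ← hy]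
    rw [smul_sub, smul_neg, smul_neg]
    abel
  · simp
  · simpa using smul_comm _ _ _

theorem adjugate_fromBlocks_inr_inr (T : Matrix n n R) (b : Matrix n Unit R) (c : Matrix Unit n R)
    (d : Matrix Unit Unit R) :
    (fromBlocks T b c d).adjugate (Sum.inr ()) (Sum.inr ()) = T.det := by
  have hrow : (fromBlocks T b c d).updateRow (Sum.inr ()) (Pi.single (Sum.inr ()) 1) =
      fromBlocks T b 0 (1 : Matrix Unit Unit R) := by
    ext i j
    rcases i with i | i <;> rcases j with j | j <;> simp [updateRow_apply]
  rw [adjugate_apply, hrow, det_fromBlocks_zero₂₁, det_one, mul_one]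

variable [IsDomain R] {T : Matrix n n R}

theorem det_smul_sub_mul_adjugate_mul (hT : T.det ≠ 0) (b : Matrix n Unit R)
    (c : Matrix Unit n R) (d : Matrix Unit Unit R) :
    T.det • d - c * T.adjugate * b = (fromBlocks T b c d).det • 1 := by
  have hdet := congrArg det (fromBlocks_mul_borderClearing T b c d)
  rw [det_mul, det_borderClearing, det_fromBlocks_zero₁₂, mul_comm] at hdet
  rw [mul_left_cancel₀ hT hdet]
  exact eq_det_smul_one_of_unique _

theorem exists_adjugate_mul_add_det_smul_adjugate_eq (hT : T.det ≠ 0) (b : Matrix n Unit R)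
    (c : Matrix Unit n R) (d : Matrix Unit Unit R) :
    ∃ X, T.adjugate * b * c * T.adjugate + (fromBlocks T b c d).det • T.adjugate = T.det • X := by
  set G := fromBlocks T b c d with hG
  set B := G.adjugate with hB
  have hB₂₂ : B.toBlocks₂₂ = T.det • 1 := by
    rw [eq_det_smul_one_of_unique B.toBlocks₂₂, det_unique]
    exact congrArg (· • 1) (adjugate_fromBlocks_inr_inr T b c d)
  have hone : G.det • (1 : Matrix (n ⊕ Unit) (n ⊕ Unit) R) =
      fromBlocks (G.det • 1) 0 0 (G.det • 1) := by
    rw [← fromBlocks_one, fromBlocks_smul, smul_zero, smul_zero]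
  have hleft := adjugate_mul G
  have hright := mul_adjugate G
  rw [hone, ← hB, ← fromBlocks_toBlocks B, hG, fromBlocks_multiply, fromBlocks_inj] at hleft hright
  have hB₂₁ : B.toBlocks₂₁ = -(c * T.adjugate) := by
    have h := congrArg (· * T.adjugate) hleft.2.2.1
    simp only [hB₂₂, Matrix.add_mul, Matrix.mul_assoc, mul_adjugate, Matrix.smul_mul,
      Matrix.mul_smul, Matrix.one_mul, Matrix.mul_one, Matrix.zero_mul, ← smul_add] at h
    exact eq_neg_of_add_eq_zero_left ((smul_eq_zero.mp h).resolve_left hT)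
  refine ⟨B.toBlocks₁₁, ?_⟩
  have h := congrArg (T.adjugate * ·) hright.1
  simp only [hB₂₁, Matrix.mul_add, ← Matrix.mul_assoc, adjugate_mul, Matrix.smul_mul,
    Matrix.one_mul, Matrix.mul_smul, Matrix.mul_one, Matrix.mul_neg] at h
  rw [← h]
  abel

theorem gramMatrix_borderClearing (hT : T.IsSymm) (hT0 : T.det ≠ 0) (b : Matrix n Unit R)
    (c : Matrix Unit Unit R) :
    gramMatrix (fromBlocks T b bᵀ c) (borderClearing T b) =
      fromBlocks T 0 0 ((T.det * (fromBlocks T b bᵀ c).det) • 1) := by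
  rw [gramMatrix, Matrix.mul_assoc, fromBlocks_mul_borderClearing,
    det_smul_sub_mul_adjugate_mul hT0, borderClearing, fromBlocks_transpose, fromBlocks_multiply]
  congr 1
  · simp
  · simp
  · rw [transpose_neg, transpose_mul, adjugate_transpose, hT.eq, Matrix.neg_mul, Matrix.mul_assoc,
      adjugate_mul]
    simp
  · simp [smul_smul, mul_comm]

end BorderedDeterminants

section Isometries

open Matrix

theorem pow_dvd_sub_mul_or_of_pow_dvd_mul {R : Type*} [CommRing R] [IsDomain R] {p : R}
    (hp : Prime p) {v : ℕ} {x y : R} (h : p ^ v ∣ x * y) :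
    p ^ v ∣ (x - y) * x ∨ p ^ v ∣ (x - y) * y := by
  obtain ⟨a, ha⟩ := h
  obtain ⟨i, j, b, c, rfl, -, rfl, rfl⟩ := mul_eq_mul_prime_pow hp (ha.trans (mul_comm _ _))
  rcases le_total i j with hij | hij
  · refine .inr (pow_add p i j ▸ mul_dvd_mul (dvd_sub (dvd_mul_left _ _) ?_) (dvd_mul_left _ _))
    exact (pow_dvd_pow p hij).mul_left c
  · refine .inl (add_comm j i ▸ pow_add p j i ▸
      mul_dvd_mul (dvd_sub ?_ (dvd_mul_left _ _)) (dvd_mul_left _ _))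
    exact (pow_dvd_pow p hij).mul_left b

theorem dvd_of_forall_prime_pow_padicValInt_dvd {d x : ℤ} (hd : d ≠ 0)
    (h : ∀ p : ℕ, p.Prime → (p : ℤ) ^ padicValInt p d ∣ x) : d ∣ x := by
  rw [← Int.natAbs_dvd_natAbs, Nat.dvd_iff_prime_pow_dvd_dvd]
  intro p k hp hk
  have : Fact p.Prime := ⟨hp⟩
  have hkd : (p : ℤ) ^ k ∣ d := by
    rw [← Nat.cast_pow]
    exact Int.natCast_dvd.mpr hk
  have hle := ((padicValInt_dvd_iff k d).mp hkd).resolve_left hd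
  rw [← Int.natCast_dvd, Nat.cast_pow]
  exact (pow_dvd_pow _ hle).trans (h p hp)

theorem exists_sign_forall_dvd_sub {ι κ : Type*} {d : ℤ} (hd : d ≠ 0) {x : ι → κ → ℤ} {x₀ : κ → ℤ}
    (h : ∀ p : ℕ, p.Prime → ∀ i, (∀ k, (p : ℤ) ^ padicValInt p d ∣ x i k + x₀ k) ∨
      ∀ k, (p : ℤ) ^ padicValInt p d ∣ x i k - x₀ k) :
    ∃ σ : ℕ → ι → Prop, (∀ p i, p.Prime → ¬ σ p i → (p : ℤ) ∣ d) ∧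
      ∀ i j, (∀ p : ℕ, p.Prime → (p : ℤ) ∣ d → (σ p i ↔ σ p j)) → ∀ k, d ∣ x i k - x j k := by
  let σ (p : ℕ) (i : ι) : Prop := ∀ k, (p : ℤ) ^ padicValInt p d ∣ x i k + x₀ k
  have hσ (p : ℕ) (i : ι) (_ : p.Prime) (hi : ¬ σ p i) : (p : ℤ) ∣ d := by
    by_contra hpd
    refine hi fun k => ?_
    rw [padicValInt.eq_zero_of_not_dvd hpd, pow_zero]
    exact one_dvd _
  refine ⟨σ, hσ, fun i j hij k => dvd_of_forall_prime_pow_padicValInt_dvd hd fun p hp => ?_⟩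
  by_cases hσi : σ p i
  · have hσj : σ p j := by
      by_cases hpd : (p : ℤ) ∣ d
      · exact (hij p hp hpd).mp hσi
      · exact not_imp_comm.mp (hσ p j hp) hpd
    simpa only [add_sub_add_right_eq_sub] using dvd_sub (hσi k) (hσj k)
  · have hσj : ¬ σ p j := fun hσj => hσi ((hij p hp (hσ p i hp hσi)).mpr hσj)
    simpa only [sub_sub_sub_cancel_right] using
      dvd_sub ((h p hp i).resolve_left hσi k) ((h p hp j).resolve_left hσj k)

section CommRing

variable {R : Type*} [CommRing R] {m n : Type*} [Fintype m]

theorem gramMatrix_fromCols {l : Type*} {γ : Matrix m m R} (hγ : γ.IsSymm) (P : Matrix m n R)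
    (u : Matrix m l R) : gramMatrix γ (P.fromCols u) =
      fromBlocks (gramMatrix γ P) (Pᵀ * γ * u) (Pᵀ * γ * u)ᵀ (gramMatrix γ u) := by
  rw [gramMatrix, transpose_fromCols, fromRows_mul, fromRows_mul_fromCols, transpose_mul,
    transpose_mul, transpose_transpose, hγ.eq, Matrix.mul_assoc uᵀ γ P, gramMatrix, gramMatrix]

theorem gramMatrix_smul (γ : Matrix m m R) (c : R) (L : Matrix m n R) :
    gramMatrix γ (c • L) = c ^ 2 • gramMatrix γ L := by
  rw [gramMatrix, transpose_smul, Matrix.smul_mul, Matrix.smul_mul, Matrix.mul_smul, smul_smul,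
    ← sq, gramMatrix]

variable [IsDomain R] [Fintype n]

theorem eq_of_gramMatrix_eq [DecidableEq m] {γ γ' : Matrix m m R} {M : Matrix m n R}
    {Z : Matrix n m R} {c : R} (hc : c ≠ 0) (hZ : M * Z = c • 1)
    (h : gramMatrix γ M = gramMatrix γ' M) : γ = γ' := by
  have hsmul (η : Matrix m m R) : gramMatrix (gramMatrix η M) Z = c ^ 2 • η := by
    rw [← gramMatrix_mul, hZ, gramMatrix_smul, gramMatrix, transpose_one, Matrix.one_mul,
      Matrix.mul_one]
  exact smul_right_injective _ (pow_ne_zero 2 hc) ((hsmul γ).symm.trans (h ▸ hsmul γ'))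

variable [DecidableEq n]

theorem exists_smul_adjugate_mul_add_eq {T : Matrix n n R} (hT : T.IsSymm) (hT0 : T.det ≠ 0)
    {b b' : Matrix n Unit R} {c c' : Matrix Unit Unit R} {δ : R}
    (hc : (fromBlocks T b bᵀ c).det = δ) (hc' : (fromBlocks T b' b'ᵀ c').det = δ) :
    ∃ (z : R) (Y : Matrix n Unit R), z • (T.adjugate * b) + δ • (T.adjugate * b') = T.det • Y ∧
      T.det ∣ (z + δ) * (z - δ) := by
  obtain ⟨X, hX⟩ := exists_adjugate_mul_add_det_smul_adjugate_eq hT0 b bᵀ c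
  have hnorm := det_smul_sub_mul_adjugate_mul hT0 b' b'ᵀ c'
  rw [hc] at hX
  rw [hc'] at hnorm
  set A := T.adjugate
  have hA : Aᵀ = A := by rw [adjugate_transpose, hT.eq]
  obtain ⟨z, hz⟩ : ∃ z : R, bᵀ * A * b' = z • 1 := ⟨_, eq_det_smul_one_of_unique _⟩
  have hz' : b'ᵀ * A * b = z • 1 := by
    rw [← transpose_one, ← transpose_smul, ← hz, transpose_mul, transpose_mul,
      transpose_transpose, hA, Matrix.mul_assoc]
  have hY : z • (A * b) + δ • (A * b') = T.det • (X * b') := by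
    have h := congrArg (· * b') hX
    simp only [Matrix.add_mul, Matrix.smul_mul] at h
    rw [← h, Matrix.mul_assoc (A * b * bᵀ), Matrix.mul_assoc (A * b) bᵀ, ← Matrix.mul_assoc bᵀ,
      hz, Matrix.mul_smul, Matrix.mul_one]
  refine ⟨z, X * b', hY, (b'ᵀ * X * b') () () - δ * c' () (), ?_⟩
  have hpair := congrArg (b'ᵀ * ·) hY
  simp only [Matrix.mul_add, Matrix.mul_smul, ← Matrix.mul_assoc, hz'] at hpair
  have hpair₀ := congrFun₂ hpair () ()
  have hnorm₀ := congrFun₂ hnorm () ()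
  simp only [Matrix.add_apply, Matrix.sub_apply, Matrix.smul_apply, Matrix.one_apply_eq,
    smul_eq_mul] at hpair₀ hnorm₀
  linear_combination hpair₀ + δ * hnorm₀

theorem forall_pow_dvd_adjugate_mul_add_or_sub {T : Matrix n n R} (hT : T.IsSymm)
    (hT0 : T.det ≠ 0) {b b' : Matrix n Unit R} {c c' : Matrix Unit Unit R} {δ : R}
    (hc : (fromBlocks T b bᵀ c).det = δ) (hc' : (fromBlocks T b' b'ᵀ c').det = δ) {p : R}
    (hp : Prime p) {v : ℕ} (hv : p ^ v ∣ T.det) :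
    (∀ i, p ^ v ∣ 2 * δ ^ 2 * ((T.adjugate * b') i () + (T.adjugate * b) i ())) ∨
      ∀ i, p ^ v ∣ 2 * δ ^ 2 * ((T.adjugate * b') i () - (T.adjugate * b) i ()) := by
  obtain ⟨z, Y, hY, hz⟩ := exists_smul_adjugate_mul_add_eq hT hT0 hc hc'
  set x := T.adjugate * b
  set x' := T.adjugate * b'
  have hx (i) : p ^ v ∣ z * x i () + δ * x' i () := by
    have h := congrFun₂ hY i ()
    simp only [Matrix.add_apply, Matrix.smul_apply, smul_eq_mul] at h
    exact h ▸ hv.mul_right _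
  rcases pow_dvd_sub_mul_or_of_pow_dvd_mul hp (hv.trans hz) with h | h
  · refine .inr fun i => ?_
    have hcomb : 2 * δ ^ 2 * (x' i () - x i ()) = 2 * δ * (z * x i () + δ * x' i ()) -
        (z + δ - (z - δ)) * (z + δ) * x i () := by ring
    exact hcomb ▸ dvd_sub ((hx i).mul_left _) (h.mul_right _)
  · refine .inl fun i => ?_
    have hcomb : 2 * δ ^ 2 * (x' i () + x i ()) = 2 * δ * (z * x i () + δ * x' i ()) -
        (z + δ - (z - δ)) * (z - δ) * x i () := by ring
    exact hcomb ▸ dvd_sub ((hx i).mul_left _) (h.mul_right _)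

theorem exists_similitude (hcard : Fintype.card m = Fintype.card n + 1)
    {γ : Matrix m m R} (hγ : γ.IsSymm) {P P' : Matrix m n R} {u u' : Matrix m Unit R}
    (hU : IsPrimitiveFrame (P.fromCols u)) (hT : gramMatrix γ P' = gramMatrix γ P)
    (hdet : (gramMatrix γ (P'.fromCols u')).det = (gramMatrix γ (P.fromCols u)).det)
    (hT0 : (gramMatrix γ P).det ≠ 0) {s : R} {y : Matrix n Unit R}
    (hy : s • ((gramMatrix γ P).adjugate * (Pᵀ * γ * u) -
      (gramMatrix γ P).adjugate * (P'ᵀ * γ * u')) = (gramMatrix γ P).det • y) :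
    ∃ H : Matrix m m R, gramMatrix γ H = s ^ 2 • γ ∧ H * P = s • P' := by
  classical
  obtain ⟨S, hS⟩ := hU
  have hS' : P.fromCols u * S = 1 := (mul_eq_one_comm_of_card_eq _ _ _ (by simp [hcard])).mpr hS
  have hTs := isSymm_gramMatrix hγ P
  have hgram := gramMatrix_borderClearing hTs hT0 (Pᵀ * γ * u) (gramMatrix γ u)
  have hgram' := gramMatrix_borderClearing hTs hT0 (P'ᵀ * γ * u') (gramMatrix γ u')
  rw [← gramMatrix_fromCols hγ, ← gramMatrix_mul] at hgram
  rw [← hT, ← gramMatrix_fromCols hγ, ← gramMatrix_mul, hdet, hT] at hgram'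
  set T := gramMatrix γ P
  set K := borderClearing T (Pᵀ * γ * u) with hK
  set K' := borderClearing T (P'ᵀ * γ * u')
  let F : Matrix (n ⊕ Unit) (n ⊕ Unit) R := fromBlocks (s • 1) y 0 (s • 1)
  have hFK : F * K = s • K' := fromBlocks_smul_mul_borderClearing hy
  have hHU : P'.fromCols u' * F * S * P.fromCols u = P'.fromCols u' * F := by
    rw [Matrix.mul_assoc, hS, Matrix.mul_one]
  refine ⟨P'.fromCols u' * F * S, ?_, ?_⟩
  · refine eq_of_gramMatrix_eq hT0 (M := P.fromCols u * K) (Z := K.adjugate * S) ?_ ?_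
    · rw [Matrix.mul_assoc, ← Matrix.mul_assoc K, mul_adjugate, hK, det_borderClearing,
        Matrix.smul_mul, Matrix.one_mul, Matrix.mul_smul, hS']
    · rw [← gramMatrix_mul, ← Matrix.mul_assoc, hHU, Matrix.mul_assoc, hFK, Matrix.mul_smul,
        gramMatrix_smul, hgram', ← hgram]
      simp only [gramMatrix, Matrix.mul_smul, Matrix.smul_mul]
  · let J : Matrix (n ⊕ Unit) n R := fromRows 1 0
    calc P'.fromCols u' * F * S * P
        = P'.fromCols u' * F * S * (P.fromCols u * J) := by
          rw [fromCols_mul_fromRows P u 1 0, Matrix.mul_one, Matrix.mul_zero, add_zero]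
      _ = P'.fromCols u' * (F * J) := by
          rw [← Matrix.mul_assoc, hHU, Matrix.mul_assoc]
      _ = s • P' := by simp [F, J, fromBlocks_mul_fromRows, fromCols_mul_fromRows]

end CommRing

variable {m n : Type*} [Fintype m] [Fintype n] [DecidableEq n]

theorem exists_sign_pattern [DecidableEq m] (hcard : Fintype.card m = Fintype.card n + 1)
    {γ : Matrix m m ℤ} (hγ : γ.IsSymm) {T : Matrix n n ℤ} (hT0 : T.det ≠ 0) {ι : Type*}
    {P : ι → Matrix m n ℤ} (hP : ∀ i, IsPrimitiveFrame (P i)) (hT : ∀ i, gramMatrix γ (P i) = T) :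
    ∃ σ : ℕ → ι → Prop, (∀ p i, p.Prime → ¬ σ p i → (p : ℤ) ∣ T.det) ∧
      ∀ i j, (∀ p : ℕ, p.Prime → (p : ℤ) ∣ T.det → (σ p i ↔ σ p j)) →
        ∃ H, gramMatrix γ H = (2 * γ.det ^ 2) ^ 2 • γ ∧ H * P i = (2 * γ.det ^ 2) • P j := by
  rcases isEmpty_or_nonempty ι with hι | ⟨⟨i₀⟩⟩
  · exact ⟨fun _ _ => True, fun _ i => isEmptyElim i, fun i => isEmptyElim i⟩
  have hTs : T.IsSymm := hT i₀ ▸ isSymm_gramMatrix hγ (P i₀)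
  choose u hu using fun i => (hP i).exists_fromCols hcard
  set x : ι → Matrix n Unit ℤ := fun i => T.adjugate * ((P i)ᵀ * γ * u i)
  have hdet (i) : (gramMatrix γ ((P i).fromCols (u i))).det = γ.det :=
    det_gramMatrix_of_isPrimitiveFrame γ (hu i) (by simp [hcard])
  have hbordered (i) : (fromBlocks T ((P i)ᵀ * γ * u i) ((P i)ᵀ * γ * u i)ᵀ
      (gramMatrix γ (u i))).det = γ.det := by
    rw [← hdet i, gramMatrix_fromCols hγ, hT]
  obtain ⟨σ, hσ, hdvd⟩ := exists_sign_forall_dvd_sub hT0 (x := fun i k => 2 * γ.det ^ 2 * x i k ())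
    (x₀ := fun k => 2 * γ.det ^ 2 * x i₀ k ()) fun p hp i => by
      simpa only [← mul_add, ← mul_sub] using forall_pow_dvd_adjugate_mul_add_or_sub hTs hT0
        (hbordered i₀) (hbordered i) (Nat.prime_iff_prime_int.mp hp) (padicValInt_dvd T.det)
  refine ⟨σ, hσ, fun i j hij => ?_⟩
  choose y hy using hdvd i j hij
  refine exists_similitude hcard hγ (hu i) ((hT j).trans (hT i).symm)
    ((hdet j).trans (hdet i).symm) ((hT i).symm ▸ hT0) (y := Matrix.of fun k _ => y k) ?_
  rw [hT i]
  exact ext fun k _ => (mul_sub _ _ _).trans (hy k)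

end Isometries

section PositiveDefinite

open Matrix

variable {m : Type*} [Fintype m] {γ : Matrix m m ℤ}

theorem det_ne_zero_of_posDef [DecidableEq m] (hγ : γ.PosDef) : γ.det ≠ 0 := fun hdet => by
  obtain ⟨v, hv, hγv⟩ := exists_mulVec_eq_zero_iff.mpr hdet
  simpa [hγv] using hγ.dotProduct_mulVec_pos hv

theorem abs_dotProduct_mulVec_le_of_posSemidef (hγ : γ.PosSemidef) (x y : m → ℤ) :
    |x ⬝ᵥ γ *ᵥ y| ≤ x ⬝ᵥ γ *ᵥ x + y ⬝ᵥ γ *ᵥ y := by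
  have hnonneg (z : m → ℤ) : 0 ≤ z ⬝ᵥ γ *ᵥ z := by simpa using hγ.dotProduct_mulVec_nonneg z
  have hcomm : y ⬝ᵥ γ *ᵥ x = x ⬝ᵥ γ *ᵥ y := by
    rw [dotProduct_mulVec, ← mulVec_transpose, (isHermitian_iff_isSymm.mp hγ.isHermitian).eq,
      dotProduct_comm]
  have hadd := hnonneg (x + y)
  have hsub := hnonneg (x - y)
  simp only [mulVec_add, add_dotProduct, dotProduct_add, mulVec_sub, sub_dotProduct,
    dotProduct_sub, hcomm] at hadd hsub
  rw [abs_le]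
  constructor <;> linarith [hnonneg x, hnonneg y]

theorem transpose_mul_mul_apply {R l n : Type*} [CommRing R] (γ : Matrix m m R) (M : Matrix m l R)
    (L : Matrix m n R) (i : l) (j : n) : (Mᵀ * γ * L) i j = M.col i ⬝ᵥ γ *ᵥ L.col j := by
  rw [Matrix.mul_assoc]
  rfl

theorem abs_apply_le_of_gramMatrix_eq [DecidableEq m] {n : Type*} (hγ : γ.PosDef)
    {Λ : Matrix n n ℤ} {L : Matrix m n ℤ} (hL : gramMatrix γ L = Λ) (i : m) (j : n) :
    |L i j| ≤ Λ j j + gramMatrix γ γ.adjugate i i := by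
  have hentry : γ.adjugate.col i ⬝ᵥ γ *ᵥ L.col j = γ.det * L i j := by
    rw [← transpose_mul_mul_apply, adjugate_transpose,
      (isHermitian_iff_isSymm.mp hγ.isHermitian).eq, adjugate_mul, Matrix.smul_mul,
      Matrix.one_mul, Matrix.smul_apply, smul_eq_mul]
  calc |L i j| ≤ |γ.det| * |L i j| :=
        le_mul_of_one_le_left (abs_nonneg _) (Int.one_le_abs (det_ne_zero_of_posDef hγ))
    _ = |γ.adjugate.col i ⬝ᵥ γ *ᵥ L.col j| := by rw [← abs_mul, hentry]
    _ ≤ _ := abs_dotProduct_mulVec_le_of_posSemidef hγ.posSemidef _ _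
    _ = gramMatrix γ γ.adjugate i i + gramMatrix γ L j j := by
        simp only [gramMatrix, transpose_mul_mul_apply]
    _ = Λ j j + gramMatrix γ γ.adjugate i i := by rw [hL, add_comm]

theorem finite_gramRepresentation {n : Type*} [Finite n] (hγ : γ.PosDef) (Λ : Matrix n n ℤ) :
    Finite (GramRepresentation γ Λ) := by
  classical
  have hbox : {L : m → n → ℤ | ∀ i, L i ∈ {x : n → ℤ | ∀ j, x j ∈ Set.Icc
      (-(Λ j j + gramMatrix γ γ.adjugate i i)) (Λ j j + gramMatrix γ γ.adjugate i i)}}.Finite :=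
    Set.Finite.pi' fun i => Set.Finite.pi' fun j => Set.finite_Icc _ _
  exact (hbox.subset fun L (hL : gramMatrix γ (Matrix.of L) = Λ) i j =>
    abs_le.mp (abs_apply_le_of_gramMatrix_eq hγ hL i j)).to_subtype

end PositiveDefinite

section LocalRowClasses

open Matrix

theorem RowEquiv.refl {A m n : Type*} [Semiring A] [Fintype m] (L : Matrix m n A) :
    RowEquiv L L := by
  classical
  exact ⟨⟨1, (Matrix.one_mul L).symm⟩, 1, (Matrix.one_mul L).symm⟩

theorem RowEquiv.map {A B m n : Type*} [CommRing A] [CommRing B] [Fintype m] (f : A →+* B)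
    {L L' : Matrix m n A} (h : RowEquiv L L') : RowEquiv (L.map f) (L'.map f) := by
  obtain ⟨⟨X, hX⟩, Y, hY⟩ := h
  exact ⟨⟨X.map f, by rw [← Matrix.map_mul, ← hX]⟩, Y.map f, by rw [← Matrix.map_mul, ← hY]⟩

variable {m n : Type*} [Fintype m]

theorem adjugate_gramMatrix_mul {R : Type*} [CommRing R] [Fintype n] [DecidableEq n]
    (γ : Matrix m m R) (L : Matrix m n R) :
    (gramMatrix γ L).adjugate * Lᵀ * γ * L = (gramMatrix γ L).det • 1 := by
  rw [← adjugate_mul, Matrix.mul_assoc, Matrix.mul_assoc]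
  simp only [gramMatrix, Matrix.mul_assoc]

theorem exists_smul_eq_mul_of_reduceMod_eq_mul [Finite n] [DecidableEq n] {p : ℕ}
    (hp : p.Prime) {d : ℤ} (hd : d ≠ 0) {L L' : Matrix m n ℤ} {Z : Matrix n m ℤ}
    (hZ : Z * L' = d • 1) {X : Matrix m m (ZMod (p ^ padicValInt p d))}
    (hX : reduceMod _ L = X * reduceMod _ L') :
    ∃ c : ℤ, ¬ (p : ℤ) ∣ c ∧ ∃ Y : Matrix m m ℤ, c • L = Y * L' := by
  have := Fact.mk hp
  have := Fintype.ofFinite n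
  obtain ⟨c, hpc, hc⟩ := exists_eq_prime_pow_padicValInt_mul (p := p) hd
  obtain ⟨X, rfl⟩ := exists_matrix_map_eq (ZMod.intCast_surjective (n := p ^ padicValInt p d)) X
  have hdvd (i j) : ((p ^ padicValInt p d : ℕ) : ℤ) ∣ (L - X * L') i j := by
    rw [← ZMod.intCast_zmod_eq_zero_iff_dvd, Matrix.sub_apply, Int.cast_sub, sub_eq_zero]
    exact (congrFun₂ hX i j).trans
      (congrFun₂ (Matrix.map_mul (f := Int.castRingHom (ZMod (p ^ padicValInt p d)))) i j).symm
  choose W hW using hdvd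
  have hLX : L - X * L' = (p : ℤ) ^ padicValInt p d • Matrix.of W :=
    Matrix.ext fun i j => by rw [hW, Nat.cast_pow]; rfl
  refine ⟨c, hpc, c • X + Matrix.of W * Z, ?_⟩
  calc c • L = c • (X * L') + c • (L - X * L') := by rw [← smul_add, add_sub_cancel]
    _ = (c • X + Matrix.of W * Z) * L' := by
      rw [hLX, smul_smul, mul_comm, ← hc, Matrix.add_mul, Matrix.smul_mul, Matrix.mul_assoc, hZ,
        Matrix.mul_smul, Matrix.mul_one]

theorem ideal_eq_top_of_forall_prime_exists_not_dvd {I : Ideal ℤ} {d : ℤ} (hd : d ∈ I)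
    (h : ∀ p : ℕ, p.Prime → (p : ℤ) ∣ d → ∃ c ∈ I, ¬ (p : ℤ) ∣ c) : I = ⊤ := by
  obtain ⟨g, rfl⟩ := (IsPrincipalIdealRing.principal I).principal
  simp only [Ideal.submodule_span_eq, Ideal.mem_span_singleton] at hd h
  rw [Ideal.submodule_span_eq, Ideal.span_singleton_eq_top, Int.isUnit_iff_natAbs_eq]
  by_contra hg
  obtain ⟨p, hp, hpg⟩ := Nat.exists_prime_and_dvd hg
  rw [← Int.natCast_dvd] at hpg
  obtain ⟨c, hgc, hpc⟩ := h p hp (hpg.trans hd)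
  exact hpc (hpg.trans hgc)

theorem exists_eq_mul_of_forall_prime_reduceMod [Finite n] [DecidableEq n]
    {d : ℤ} (hd : d ≠ 0) {L L' : Matrix m n ℤ} {Z : Matrix n m ℤ} (hZ : Z * L' = d • 1)
    (h : ∀ p : ℕ, p.Prime → (p : ℤ) ∣ d → ∃ X : Matrix m m (ZMod (p ^ padicValInt p d)),
      reduceMod _ L = X * reduceMod _ L') : ∃ X : Matrix m m ℤ, L = X * L' := by
  have := Fintype.ofFinite n
  let I : Ideal ℤ := (LinearMap.range (mulRightLinearMap m ℤ L')).comap (.toSpanSingleton ℤ _ L)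
  have hI (c : ℤ) : c ∈ I ↔ ∃ X : Matrix m m ℤ, X * L' = c • L := Iff.rfl
  have hdI : d ∈ I :=
    (hI d).mpr ⟨L * Z, by rw [Matrix.mul_assoc, hZ, Matrix.mul_smul, Matrix.mul_one]⟩
  have htop : I = ⊤ := ideal_eq_top_of_forall_prime_exists_not_dvd hdI fun p hp hpd => by
    obtain ⟨X, hX⟩ := h p hp hpd
    obtain ⟨c, hpc, Y, hY⟩ := exists_smul_eq_mul_of_reduceMod_eq_mul hp hd hZ hX
    exact ⟨c, (hI c).mpr ⟨Y, hY.symm⟩, hpc⟩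
  obtain ⟨X, hX⟩ := (hI 1).mp ((Ideal.eq_top_iff_one I).mp htop)
  exact ⟨X, by rw [hX, one_smul]⟩

/-- The equivalence relation `RowEquiv` as a setoid. -/
def rowSetoid (m n A : Type*) [Fintype m] [CommRing A] : Setoid (Matrix m n A) :=
  ⟨RowEquiv, RowEquiv.refl, RowEquiv.symm, RowEquiv.trans⟩

/-- The row class of an integral matrix modulo the exact power of `p` dividing `d`. It determines
the row class over the `p`-adic integers of a matrix having a left inverse up to the factor `d`. -/
def localRowClass (p : ℕ) (d : ℤ) (L : Matrix m n ℤ) :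
    Quotient (rowSetoid m n (ZMod (p ^ padicValInt p d))) :=
  Quotient.mk _ (reduceMod _ L)

theorem localRowClass_eq_iff {p : ℕ} {d : ℤ} {L L' : Matrix m n ℤ} :
    localRowClass p d L = localRowClass p d L' ↔
      RowEquiv (reduceMod (p ^ padicValInt p d) L) (reduceMod _ L') :=
  Quotient.eq

theorem localRowClass_eq_of_rowEquiv_reduceMod {p r : ℕ} {d : ℤ} (hr : padicValInt p d ≤ r)
    {L L' : Matrix m n ℤ} (h : RowEquiv (reduceMod (p ^ r) L) (reduceMod (p ^ r) L')) :
    localRowClass p d L = localRowClass p d L' := by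
  have hmap := h.map (ZMod.castHom (pow_dvd_pow p hr) (ZMod (p ^ padicValInt p d)))
  rw [reduceMod_map_castHom, reduceMod_map_castHom] at hmap
  exact localRowClass_eq_iff.mpr hmap

theorem rowEquiv_of_forall_prime_localRowClass_eq [Fintype n] [DecidableEq n] {γ : Matrix m m ℤ}
    {Λ : Matrix n n ℤ} (hΛ : Λ.det ≠ 0) {L L' : Matrix m n ℤ} (hL : gramMatrix γ L = Λ)
    (hL' : gramMatrix γ L' = Λ)
    (h : ∀ p : ℕ, p.Prime → (p : ℤ) ∣ Λ.det →
      localRowClass p Λ.det L = localRowClass p Λ.det L') : RowEquiv L L' := by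
  simp only [localRowClass_eq_iff] at h
  have hZ := adjugate_gramMatrix_mul γ L
  have hZ' := adjugate_gramMatrix_mul γ L'
  rw [hL] at hZ
  rw [hL'] at hZ'
  exact ⟨exists_eq_mul_of_forall_prime_reduceMod hΛ hZ' fun p hp hpd => (h p hp hpd).1,
    exists_eq_mul_of_forall_prime_reduceMod hΛ hZ fun p hp hpd => (h p hp hpd).2⟩

end LocalRowClasses

section LocalInvariants

open Matrix

variable {m n : Type*} [Fintype m] [Fintype n] [DecidableEq n]

/-- `p` divides the Gram determinant of a primitive frame spanning the same rational subspace as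
the columns of `L`. At such `p` the two local signs of `L` both have to be allowed for. -/
def IsRamified (γ : Matrix m m ℤ) (p : ℕ) (L : Matrix m n ℤ) : Prop :=
  ∃ (P : Matrix m n ℤ) (K : Matrix n n ℤ),
    IsPrimitiveFrame P ∧ P * K = L ∧ (p : ℤ) ∣ (gramMatrix γ P).det

theorem IsPrimitiveFrame.mul {R l : Type*} [CommRing R] [Fintype l] [DecidableEq l]
    {P : Matrix m n R} {Q : Matrix n l R} (hP : IsPrimitiveFrame P) (hQ : IsPrimitiveFrame Q) :
    IsPrimitiveFrame (P * Q) := by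
  obtain ⟨S, hS⟩ := hP
  obtain ⟨U, hU⟩ := hQ
  exact ⟨U * S, by rw [Matrix.mul_assoc, ← Matrix.mul_assoc S, hS, Matrix.one_mul, hU]⟩

theorem det_gramMatrix_mul {R : Type*} [CommRing R] (γ : Matrix m m R) (P : Matrix m n R)
    (K : Matrix n n R) : (gramMatrix γ (P * K)).det = K.det ^ 2 * (gramMatrix γ P).det := by
  rw [gramMatrix_mul, gramMatrix, det_mul, det_mul, det_transpose]
  ring

theorem exists_isPrimitiveFrame_mul_eq_of_rowEquiv {R : Type*} [CommRing R] [IsDomain R]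
    [IsPrincipalIdealRing R] {γ : Matrix m m R} {L₀ : Matrix m n R}
    (h₀ : (gramMatrix γ L₀).det ≠ 0) :
    ∃ K : Matrix n n R, ∀ L : Matrix m n R, RowEquiv L L₀ →
      ∃ P : Matrix m n R, IsPrimitiveFrame P ∧ P * K = L := by
  obtain ⟨P, a, V, ⟨S, hS⟩, -, -, hL₀⟩ :=
    exists_isPrimitiveFrame_mul_diagonal_mul h₀ (adjugate_gramMatrix_mul γ L₀)
  obtain ⟨K, rfl⟩ : ∃ K, P * K = L₀ := ⟨diagonal a * V, by rw [← hL₀, Matrix.mul_assoc]⟩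
  have hK : K.det ≠ 0 := fun hK => h₀ (by rw [det_gramMatrix_mul, hK]; ring)
  have hK' : IsRegular K := isRegular_of_isLeftRegular_det (IsRegular.of_ne_zero hK).left
  refine ⟨K, ?_⟩
  rintro _ ⟨⟨X, rfl⟩, Y, hY⟩
  refine ⟨X * P, ⟨S * Y, hK'.right ?_⟩, Matrix.mul_assoc _ _ _⟩
  calc S * Y * (X * P) * K = S * (Y * (X * (P * K))) := by simp only [Matrix.mul_assoc]
    _ = 1 * K := by rw [← hY, ← Matrix.mul_assoc, hS]

theorem exists_sign_pattern_of_rowEquiv [DecidableEq m]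
    (hcard : Fintype.card m = Fintype.card n + 1) {γ : Matrix m m ℤ} (hγ : γ.IsSymm)
    {Λ : Matrix n n ℤ} (hΛ : Λ.det ≠ 0) {ι : Type*} {L : ι → Matrix m n ℤ}
    (hL : ∀ i, gramMatrix γ (L i) = Λ) (hrow : ∀ i j, RowEquiv (L i) (L j)) :
    ∃ σ : ℕ → ι → Prop, (∀ p i, p.Prime → ¬ σ p i → IsRamified γ p (L i)) ∧
      ∀ i j, (∀ p : ℕ, p.Prime → (p : ℤ) ∣ Λ.det → (σ p i ↔ σ p j)) →
        ∃ H, gramMatrix γ H = (2 * γ.det ^ 2) ^ 2 • γ ∧ H * L i = (2 * γ.det ^ 2) • L j := by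
  rcases isEmpty_or_nonempty ι with hι | ⟨⟨i₀⟩⟩
  · exact ⟨fun _ _ => True, fun _ i => isEmptyElim i, fun i => isEmptyElim i⟩
  obtain ⟨K, hK⟩ := exists_isPrimitiveFrame_mul_eq_of_rowEquiv (γ := γ) ((hL i₀).symm ▸ hΛ)
  choose P hP hPK using fun i => hK (L i) (hrow i i₀)
  have hdet (i) : Λ.det = K.det ^ 2 * (gramMatrix γ (P i)).det := by
    rw [← hL i, ← hPK i, det_gramMatrix_mul]
  have hK0 : K.det ≠ 0 := fun h0 => hΛ (by rw [hdet i₀, h0]; ring)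
  have hT (i) : gramMatrix γ (P i) = gramMatrix γ (P i₀) :=
    eq_of_gramMatrix_eq hK0 (mul_adjugate K) (by
      rw [← gramMatrix_mul, ← gramMatrix_mul, hPK, hPK, hL, hL])
  obtain ⟨σ, hσ, hH⟩ := exists_sign_pattern hcard hγ
    (right_ne_zero_of_mul ((hdet i₀).symm.trans_ne hΛ)) hP hT
  refine ⟨σ, fun p i hp hi => ⟨P i, K, hP i, hPK i, hT i ▸ hσ p i hp hi⟩, fun i j hij => ?_⟩
  obtain ⟨H, hHγ, hHP⟩ := hH i j fun p hp hpT =>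
    hij p hp (hdet i₀ ▸ hpT.mul_left _)
  refine ⟨H, hHγ, ?_⟩
  rw [← hPK i, ← Matrix.mul_assoc, hHP, Matrix.smul_mul, hPK]

theorem exists_local_signs [DecidableEq m] (hcard : Fintype.card m = Fintype.card n + 1)
    {γ : Matrix m m ℤ} (hγ : γ.IsSymm) {Λ : Matrix n n ℤ} (hΛ : Λ.det ≠ 0) :
    ∃ σ : ℕ → GramRepresentation γ Λ → Prop,
      (∀ p L, p.Prime → ¬ σ p L → IsRamified γ p L.1) ∧
      ∀ L L', (∀ p : ℕ, p.Prime → (p : ℤ) ∣ Λ.det →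
          localRowClass p Λ.det L.1 = localRowClass p Λ.det L'.1 ∧ (σ p L ↔ σ p L')) →
        ∃ H, gramMatrix γ H = (2 * γ.det ^ 2) ^ 2 • γ ∧ H * L.1 = (2 * γ.det ^ 2) • L'.1 := by
  let rowClass (L : GramRepresentation γ Λ) : Quotient (rowSetoid m n ℤ) := Quotient.mk _ L.1
  choose σ hσ hH using fun C => exists_sign_pattern_of_rowEquiv hcard hγ hΛ
    (L := fun L : {L : GramRepresentation γ Λ // rowClass L = C} => L.1.1) (fun L => L.1.2)
    fun L L' => Quotient.exact (L.2.trans L'.2.symm)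
  refine ⟨fun p L => σ (rowClass L) p ⟨L, rfl⟩, fun p L => hσ (rowClass L) p ⟨L, rfl⟩, ?_⟩
  have hclass (p L C) (h : rowClass L = C) : σ (rowClass L) p ⟨L, rfl⟩ = σ C p ⟨L, h⟩ := by
    subst h
    rfl
  intro L L' hloc
  have hrow : rowClass L' = rowClass L := Quotient.sound <|
    (rowEquiv_of_forall_prime_localRowClass_eq hΛ L.2 L'.2
      fun p hp hpd => (hloc p hp hpd).1).symm
  refine hH (rowClass L) ⟨L, rfl⟩ ⟨L', hrow⟩ fun p hp hpd => ?_
  rw [← hclass p L' _ hrow]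
  exact (hloc p hp hpd).2

end LocalInvariants

section LocalGlobalCount

open Matrix

theorem natCard_le_prod_natCard_range_mul {X ι : Type*} {α : ι → Type*} [Finite X] (s : Finset ι)
    (f : ∀ i, X → α i) {N : ℕ} (hN : ∀ x₀, Nat.card {x // ∀ i ∈ s, f i x₀ = f i x} ≤ N) :
    Nat.card X ≤ (∏ i ∈ s, Nat.card (Set.range (f i))) * N := by
  let F (x : X) (i : s) : Set.range (f i) := ⟨f i x, x, rfl⟩
  have hF (y : ∀ i : s, Set.range (f i)) : Nat.card {x // F x = y} ≤ N := by
    rcases isEmpty_or_nonempty {x // F x = y} with hempty | ⟨⟨x₀, rfl⟩⟩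
    · rw [Nat.card_of_isEmpty]
      exact Nat.zero_le N
    · refine (Nat.card_mono (Set.toFinite {x | ∀ i ∈ s, f i x₀ = f i x}) ?_).trans (hN x₀)
      exact fun x hx i hi => congrArg Subtype.val (congrFun hx.symm ⟨i, hi⟩)
  refine (natCard_le_mul_of_natCard_fiber_le F hF).trans_eq ?_
  rw [Nat.card_pi, Finset.prod_coe_sort s fun i => Nat.card (Set.range (f i))]

theorem natCard_prop_of_not_imp (q : Prop) [Decidable q] :
    Nat.card {b : Prop // ¬ b → q} = if q then 2 else 1 := by
  split_ifs with hq
  · simp [hq]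
  · simpa [hq] using Nat.card_unique (α := {b : Prop // b = True})

open Classical in
theorem exists_section_natCard_range_prodMk_le {X Y : Type*} [Finite X] (f : X → Y)
    {g q : X → Prop} (hg : ∀ x, ¬ g x → q x) [Fintype (Set.range f)] :
    ∃ s : Set.range f → X, (∀ y, f (s y) = y) ∧
      Nat.card (Set.range fun x => (f x, g x)) ≤ ∑ y, if q (s y) then 2 else 1 := by
  have hsection (y : Set.range f) : ∃ x, f x = y ∧ ∀ x', f x' = y → q x' → q x := by
    obtain ⟨_, x₀, rfl⟩ := y
    by_cases h : ∃ x, f x = f x₀ ∧ q x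
    · exact h.imp fun x hx => ⟨hx.1, fun _ _ _ => hx.2⟩
    · exact ⟨x₀, rfl, fun x hx hqx => (h ⟨x, hx, hqx⟩).elim⟩
  choose s hs hqs using hsection
  refine ⟨s, hs, ?_⟩
  simp only [← natCard_prop_of_not_imp, ← Nat.card_sigma]
  have hmem (z : Set.range fun x => (f x, g x)) :
      ∃ hz : z.1.1 ∈ Set.range f, ¬ z.1.2 → q (s ⟨z.1.1, hz⟩) := by
    obtain ⟨_, x, rfl⟩ := z
    exact ⟨⟨x, rfl⟩, fun hx => hqs ⟨f x, x, rfl⟩ x rfl (hg x hx)⟩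
  choose hz hqz using hmem
  refine Nat.card_le_card_of_injective
    (fun z => (⟨⟨z.1.1, hz z⟩, z.1.2, hqz z⟩ : Σ y, {b : Prop // ¬ b → q (s y)})) ?_
  rintro ⟨⟨y, b⟩, hyb⟩ ⟨⟨y', b'⟩, hyb'⟩ h
  simp only [Sigma.mk.injEq, Subtype.mk.injEq] at h
  obtain ⟨rfl, h⟩ := h
  simpa using h

theorem sum_natCard_gramRowClass_le {A ι m n : Type*} [CommRing A] [Finite A] [Fintype ι]
    [Fintype m] [Finite n] {γ : Matrix m m A} {T : Matrix n n A} {L : ι → Matrix m n A}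
    (hL : ∀ i, gramMatrix γ (L i) = T) (hrow : ∀ i j, RowEquiv (L i) (L j) → i = j) :
    ∑ i, Nat.card (GramRowClass γ (L i)) ≤ Nat.card (GramRepresentation γ T) := by
  rw [← Nat.card_sigma]
  refine Nat.card_le_card_of_injective
    (fun z => (⟨z.2.1, z.2.2.2.trans (hL z.1)⟩ : GramRepresentation γ T)) ?_
  rintro ⟨i, Q, hQ⟩ ⟨j, Q', hQ'⟩ h
  obtain rfl : Q = Q' := congrArg Subtype.val h
  obtain rfl := hrow i j (hQ.1.symm.trans hQ'.1)
  rfl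

section Similitudes

variable {m n : Type*} [Fintype m] [Finite n] {γ : Matrix m m ℤ} {Λ : Matrix n n ℤ}

theorem natCard_le_natCard_similitudes (hγ : γ.PosDef) {c : ℤ} (hc : c ≠ 0) (L₀ : Matrix m n ℤ)
    {q : GramRepresentation γ Λ → Prop}
    (h : ∀ L, q L → ∃ H, gramMatrix γ H = c ^ 2 • γ ∧ H * L₀ = c • L.1) :
    Nat.card {L // q L} ≤ Nat.card (GramRepresentation γ (c ^ 2 • γ)) := by
  have := finite_gramRepresentation hγ (c ^ 2 • γ)
  choose H hHγ hHL using h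
  refine Nat.card_le_card_of_injective
    (fun L => (⟨H L.1 L.2, hHγ L.1 L.2⟩ : GramRepresentation γ (c ^ 2 • γ))) fun L L' hLL' => ?_
  have hH : H L.1 L.2 = H L'.1 L'.2 := congrArg Subtype.val hLL'
  have hsmul : c • L.1.1 = c • L'.1.1 := by rw [← hHL L.1 L.2, ← hHL L'.1 L'.2, hH]
  exact Subtype.ext (Subtype.ext (smul_right_injective _ hc hsmul))

theorem natCard_gramRepresentation_le_prod_natCard_mul {n : Type*} [Fintype n]
    [DecidableEq n] {Λ : Matrix n n ℤ} (hγ : γ.PosDef) {c : ℤ} (hc : c ≠ 0)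
    {S : Finset Nat.Primes} (hS : ∀ p : Nat.Primes, ((p : ℕ) : ℤ) ∣ Λ.det → p ∈ S)
    {σ : ℕ → GramRepresentation γ Λ → Prop}
    (h : ∀ L L', (∀ p : ℕ, p.Prime → (p : ℤ) ∣ Λ.det →
        localRowClass p Λ.det L.1 = localRowClass p Λ.det L'.1 ∧ (σ p L ↔ σ p L')) →
      ∃ H, gramMatrix γ H = c ^ 2 • γ ∧ H * L.1 = c • L'.1) :
    Nat.card (GramRepresentation γ Λ) ≤
      (∏ p ∈ S, Nat.card (Set.range fun L : GramRepresentation γ Λ =>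
        (localRowClass p Λ.det L.1, σ p L))) * Nat.card (GramRepresentation γ (c ^ 2 • γ)) := by
  have := finite_gramRepresentation hγ Λ
  refine natCard_le_prod_natCard_range_mul S _ fun L₀ =>
    natCard_le_natCard_similitudes hγ hc L₀.1 fun L hL => h L₀ L fun p hp hpΛ => ?_
  exact (Prod.ext_iff.mp (hL ⟨p, hp⟩ (hS ⟨p, hp⟩ hpΛ))).imp_right iff_of_eq

end Similitudes

section LocalBounds

variable {k p : ℕ} {γ : Matrix (Fin (k + 3)) (Fin (k + 3)) ℤ}
  {Λ : Matrix (Fin (k + 2)) (Fin (k + 2)) ℤ}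

theorem nuLocal_eq (p k : ℕ) (γ : Matrix (Fin (k + 3)) (Fin (k + 3)) ℤ)
    (Λ : Matrix (Fin (k + 2)) (Fin (k + 2)) ℤ) :
    nuLocal p (k + 2) γ Λ = Filter.limsup (fun r : ℕ =>
      (Nat.card (GramRepresentation (reduceMod (p ^ r) γ) (reduceMod (p ^ r) Λ)) : ℝ≥0∞) /
        (p : ℝ≥0∞) ^ (r * ((k + 2) * (k + 3) / 2))) Filter.atTop := by
  have hdim : (k + 2 + 1) * (k + 2) - (k + 2) * (k + 2 + 1) / 2 = (k + 2) * (k + 3) / 2 := by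
    have := mul_eq_mul_div_two_add k
    lia
  rw [nuLocal, hdim]
  rfl

theorem ofReal_le_nuLocal (hp : p.Prime) {c : ℝ} (hc : 0 ≤ c)
    (h : ∀ᶠ r in Filter.atTop, c * (p : ℝ) ^ (r * ((k + 2) * (k + 3) / 2)) ≤
      Nat.card (GramRepresentation (reduceMod (p ^ r) γ) (reduceMod (p ^ r) Λ))) :
    ENNReal.ofReal c ≤ nuLocal p (k + 2) γ Λ := by
  rw [nuLocal_eq]
  refine Filter.le_limsup_of_frequently_le' (h.mono fun r hr => ?_).frequently
  rw [ENNReal.le_div_iff_mul_le (Or.inl (pow_ne_zero _ (mod_cast hp.ne_zero)))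
    (Or.inl (by finiteness))]
  have := ENNReal.ofReal_le_ofReal hr
  rwa [ENNReal.ofReal_mul hc, ENNReal.ofReal_pow p.cast_nonneg, ENNReal.ofReal_natCast,
    ENNReal.ofReal_natCast] at this

theorem nuLocal_le_ofReal {c : ℝ} (hc : 0 ≤ c)
    (h : ∀ᶠ r in Filter.atTop,
      (Nat.card (GramRepresentation (reduceMod (p ^ r) γ) (reduceMod (p ^ r) Λ)) : ℝ) ≤
        c * (p : ℝ) ^ (r * ((k + 2) * (k + 3) / 2))) :
    nuLocal p (k + 2) γ Λ ≤ ENNReal.ofReal c := by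
  rw [nuLocal_eq]
  refine Filter.limsup_le_of_le (by isBoundedDefault) (h.mono fun r hr => ?_)
  refine ENNReal.div_le_of_le_mul ?_
  have := ENNReal.ofReal_le_ofReal hr
  rwa [ENNReal.ofReal_mul hc, ENNReal.ofReal_pow p.cast_nonneg, ENNReal.ofReal_natCast,
    ENNReal.ofReal_natCast] at this

theorem IsRamified.exists_mul_diagonal_mul {L : Matrix (Fin (k + 3)) (Fin (k + 2)) ℤ}
    (hL : IsRamified γ p L) (hdet : (gramMatrix γ L).det ≠ 0) :
    ∃ (P : Matrix (Fin (k + 3)) (Fin (k + 2)) ℤ) (a : Fin (k + 2) → ℤ)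
      (V : Matrix (Fin (k + 2)) (Fin (k + 2)) ℤ), IsPrimitiveFrame P ∧ (∀ i, a i ≠ 0) ∧ IsUnit V ∧
        P * diagonal a * V = L ∧ (p : ℤ) ∣ (gramMatrix γ P).det := by
  obtain ⟨P, K, hP, rfl, hp⟩ := hL
  have hK : K.det ≠ 0 := fun hK => hdet (by rw [det_gramMatrix_mul, hK]; ring)
  obtain ⟨P', a, V, hP', ha, hV, rfl⟩ :=
    exists_isPrimitiveFrame_mul_diagonal_mul hK (adjugate_mul K)
  refine ⟨P * P', a, V, hP.mul hP', ha, hV, by simp only [Matrix.mul_assoc], ?_⟩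
  exact det_gramMatrix_mul γ P P' ▸ hp.mul_left _

open Classical in
theorem eventually_mul_le_natCard_gramRowClass_of_isRamified [Fact p.Prime] (hγ : γ.IsSymm)
    (hδ : γ.det ≠ 0) {L : Matrix (Fin (k + 3)) (Fin (k + 2)) ℤ}
    (hL : (gramMatrix γ L).det ≠ 0) :
    ∀ᶠ r in Filter.atTop, (if IsRamified γ p L then 2 else 1) * localDensityConst k γ.det p *
      (p : ℝ) ^ (r * ((k + 2) * (k + 3) / 2)) ≤
        Nat.card (GramRowClass (reduceMod (p ^ r) γ) (reduceMod (p ^ r) L)) := by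
  split_ifs with hram
  · obtain ⟨P, a, V, hP, ha, hV, rfl, hp⟩ := hram.exists_mul_diagonal_mul hL
    simpa only [if_pos hp] using eventually_localDensityConst_mul_le_natCard_gramRowClass (p := p)
      hγ hδ hP ha hV
  · obtain ⟨P, a, V, hP, ha, hV, rfl⟩ :=
      exists_isPrimitiveFrame_mul_diagonal_mul hL (adjugate_gramMatrix_mul γ L)
    refine (eventually_localDensityConst_mul_le_natCard_gramRowClass (p := p)
      hγ hδ hP ha hV).mono fun r => le_trans ?_
    have := localDensityConst_pos k hδ (Fact.out : p.Prime)
    gcongr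
    split_ifs <;> norm_num

theorem localDensityConst_mul_natCard_range_le_nuLocal (hp : p.Prime) (hγ : γ.IsSymm)
    (hδ : γ.det ≠ 0) (hΛ : Λ.det ≠ 0) [Finite (GramRepresentation γ Λ)]
    {σ : GramRepresentation γ Λ → Prop} (hσ : ∀ L, ¬ σ L → IsRamified γ p L.1) :
    ENNReal.ofReal (localDensityConst k γ.det p) *
      Nat.card (Set.range fun L : GramRepresentation γ Λ =>
        (localRowClass p Λ.det L.1, σ L)) ≤ nuLocal p (k + 2) γ Λ := by
  classical
  have : Fact p.Prime := ⟨hp⟩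
  have hκ := (localDensityConst_pos k hδ hp).le
  let f (L : GramRepresentation γ Λ) := localRowClass p Λ.det L.1
  have := Fintype.ofFinite (Set.range f)
  obtain ⟨s, hs, hcard⟩ := exists_section_natCard_range_prodMk_le f hσ
  rw [← ENNReal.ofReal_natCast, ← ENNReal.ofReal_mul hκ]
  refine ofReal_le_nuLocal hp (mul_nonneg hκ (Nat.cast_nonneg _)) ?_
  filter_upwards [Filter.eventually_ge_atTop (padicValInt p Λ.det), Filter.eventually_all.mpr
    fun y => eventually_mul_le_natCard_gramRowClass_of_isRamified (p := p) hγ hδ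
      ((s y).2.symm ▸ hΛ)] with r hr hclass
  have : NeZero (p ^ r) := ⟨pow_ne_zero _ hp.ne_zero⟩
  have hrow (y y') (h : RowEquiv (reduceMod (p ^ r) (s y).1) (reduceMod (p ^ r) (s y').1)) :
      y = y' := by
    refine Subtype.ext ?_
    rw [← hs y, ← hs y']
    exact localRowClass_eq_of_rowEquiv_reduceMod hr h
  have hgram (y) : gramMatrix (reduceMod (p ^ r) γ) (reduceMod (p ^ r) (s y).1) =
      reduceMod (p ^ r) Λ := by rw [gramMatrix_map, (s y).2]
  have hcard' : (Nat.card (Set.range fun L => (f L, σ L)) : ℝ) ≤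
      ∑ y, if IsRamified γ p (s y).1 then 2 else 1 := mod_cast hcard
  calc localDensityConst k γ.det p * Nat.card (Set.range fun L => (f L, σ L)) *
        (p : ℝ) ^ (r * ((k + 2) * (k + 3) / 2))
      ≤ localDensityConst k γ.det p * (∑ y, if IsRamified γ p (s y).1 then 2 else 1) *
        (p : ℝ) ^ (r * ((k + 2) * (k + 3) / 2)) := by gcongr
    _ = ∑ y, (if IsRamified γ p (s y).1 then 2 else 1) * localDensityConst k γ.det p *
        (p : ℝ) ^ (r * ((k + 2) * (k + 3) / 2)) := by
      rw [mul_comm (localDensityConst k γ.det p), Finset.sum_mul, Finset.sum_mul]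
    _ ≤ ∑ y, (Nat.card (GramRowClass (reduceMod (p ^ r) γ) (reduceMod (p ^ r) (s y).1)) : ℝ) :=
      Finset.sum_le_sum fun y _ => hclass y
    _ ≤ Nat.card (GramRepresentation (reduceMod (p ^ r) γ) (reduceMod (p ^ r) Λ)) :=
      mod_cast sum_natCard_gramRowClass_le hgram hrow

theorem nuLocal_le_of_not_dvd (hp : p.Prime) (hγ : γ.IsSymm) (hΛ : Λ.IsSymm)
    (hpδ : ¬ (p : ℤ) ∣ 2 * γ.det) (hpΛ : ¬ (p : ℤ) ∣ Λ.det) :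
    nuLocal p (k + 2) γ Λ ≤ ENNReal.ofReal ((1 + ((p : ℝ) ^ 2)⁻¹) ^ (k + 1)) := by
  have : Fact p.Prime := ⟨hp⟩
  refine nuLocal_le_ofReal (by positivity) ?_
  filter_upwards [Filter.eventually_ne_atTop 0] with r hr
  exact natCard_gramRepresentation_reduceMod_le hγ hpδ hr hΛ hpΛ

end LocalBounds

end LocalGlobalCount

section InfiniteProduct

variable {ι : Type*}

theorem exists_hasProd_ofReal_one_add {u : ι → ℝ} (hu : Summable u) (hpos : ∀ i, 0 < 1 + u i) :
    ∃ a ≠ 0, HasProd (fun i => ENNReal.ofReal (1 + u i)) a := by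
  have hprod := Real.hasProd_of_hasSum_log hpos (Real.summable_log_one_add_of_summable hu).hasSum
  refine ⟨_, (ENNReal.ofReal_pos.mpr (Real.exp_pos _)).ne',
    (ENNReal.tendsto_ofReal hprod).congr fun s => ?_⟩
  exact ENNReal.ofReal_prod_of_nonneg fun i _ => (hpos i).le

theorem hasProd_prod_mul_of_eqOn_compl {f g : ι → ℝ≥0∞} {a : ℝ≥0∞} (ha : a ≠ 0)
    (hf : HasProd f a) {S : Finset ι} (hfS : ∀ i ∈ S, f i = 1) (hfg : Set.EqOn f g (↑S)ᶜ) :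
    HasProd g ((∏ i ∈ S, g i) * a) := by
  classical
  refine (ENNReal.Tendsto.const_mul hf (Or.inl ha)).congr' ?_
  rw [SummationFilter.unconditional_filter]
  filter_upwards [Filter.eventually_ge_atTop S] with T hT
  rw [← Finset.prod_sdiff hT, ← Finset.prod_sdiff (f := g) hT, Finset.prod_eq_one hfS, mul_one,
    mul_comm, Finset.prod_congr rfl fun i hi => hfg (Finset.mem_sdiff.mp hi).2]

theorem exists_hasProd_ne_zero {ν : ι → ℝ≥0∞} {e : ι → ℝ} (he : Summable e) (hν₀ : ∀ i, ν i ≠ 0)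
    (hν : ∀ᶠ i in Filter.cofinite,
      ν i ∈ Set.Icc (ENNReal.ofReal (1 - e i)) (ENNReal.ofReal (1 + e i))) :
    ∃ a ≠ 0, HasProd ν a := by
  classical
  let S : Finset ι := (Filter.eventually_cofinite.mp hν).toFinset
  have hS {i} (hi : i ∉ S) :
      ν i ∈ Set.Icc (ENNReal.ofReal (1 - e i)) (ENNReal.ofReal (1 + e i)) := by simpa [S] using hi
  have htop {i} (hi : i ∉ S) : ν i ≠ ⊤ := ne_top_of_le_ne_top ENNReal.ofReal_ne_top (hS hi).2
  let u (i : ι) : ℝ := if i ∈ S then 0 else (ν i).toReal - 1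
  have hbound {i} (hi : i ∉ S) : ‖u i‖ ≤ e i := by
    have he₀ : 0 < 1 + e i := ENNReal.ofReal_pos.mp ((hν₀ i).bot_lt.trans_le (hS hi).2)
    have hlow := (ENNReal.ofReal_le_iff_le_toReal (htop hi)).mp (hS hi).1
    have hup := ENNReal.toReal_le_of_le_ofReal he₀.le (hS hi).2
    rw [Real.norm_eq_abs, abs_le]
    simp only [u, if_neg hi]
    constructor <;> linarith
  have hu : Summable u := he.of_norm_bounded_eventually <| Filter.eventually_cofinite.mpr <|
    S.finite_toSet.subset fun i hi => by_contra fun hiS => hi (hbound hiS)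
  have hone_add (i) : 1 + u i = if i ∈ S then 1 else (ν i).toReal := by
    simp only [u]
    split_ifs <;> ring
  have hpos (i) : 0 < 1 + u i := by
    rw [hone_add]
    split_ifs with hi
    exacts [one_pos, ENNReal.toReal_pos (hν₀ i) (htop hi)]
  obtain ⟨a, ha, hprod⟩ := exists_hasProd_ofReal_one_add hu hpos
  refine ⟨(∏ i ∈ S, ν i) * a, mul_ne_zero (Finset.prod_ne_zero_iff.mpr fun i _ => hν₀ i) ha,
    hasProd_prod_mul_of_eqOn_compl ha hprod (fun i hi => ?_) fun i hi => ?_⟩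
  · rw [hone_add, if_pos hi, ENNReal.ofReal_one]
  · have hiS : i ∉ S := hi
    dsimp only
    rw [hone_add, if_neg hiS, ENNReal.ofReal_toReal (htop hiS)]

theorem one_add_pow_le_one_add_two_pow_mul {x : ℝ} (hx : x ∈ Set.Icc 0 1) (n : ℕ) :
    (1 + x) ^ n ≤ 1 + 2 ^ n * x := by
  have hconvex := (convexOn_pow n).2 (x := (1 : ℝ)) (y := 2) (Set.mem_Ici.mpr zero_le_one)
    (Set.mem_Ici.mpr zero_le_two) (sub_nonneg.mpr hx.2) hx.1 (sub_add_cancel 1 x)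
  simp only [smul_eq_mul, one_pow, mul_one] at hconvex
  rw [show 1 - x + x * 2 = 1 + x by ring] at hconvex
  linarith [hx.1]

theorem one_sub_two_pow_mul_le_one_sub_pow {x : ℝ} (hx : x ∈ Set.Icc 0 1) (n : ℕ) :
    1 - 2 ^ n * x ≤ (1 - x) ^ n := by
  have hbernoulli := one_add_mul_le_pow (a := -x) (by linarith [hx.2]) n
  have hn : (n : ℝ) * x ≤ 2 ^ n * x :=
    mul_le_mul_of_nonneg_right (mod_cast n.lt_two_pow_self.le) hx.1
  rw [← sub_eq_add_neg] at hbernoulli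
  linarith

theorem inv_natCast_sq_mem_Icc (n : ℕ) : ((n : ℝ) ^ 2)⁻¹ ∈ Set.Icc 0 1 :=
  ⟨by positivity, mod_cast Nat.cast_inv_le_one (n ^ 2)⟩

theorem summable_mul_primes_inv_sq (c : ℝ) :
    Summable fun p : Nat.Primes => c * ((p : ℝ) ^ 2)⁻¹ :=
  ((Real.summable_nat_pow_inv.mpr one_lt_two).comp_injective
    Nat.Primes.coe_nat_injective).mul_left c

theorem finite_setOf_primes_dvd {d : ℤ} (hd : d ≠ 0) :
    {p : Nat.Primes | ((p : ℕ) : ℤ) ∣ d}.Finite := by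
  refine (d.natAbs.primeFactors.finite_toSet.preimage
    Nat.Primes.coe_nat_injective.injOn).subset fun p hp => ?_
  exact Nat.mem_primeFactors.mpr ⟨p.2, Int.natCast_dvd.mp hp, Int.natAbs_ne_zero.mpr hd⟩

end InfiniteProduct

section SiegelBound

open Matrix

theorem localDensityConst_le_one (k : ℕ) {δ : ℤ} (hδ : δ ≠ 0) {p : ℕ} (hp : p.Prime) :
    localDensityConst k δ p ≤ 1 := by
  rw [localDensityConst]
  split_ifs
  · have hbase : (1 : ℝ) ≤ 4 * δ ^ 2 * p := by
      have hδp : 0 < δ ^ 2 * (p : ℤ) := mul_pos (sq_pos_of_ne_zero hδ) (mod_cast hp.pos)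
      exact_mod_cast (by linarith : 1 ≤ 4 * δ ^ 2 * (p : ℤ))
    exact inv_le_one_of_one_le₀ (by linarith [one_le_pow₀ hbase (n := (k + 3) * (k + 2))])
  · have := inv_natCast_sq_mem_Icc p
    exact pow_le_one₀ (by linarith [this.2]) (by linarith [this.1])

theorem one_sub_le_localDensityConst {k p : ℕ} {δ : ℤ} (hp : ¬ (p : ℤ) ∣ 2 * δ) :
    1 - 2 ^ (k + 1) * ((p : ℝ) ^ 2)⁻¹ ≤ localDensityConst k δ p := by
  rw [localDensityConst, if_neg hp]
  exact one_sub_two_pow_mul_le_one_sub_pow (inv_natCast_sq_mem_Icc p) _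

theorem tprod_localDensityConst_ne_zero (k : ℕ) {δ : ℤ} (hδ : δ ≠ 0) :
    ∏' p : Nat.Primes, ENNReal.ofReal (localDensityConst k δ p) ≠ 0 := by
  obtain ⟨a, ha, hprod⟩ : ∃ a ≠ 0, HasProd
      (fun p : Nat.Primes => ENNReal.ofReal (localDensityConst k δ p)) a := by
    refine exists_hasProd_ne_zero (summable_mul_primes_inv_sq (2 ^ (k + 1)))
      (fun p => (ENNReal.ofReal_pos.mpr (localDensityConst_pos k hδ p.2)).ne') ?_
    filter_upwards [(finite_setOf_primes_dvd
      (mul_ne_zero two_ne_zero hδ)).eventually_cofinite_notMem] with p hp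
    refine ⟨ENNReal.ofReal_le_ofReal (one_sub_le_localDensityConst hp),
      ENNReal.ofReal_le_ofReal ((localDensityConst_le_one k hδ p.2).trans ?_)⟩
    exact le_add_of_nonneg_right (by positivity)
  exact hprod.tprod_eq.trans_ne ha

theorem tprod_localDensityConst_le_prod (k : ℕ) {δ : ℤ} (hδ : δ ≠ 0) (T : Finset Nat.Primes) :
    ∏' p : Nat.Primes, ENNReal.ofReal (localDensityConst k δ p) ≤
      ∏ p ∈ T, ENNReal.ofReal (localDensityConst k δ p) := by
  rw [ENNReal.tprod_eq_iInf_prod fun p =>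
    ENNReal.ofReal_le_one.mpr (localDensityConst_le_one k hδ p.2)]
  exact iInf_le _ T

variable {k : ℕ} {γ : Matrix (Fin (k + 3)) (Fin (k + 3)) ℤ}
  {Λ : Matrix (Fin (k + 2)) (Fin (k + 2)) ℤ}

theorem localDensityConst_le_nuLocal {p : ℕ} (hp : p.Prime) (hγ : γ.PosDef) (hΛ : Λ.PosDef)
    [Nonempty (GramRepresentation γ Λ)] :
    ENNReal.ofReal (localDensityConst k γ.det p) ≤ nuLocal p (k + 2) γ Λ := by
  have := finite_gramRepresentation hγ Λ
  refine le_trans ?_ (localDensityConst_mul_natCard_range_le_nuLocal hp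
    (isHermitian_iff_isSymm.mp hγ.isHermitian) (det_ne_zero_of_posDef hγ)
    (det_ne_zero_of_posDef hΛ) (σ := fun _ => True) fun _ h => (h trivial).elim)
  exact le_mul_of_one_le_right' (mod_cast Nat.card_pos)

theorem multipliable_nuLocal (hγ : γ.PosDef) (hΛ : Λ.PosDef)
    [Nonempty (GramRepresentation γ Λ)] :
    Multipliable fun p : Nat.Primes => nuLocal p (k + 2) γ Λ := by
  have hδ := det_ne_zero_of_posDef hγ
  have hκν (p : Nat.Primes) := localDensityConst_le_nuLocal p.2 hγ hΛ
  obtain ⟨a, -, hprod⟩ : ∃ a ≠ 0, HasProd (fun p : Nat.Primes => nuLocal p (k + 2) γ Λ) a := by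
    refine exists_hasProd_ne_zero (summable_mul_primes_inv_sq (2 ^ (k + 1)))
      (fun p => ((ENNReal.ofReal_pos.mpr (localDensityConst_pos k hδ p.2)).trans_le (hκν p)).ne') ?_
    filter_upwards [
      (finite_setOf_primes_dvd (mul_ne_zero two_ne_zero hδ)).eventually_cofinite_notMem,
      (finite_setOf_primes_dvd (det_ne_zero_of_posDef hΛ)).eventually_cofinite_notMem]
      with p hpδ hpΛ
    refine ⟨(ENNReal.ofReal_le_ofReal (one_sub_le_localDensityConst hpδ)).trans (hκν p), ?_⟩
    refine (nuLocal_le_of_not_dvd p.2 (isHermitian_iff_isSymm.mp hγ.isHermitian)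
      (isHermitian_iff_isSymm.mp hΛ.isHermitian) hpδ hpΛ).trans (ENNReal.ofReal_le_ofReal ?_)
    exact one_add_pow_le_one_add_two_pow_mul (inv_natCast_sq_mem_Icc p) _
  exact hprod.multipliable

theorem prod_localDensityConst_mul_natCard_le (hγ : γ.PosDef) (hΛ : Λ.PosDef)
    {T : Finset Nat.Primes} (hT : ∀ p : Nat.Primes, ((p : ℕ) : ℤ) ∣ Λ.det → p ∈ T) :
    (∏ p ∈ T, ENNReal.ofReal (localDensityConst k γ.det p)) *
        Nat.card (GramRepresentation γ Λ) ≤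
      Nat.card (GramRepresentation γ ((2 * γ.det ^ 2) ^ 2 • γ)) *
        ∏ p ∈ T, nuLocal p (k + 2) γ Λ := by
  have hγsymm := isHermitian_iff_isSymm.mp hγ.isHermitian
  have hδ := det_ne_zero_of_posDef hγ
  have hdet := det_ne_zero_of_posDef hΛ
  have := finite_gramRepresentation hγ Λ
  obtain ⟨σ, hσ, hH⟩ := exists_local_signs (by simp) hγsymm hdet
  have hcount := natCard_gramRepresentation_le_prod_natCard_mul hγ
    (mul_ne_zero two_ne_zero (pow_ne_zero 2 hδ)) hT hH
  have hν := Finset.prod_le_prod' (s := T) fun p _ =>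
    localDensityConst_mul_natCard_range_le_nuLocal p.2 hγsymm hδ hdet fun L => hσ p L p.2
  rw [Finset.prod_mul_distrib] at hν
  refine (mul_le_mul_right (Nat.cast_le.mpr hcount) _).trans ?_
  rw [Nat.cast_mul, Nat.cast_prod, ← mul_assoc, mul_comm]
  exact mul_le_mul_right hν _

theorem tprod_localDensityConst_mul_natCard_le (hγ : γ.PosDef) (hΛ : Λ.PosDef)
    [Nonempty (GramRepresentation γ Λ)] :
    (∏' p : Nat.Primes, ENNReal.ofReal (localDensityConst k γ.det p)) *
        Nat.card (GramRepresentation γ Λ) ≤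
      Nat.card (GramRepresentation γ ((2 * γ.det ^ 2) ^ 2 • γ)) *
        ∏' p : Nat.Primes, nuLocal p (k + 2) γ Λ := by
  refine ge_of_tendsto (ENNReal.Tendsto.const_mul (multipliable_nuLocal hγ hΛ).hasProd
    (Or.inr (ENNReal.natCast_ne_top _))) ?_
  rw [SummationFilter.unconditional_filter]
  filter_upwards [Filter.eventually_ge_atTop
    (finite_setOf_primes_dvd (det_ne_zero_of_posDef hΛ)).toFinset] with T hT
  refine (mul_le_mul_left (tprod_localDensityConst_le_prod k (det_ne_zero_of_posDef hγ) T) _).trans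
    (prod_localDensityConst_mul_natCard_le hγ hΛ fun p hp => hT ?_)
  exact (Set.Finite.mem_toFinset _).mpr hp

theorem exists_pos_forall_le_ofReal_mul {w D : ℝ≥0∞} (hw : w ≠ ⊤) (hD : D ≠ 0) (hD' : D ≠ ⊤) :
    ∃ C : ℝ, 0 < C ∧ ∀ a b, D * a ≤ w * b → a ≤ ENNReal.ofReal C * b := by
  refine ⟨(w / D).toReal + 1, by positivity, fun a b h => ?_⟩
  have hC : w / D ≤ ENNReal.ofReal ((w / D).toReal + 1) :=
    (ENNReal.ofReal_toReal (ENNReal.div_ne_top hw hD)).symm.trans_le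
      (ENNReal.ofReal_le_ofReal (le_add_of_nonneg_right zero_le_one))
  refine le_trans ?_ (mul_le_mul_left hC b)
  rwa [← ENNReal.mul_div_right_comm, ENNReal.le_div_iff_mul_le (Or.inl hD) (Or.inl hD'), mul_comm]

end SiegelBound

/-- Siegel mass formula consequence: for fixed `n ≥ 2` and fixed positive definite
`γ ∈ M_{n+1,n+1}(ℤ)` there is `C > 0` (depending only on `n` and `γ`) such that for
every positive definite `Λ ∈ M_{n,n}(ℤ)`,
`A(γ,Λ) ≤ C · Π_p ν_p(γ,Λ)`, the product over all primes taken in `ℝ≥0∞`. -/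
theorem siegel_upper_bound (n : ℕ) (hn : 2 ≤ n)
    (γ : Matrix (Fin (n + 1)) (Fin (n + 1)) ℤ) (hγ : γ.PosDef) :
    ∃ C : ℝ, 0 < C ∧ ∀ Λ : Matrix (Fin n) (Fin n) ℤ, Λ.PosDef →
      (countRepr n γ Λ : ℝ≥0∞) ≤
        ENNReal.ofReal C * ∏' p : Nat.Primes, nuLocal p n γ Λ := by
  obtain ⟨k, rfl⟩ : ∃ k, n = k + 2 := ⟨n - 2, by omega⟩
  have hδ := det_ne_zero_of_posDef hγ
  have hκ_le_one : ∏' p : Nat.Primes, ENNReal.ofReal (localDensityConst k γ.det p) ≤ 1 :=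
    tprod_le_one fun p => ENNReal.ofReal_le_one.mpr (localDensityConst_le_one k hδ p.2)
  obtain ⟨C, hC, hbound⟩ := exists_pos_forall_le_ofReal_mul
    (ENNReal.natCast_ne_top (Nat.card (GramRepresentation γ ((2 * γ.det ^ 2) ^ 2 • γ))))
    (tprod_localDensityConst_ne_zero k hδ) (ne_top_of_le_ne_top ENNReal.one_ne_top hκ_le_one)
  refine ⟨C, hC, fun Λ hΛ => ?_⟩
  rcases isEmpty_or_nonempty (GramRepresentation γ Λ) with hempty | hnonempty
  · have hcount : countRepr (k + 2) γ Λ = 0 := Nat.card_of_isEmpty (α := GramRepresentation γ Λ)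
    simp [hcount]
  · exact hbound _ _ (tprod_localDensityConst_mul_natCard_le hγ hΛ)
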